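/- For every ε > 0 there exists δ > 0 with the following property: if (n,u,φ) is a global classical L²-compact solution of the 1D Euler–Poisson system (EPw), with shift function y ∈ C¹(ℝ,ℝ), which conserves the energy E (i.e. t ↦ E[n(t),u(t),φ(t)] is constant) and satisfies sup_{t∈ℝ} ‖u(t)‖_{L²} < ∞, sup_{t∈ℝ} (‖n(t)‖_{L²} + ‖n(t)‖_{L^∞}) < δ, and sup_{t∈ℝ} |y'(t)| < k/√(1+k) − ε, then (n,u,φ) is identically zero. -/

import Mathlib

open MeasureTheory Real
open scoped ENNReal

noncomputable section

def sech (x : ℝ) : ℝ := (Real.cosh x)⁻¹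

def qfun (x : ℝ) : ℝ := Real.exp x - 1

structure IsPressure (p : ℝ → ℝ) : Prop where
  smooth : ContDiffOn ℝ (⊤ : ℕ∞) p (Set.Ioi (0 : ℝ))
  deriv_pos : ∀ s : ℝ, 0 < s → 0 < deriv p s
  deriv2_nonneg : ∀ s : ℝ, 0 < s → 0 ≤ deriv (deriv p) s

def IsWFor (p w : ℝ → ℝ) : Prop :=
  w 0 = 0 ∧ ∀ s : ℝ, -1 < s → HasDerivAt w (deriv p (1 + s) / (1 + s)) s

def Wfun (w : ℝ → ℝ) (a : ℝ) : ℝ := ∫ s in (0:ℝ)..a, w s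

def Rfun (x : ℝ) : ℝ := x * qfun x - ∫ s in (0:ℝ)..x, qfun s

def energyDensity (w : ℝ → ℝ) (n u φ : ℝ → ℝ) (x : ℝ) : ℝ :=
  (1/2) * (1 + n x) * u x ^ 2 + Wfun w (n x) + (1/2) * (deriv φ x) ^ 2 + Rfun (φ x)

def energy (w : ℝ → ℝ) (n u φ : ℝ → ℝ) : ℝ := ∫ x : ℝ, energyDensity w n u φ x

structure IsEPwSolution (w : ℝ → ℝ) (n u φ : ℝ → ℝ → ℝ) : Prop where
  dens_pos : ∀ t x : ℝ, 0 < 1 + n t x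
  reg_n : ContDiff ℝ 1 (Function.uncurry n)
  reg_u : ContDiff ℝ 1 (Function.uncurry u)
  reg_phi_space : ∀ t : ℝ, ContDiff ℝ 2 (φ t)
  reg_phi_time : ∀ x : ℝ, ContDiff ℝ 1 (fun t => φ t x)
  eq_n : ∀ t x : ℝ, deriv (fun s => n s x) t = - deriv (fun z => (1 + n t z) * u t z) x
  eq_u : ∀ t x : ℝ, deriv (fun s => u s x) t
      = - deriv (fun z => u t z ^ 2 / 2 + w (n t z) + φ t z) x
  eq_phi : ∀ t x : ℝ, - deriv (deriv (φ t)) x + qfun (φ t x) = n t x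

def ConservesEnergy (w : ℝ → ℝ) (n u φ : ℝ → ℝ → ℝ) : Prop :=
  ∀ t₁ t₂ : ℝ, energy w (n t₁) (u t₁) (φ t₁) = energy w (n t₂) (u t₂) (φ t₂)

def L2CompactWith (n u : ℝ → ℝ → ℝ) (y : ℝ → ℝ) : Prop :=
  ∀ ε : ℝ, 0 < ε → ∃ R : ℝ, 0 < R ∧
    ∀ t : ℝ, (∫ x in {x : ℝ | R < |x - y t|}, (n t x ^ 2 + u t x ^ 2)) < ε

section

open Set Filter Topology intervalIntegral


lemma aux_param_deriv (f g : ℝ → ℝ → ℝ) (a b t : ℝ)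
    (hf : ∀ s, Continuous (f s)) (hg : Continuous (Function.uncurry g))
    (hd : ∀ s x, HasDerivAt (fun r => f r x) (g s x) s) :
    HasDerivAt (fun s => ∫ x in a..b, f s x) (∫ x in a..b, g t x) t := by
  obtain ⟨C, hC⟩ := (((isCompact_Icc (a := t - 1) (b := t + 1)).prod
    (isCompact_uIcc (a := a) (b := b))).image hg).isBounded.exists_norm_le
  have hgt : Continuous (g t) := by
    have : g t = Function.uncurry g ∘ fun x => (t, x) := rfl
    rw [this]; fun_prop
  refine (intervalIntegral.hasDerivAt_integral_of_dominated_loc_of_deriv_le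
    (s := Icc (t - 1) (t + 1)) (bound := fun _ => C) (F := f) (F' := g) ?_ ?_ ?_ ?_ ?_ ?_ ?_).2
  · exact Icc_mem_nhds (by linarith) (by linarith)
  · exact Eventually.of_forall fun s => (hf s).aestronglyMeasurable
  · exact (hf t).intervalIntegrable _ _
  · exact hgt.aestronglyMeasurable
  · refine Eventually.of_forall fun x hx s hs => ?_
    exact hC _ ⟨(s, x), ⟨hs, uIoc_subset_uIcc hx⟩, rfl⟩
  · exact continuous_const.intervalIntegrable _ _
  · exact Eventually.of_forall fun x hx s hs => hd s x

lemma aux_ii_le {a b : ℝ} (hab : a ≤ b) {f g : ℝ → ℝ} (hf : Continuous f) (hg : Continuous g)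
    (h : ∀ x ∈ Icc a b, f x ≤ g x) : ∫ x in a..b, f x ≤ ∫ x in a..b, g x :=
  intervalIntegral.integral_mono_on hab (hf.intervalIntegrable _ _) (hg.intervalIntegrable _ _) h

lemma aux_ii_nonneg {a b : ℝ} (hab : a ≤ b) {f : ℝ → ℝ}
    (h : ∀ x ∈ Icc a b, 0 ≤ f x) : 0 ≤ ∫ x in a..b, f x :=
  intervalIntegral.integral_nonneg hab h

lemma aux_lin2 {a b : ℝ} (α β : ℝ) {f g : ℝ → ℝ} (hf : Continuous f) (hg : Continuous g) :
    ∫ x in a..b, (α * f x + β * g x) = α * (∫ x in a..b, f x) + β * ∫ x in a..b, g x := by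
  rw [intervalIntegral.integral_add, intervalIntegral.integral_const_mul,
    intervalIntegral.integral_const_mul] <;> exact Continuous.intervalIntegrable (by fun_prop) _ _

lemma aux_lin3 {a b : ℝ} (α β γ : ℝ) {f g h : ℝ → ℝ} (hf : Continuous f) (hg : Continuous g)
    (hh : Continuous h) :
    ∫ x in a..b, (α * f x + β * g x + γ * h x)
      = α * (∫ x in a..b, f x) + β * (∫ x in a..b, g x) + γ * ∫ x in a..b, h x := by
  rw [intervalIntegral.integral_add, aux_lin2 α β hf hg,
    intervalIntegral.integral_const_mul] <;> exact Continuous.intervalIntegrable (by fun_prop) _ _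

lemma aux_lin4 {a b : ℝ} (α β γ δ : ℝ) {f g h k : ℝ → ℝ} (hf : Continuous f) (hg : Continuous g)
    (hh : Continuous h) (hk : Continuous k) :
    ∫ x in a..b, (α * f x + β * g x + γ * h x + δ * k x)
      = α * (∫ x in a..b, f x) + β * (∫ x in a..b, g x) + γ * (∫ x in a..b, h x)
        + δ * ∫ x in a..b, k x := by
  rw [intervalIntegral.integral_add, aux_lin3 α β γ hf hg hh,
    intervalIntegral.integral_const_mul] <;> exact Continuous.intervalIntegrable (by fun_prop) _ _

lemma aux_ftc {a b : ℝ} {f f' : ℝ → ℝ} (h : ∀ x, HasDerivAt f (f' x) x) (hc : Continuous f') :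
    ∫ x in a..b, f' x = f b - f a :=
  intervalIntegral.integral_eq_sub_of_hasDerivAt (fun x _ => h x) (hc.intervalIntegrable _ _)

/-- second derivative at a local max -/
lemma aux_no_max {f f1 : ℝ → ℝ} {f2 x : ℝ} (h1 : ∀ᶠ z in 𝓝 x, HasDerivAt f (f1 z) z)
    (h2 : HasDerivAt f1 f2 x) (hm : IsLocalMax f x) : f2 ≤ 0 := by
  by_contra hpos
  push Not at hpos
  have e1 : deriv f =ᶠ[𝓝 x] f1 := h1.mono fun z hz => hz.deriv
  have e2 : deriv (deriv f) x = f2 := by rw [e1.deriv_eq, h2.deriv]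
  have e3 : deriv f x = 0 := hm.deriv_eq_zero
  have hmin : IsLocalMin f x := isLocalMin_of_deriv_deriv_pos (by rw [e2]; exact hpos) e3
    h1.self_of_nhds.continuousAt
  have hconst : f =ᶠ[𝓝 x] fun _ => f x := by
    filter_upwards [hm, hmin] with z a b
    exact le_antisymm a b
  have e4 : deriv f =ᶠ[𝓝 x] fun _ => 0 := by
    have := hconst.deriv
    simpa using this
  have : deriv (deriv f) x = 0 := by rw [e4.deriv_eq]; simp
  linarith

lemma aux_no_min {f f1 : ℝ → ℝ} {f2 x : ℝ} (h1 : ∀ᶠ z in 𝓝 x, HasDerivAt f (f1 z) z)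
    (h2 : HasDerivAt f1 f2 x) (hm : IsLocalMin f x) : 0 ≤ f2 := by
  have := aux_no_max (f := fun z => - f z) (f1 := fun z => - f1 z) (f2 := -f2)
    (h1.mono fun z hz => hz.neg) h2.neg hm.neg
  linarith



set_option maxHeartbeats 800000 in
lemma aux_upper {φ φ1 n : ℝ → ℝ} {δ : ℝ} (hδ : 0 ≤ δ) (h1 : ∀ x, HasDerivAt φ (φ1 x) x)
    (h2 : ∀ x, HasDerivAt φ1 (qfun (φ x) - n x) x) (hn : ∀ x, n x ≤ δ) (x0 : ℝ) :
    φ x0 ≤ Real.log (1 + δ) := by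
  by_contra hlt
  push Not at hlt
  set L := Real.log (1 + δ) with hL
  obtain ⟨l, hl1, hl⟩ : ∃ l : ℝ, 1 ≤ l ∧ 56 < (φ x0 - L) * l ^ 2 := by
    refine ⟨57 / (φ x0 - L) + 1, ?_, ?_⟩
    · have : 0 < 57 / (φ x0 - L) := by apply div_pos <;> linarith
      linarith
    · have hv : 0 < φ x0 - L := by linarith
      have : 0 < 57 / (φ x0 - L) := div_pos (by norm_num) hv
      have e : (φ x0 - L) * (57 / (φ x0 - L)) = 57 := by field_simp
      have e2 : (φ x0 - L) * (57 / (φ x0 - L) + 1) ^ 2 = 57 * (57 / (φ x0 - L)) + 114 + (φ x0 - L) := by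
        field_simp; ring
      rw [e2]; linarith
  have hcφ : Continuous φ := continuous_iff_continuousAt.2 fun x => (h1 x).continuousAt
  obtain ⟨x1, hx1, hmax⟩ := (isCompact_Icc (a := x0 - l) (b := x0 + l)).exists_isMaxOn
    ⟨x0, by constructor <;> linarith⟩
    (f := fun x => (φ x - L) * (l ^ 2 - (x - x0) ^ 2) ^ 2) (by fun_prop)
  set M := (φ x1 - L) * (l ^ 2 - (x1 - x0) ^ 2) ^ 2 with hM
  have hM56 : 56 * l ^ 2 < M := by
    have := hmax (show x0 ∈ Icc (x0 - l) (x0 + l) by constructor <;> linarith)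
    simp only [sub_self, mem_ofPred_eq] at this
    have h3 : (φ x0 - L) * l ^ 2 * l ^ 2 ≤ M := by
      rw [hM]; linarith [show (φ x0 - L) * l ^ 2 * l ^ 2 = (φ x0 - L) * (l ^ 2 - 0 ^ 2) ^ 2 by ring]
    have hl2 : 0 < l ^ 2 := by positivity
    have := mul_lt_mul_of_pos_right hl hl2
    linarith
  have hDpos : 0 < l ^ 2 - (x1 - x0) ^ 2 := by
    have h0 : 0 ≤ l ^ 2 - (x1 - x0) ^ 2 := by
      have := hx1.1; have := hx1.2; nlinarith
    rcases h0.lt_or_eq with h | h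
    · exact h
    · rw [← h] at hM
      have hl2 : 0 ≤ l ^ 2 := by positivity
      have : M = 0 := by rw [hM]; ring
      linarith
  have hcD : Continuous fun x : ℝ => l ^ 2 - (x - x0) ^ 2 := by fun_prop
  have hev : ∀ᶠ z in 𝓝 x1, 0 < l ^ 2 - (z - x0) ^ 2 :=
    hcD.continuousAt.eventually (lt_mem_nhds hDpos)
  have hD : ∀ z, HasDerivAt (fun x : ℝ => l ^ 2 - (x - x0) ^ 2) (-2 * (z - x0)) z := by
    intro z
    refine ((((hasDerivAt_id' z).sub_const x0).fun_pow 2).const_sub (l ^ 2)).congr_deriv ?_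
    norm_num
  have d1 : ∀ᶠ z in 𝓝 x1, HasDerivAt (fun x => φ x - L - M / (l ^ 2 - (x - x0) ^ 2) ^ 2)
      (φ1 z - 4 * M * (z - x0) / (l ^ 2 - (z - x0) ^ 2) ^ 3) z := by
    filter_upwards [hev] with z hz
    have hz' : (l ^ 2 - (z - x0) ^ 2) ^ 2 ≠ 0 := (pow_pos hz 2).ne'
    refine (((h1 z).sub_const L).fun_sub
      ((hasDerivAt_const z M).fun_div ((hD z).fun_pow 2) hz')).congr_deriv ?_
    have hz2 := hz.ne'
    field_simp
    ring
  have d2 : HasDerivAt (fun z => φ1 z - 4 * M * (z - x0) / (l ^ 2 - (z - x0) ^ 2) ^ 3)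
      (qfun (φ x1) - n x1 - M * (4 / (l ^ 2 - (x1 - x0) ^ 2) ^ 3
        + 24 * (x1 - x0) ^ 2 / (l ^ 2 - (x1 - x0) ^ 2) ^ 4)) x1 := by
    have hz' : (l ^ 2 - (x1 - x0) ^ 2) ^ 3 ≠ 0 := (pow_pos hDpos 3).ne'
    refine ((h2 x1).fun_sub ((((hasDerivAt_id' x1).sub_const x0).const_mul (4 * M)).fun_div
      ((hD x1).fun_pow 3) hz')).congr_deriv ?_
    have hz2 := hDpos.ne'
    field_simp
    ring
  have hmax2 : IsLocalMax (fun x => φ x - L - M / (l ^ 2 - (x - x0) ^ 2) ^ 2) x1 := by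
    filter_upwards [hev] with z hz
    have hzI : z ∈ Icc (x0 - l) (x0 + l) := by
      have := abs_lt_of_sq_lt_sq (show (z - x0) ^ 2 < l ^ 2 by linarith) (by linarith)
      rw [abs_lt] at this
      constructor <;> linarith
    have h5 := hmax hzI
    simp only [mem_ofPred_eq] at h5
    rw [← hM] at h5
    have e1 : M / (l ^ 2 - (x1 - x0) ^ 2) ^ 2 = φ x1 - L := by rw [hM]; field_simp
    have e2 : φ z - L ≤ M / (l ^ 2 - (z - x0) ^ 2) ^ 2 := by
      rw [le_div_iff₀ (by positivity)]; exact h5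
    rw [e1]; linarith
  have key := aux_no_max d1 d2 hmax2
  set D := l ^ 2 - (x1 - x0) ^ 2 with hDdef
  have e1 : φ x1 - L = M / D ^ 2 := by rw [hM]; field_simp
  have hMp : 0 < M := lt_of_le_of_lt (by positivity) hM56
  have hv : 0 < M / D ^ 2 := by positivity
  have hexp : Real.exp (φ x1) = (1 + δ) * Real.exp (M / D ^ 2) := by
    rw [← e1, Real.exp_sub, hL, Real.exp_log (by linarith)]
    field_simp
  have hq : (M / D ^ 2) ^ 2 / 2 ≤ qfun (φ x1) - n x1 := by
    unfold qfun
    rw [hexp]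
    have h8 := Real.quadratic_le_exp_of_nonneg hv.le
    have h9 := hn x1
    have h10 : (1 + δ) * (1 + M / D ^ 2 + (M / D ^ 2) ^ 2 / 2) ≤ (1 + δ) * Real.exp (M / D ^ 2) :=
      mul_le_mul_of_nonneg_left h8 (by linarith)
    have h11 : 0 ≤ δ * (M / D ^ 2 + (M / D ^ 2) ^ 2 / 2) := by positivity
    linarith
  have h6 : M * (4 / D ^ 3 + 24 * (x1 - x0) ^ 2 / D ^ 4) ≤ M * (28 * l ^ 2 / D ^ 4) := by
    apply mul_le_mul_of_nonneg_left _ hMp.le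
    rw [show 4 / D ^ 3 + 24 * (x1 - x0) ^ 2 / D ^ 4 = (4 * D + 24 * (x1 - x0) ^ 2) / D ^ 4 by
      field_simp]
    apply div_le_div_of_nonneg_right _ (by positivity)
    linarith [sq_nonneg l]
  have h7 : M * (28 * l ^ 2 / D ^ 4) < (M / D ^ 2) ^ 2 / 2 := by
    rw [show M * (28 * l ^ 2 / D ^ 4) = (M * (28 * l ^ 2)) / D ^ 4 by ring,
      show (M / D ^ 2) ^ 2 / 2 = (M ^ 2 / 2) / D ^ 4 by field_simp]
    apply div_lt_div_of_pos_right _ (by positivity)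
    have := mul_lt_mul_of_pos_left hM56 hMp
    linarith [show M ^ 2 = M * M by ring]
  linarith

/-- below the threshold, once decreasing then decreasing fast -/
lemma aux_decr {φ φ1 n : ℝ → ℝ} {δ a b β : ℝ} (h1 : ∀ x, HasDerivAt φ (φ1 x) x)
    (h2 : ∀ x, HasDerivAt φ1 (qfun (φ x) - n x) x) (hn : ∀ x, -δ ≤ n x)
    (hab : a < b) (hba : φ b < φ a) (hb : φ b ≤ β) (hβ : Real.exp β < 1 - δ) :
    ∀ z, b ≤ z → φ1 z ≤ -(1 - δ - Real.exp β) * (z - b) := by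
  have hcφ : Continuous φ := continuous_iff_continuousAt.2 fun x => (h1 x).continuousAt
  have hneg : ∀ x, φ x ≤ β → qfun (φ x) - n x ≤ -(1 - δ - Real.exp β) := by
    intro x hx
    have := Real.exp_le_exp.2 hx
    have := hn x
    unfold qfun
    linarith
  have hle : ∀ z, b ≤ z → φ z ≤ φ b := by
    intro z hz
    by_contra hc
    push Not at hc
    have hbz : b < z := lt_of_le_of_ne hz (by rintro rfl; exact lt_irrefl _ hc)
    obtain ⟨m, hm, hmin⟩ := (isCompact_Icc (a := a) (b := z)).exists_isMinOn
      ⟨a, by constructor <;> linarith⟩ hcφ.continuousOn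
    have hmb : φ m ≤ φ b := hmin (show b ∈ Icc a z from ⟨hab.le, hz⟩)
    have hma : a < m := lt_of_le_of_ne hm.1 (by rintro rfl; linarith)
    have hmz : m < z := lt_of_le_of_ne hm.2 (by rintro rfl; linarith)
    have hloc : IsLocalMin φ m := hmin.isLocalMin (Icc_mem_nhds hma hmz)
    have := aux_no_min (Eventually.of_forall h1) (h2 m) hloc
    have := hneg m (hmb.trans hb)
    linarith
  have hb1 : φ1 b ≤ 0 := by
    by_contra hc
    push Not at hc
    have hlim := (h1 b).tendsto_slope
    have h3 : ∀ᶠ z in 𝓝[>] b, 0 < slope φ b z :=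
      (hlim.mono_left (nhdsWithin_mono _ (by intro z hz; exact ne_of_gt hz))).eventually
        (lt_mem_nhds hc)
    obtain ⟨z, hz1, hz2⟩ := (h3.and self_mem_nhdsWithin).exists
    have hz2' : b < z := hz2
    rw [slope_def_field] at hz1
    have := hle z hz2'.le
    have h4 : (φ z - φ b) / (z - b) ≤ 0 := div_nonpos_of_nonpos_of_nonneg (by linarith) (by linarith)
    linarith
  intro z hz
  have h3 : AntitoneOn (fun z => φ1 z + (1 - δ - Real.exp β) * (z - b)) (Ici b) := by
    apply antitoneOn_of_deriv_nonpos (convex_Ici b)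
    · have : Continuous φ1 := continuous_iff_continuousAt.2 fun x => (h2 x).continuousAt
      fun_prop
    · intro x hx
      exact ((h2 x).differentiableAt.add (by fun_prop)).differentiableWithinAt
    · intro x hx
      rw [interior_Ici] at hx
      have hd : HasDerivAt (fun z => φ1 z + (1 - δ - Real.exp β) * (z - b))
          (qfun (φ x) - n x + (1 - δ - Real.exp β)) x := by
        refine ((h2 x).fun_add
          (((hasDerivAt_id' x).sub_const b).const_mul (1 - δ - Real.exp β))).congr_deriv ?_
        ring
      rw [hd.deriv]
      have := hneg x ((hle x (le_of_lt hx)).trans hb)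
      linarith
  have := h3 (show b ∈ Ici b from le_refl b) (show z ∈ Ici b from hz) hz
  simp only [sub_self, mul_zero, add_zero] at this
  linarith



lemma aux_bump_deriv (X x : ℝ) : HasDerivAt (fun x : ℝ => (1 - (x - X) ^ 2) ^ 2)
    (-4 * (x - X) * (1 - (x - X) ^ 2)) x := by
  refine (((((hasDerivAt_id' x).sub_const X).fun_pow 2).const_sub 1).fun_pow 2).congr_deriv ?_
  norm_num
  ring

lemma aux_bump_int (X : ℝ) : ∫ x in (X - 1)..(X + 1), (1 - (x - X) ^ 2) ^ 2 = 16 / 15 := by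
  have h : ∀ x : ℝ, HasDerivAt (fun x : ℝ => (x - X) - 2 / 3 * (x - X) ^ 3 + 1 / 5 * (x - X) ^ 5)
      ((1 - (x - X) ^ 2) ^ 2) x := by
    intro x
    have h0 := (hasDerivAt_id' x).sub_const X
    refine ((h0.fun_sub ((h0.fun_pow 3).const_mul (2/3))).fun_add
      ((h0.fun_pow 5).const_mul (1/5))).congr_deriv ?_
    norm_num
    ring
  rw [aux_ftc h (by fun_prop)]
  ring

lemma aux_bump_alg1 {s : ℝ} (h : s ^ 2 ≤ 1) : |s * (1 - s ^ 2)| ≤ 1 := by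
  rw [abs_le_one_iff_mul_self_le_one]
  have h0 := sq_nonneg s
  have h1 : (1 - s ^ 2) ^ 2 ≤ 1 := by nlinarith
  have h2 := sq_nonneg (1 - s ^ 2)
  nlinarith [mul_le_mul h h1 h2 zero_le_one]

lemma aux_bump_alg2 {s v : ℝ} (h : s ^ 2 ≤ 1) : |(1 - s ^ 2) ^ 2 * v| ≤ 1 * 1 + 1 * v ^ 2 := by
  rw [abs_mul, abs_of_nonneg (sq_nonneg (1 - s ^ 2))]
  have h4 : (1 - s ^ 2) ^ 2 ≤ 1 := by
    have := sq_nonneg s; nlinarith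
  have h5 : |v| ≤ 1 + v ^ 2 := by
    rw [← sq_abs]; nlinarith [sq_nonneg (|v| - 1), abs_nonneg v]
  have := mul_le_mul_of_nonneg_right h4 (abs_nonneg v)
  linarith

set_option maxHeartbeats 1000000 in
lemma aux_right (u g φ φ1 n fx : ℝ → ℝ → ℝ) (G δ M t0 a b : ℝ)
    (huc : Continuous (Function.uncurry u)) (hfc : Continuous (Function.uncurry fx))
    (hg : ∀ t x, |g t x| ≤ G)
    (h1 : ∀ t x, HasDerivAt (φ t) (φ1 t x) x)
    (h2 : ∀ t x, HasDerivAt (φ1 t) (qfun (φ t x) - n t x) x)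
    (hn : ∀ t x, -δ ≤ n t x)
    (hφt : ∀ x, Continuous fun t => φ t x)
    (hut : ∀ t x, HasDerivAt (fun s => u s x) (-(fx t x)) t)
    (hux : ∀ t x, HasDerivAt (fun z => u t z ^ 2 / 2 + g t z + φ t z) (fx t x) x)
    (hM : ∀ t α β, α ≤ β → ∫ x in α..β, u t x ^ 2 ≤ M)
    (hab : a < b) (hba : φ t0 b < φ t0 a) (hb : Real.exp (φ t0 b) < 1 - δ) : False := by
  obtain ⟨β, hβ1, hβ2⟩ : ∃ β, φ t0 b < β ∧ Real.exp β < 1 - δ := by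
    have h3 : ∀ᶠ z in 𝓝[>] (φ t0 b), Real.exp z < 1 - δ :=
      nhdsWithin_le_nhds (Real.continuous_exp.continuousAt.eventually (gt_mem_nhds hb))
    obtain ⟨z, hz1, hz2⟩ := (h3.and self_mem_nhdsWithin).exists
    exact ⟨z, hz2, hz1⟩
  have hev : ∀ᶠ t in 𝓝 t0, φ t b < φ t a ∧ φ t b < β :=
    ((hφt b).continuousAt.eventually_lt (hφt a).continuousAt hba).and
      ((hφt b).continuousAt.eventually (gt_mem_nhds hβ1))
  obtain ⟨τ, hτ, hball⟩ := Metric.eventually_nhds_iff.1 hev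
  have hG : 0 ≤ G := (abs_nonneg _).trans (hg 0 0)
  have hM0 : 0 ≤ M := by have := hM 0 0 0 le_rfl; simpa using this
  set c := 1 - δ - Real.exp β with hc
  have hcpos : 0 < c := by rw [hc]; linarith
  set B := 2 * M + 8 * G + (2 * (2 + M) + 1) / (τ / 2) with hB
  have hBpos : 0 ≤ B := by rw [hB]; positivity
  set X := b + 1 + B / c with hX
  have huc' : ∀ t, Continuous (u t) := fun t =>
    (by fun_prop : Continuous (Function.uncurry u ∘ fun x => (t, x)))
  have hfc' : ∀ t, Continuous (fx t) := fun t =>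
    (by fun_prop : Continuous (Function.uncurry fx ∘ fun x => (t, x)))
  have hφ1c : ∀ t, Continuous (φ1 t) := fun t =>
    continuous_iff_continuousAt.2 fun x => (h2 t x).continuousAt
  have hφc : ∀ t, Continuous (φ t) := fun t =>
    continuous_iff_continuousAt.2 fun x => (h1 t x).continuousAt
  have hgc : ∀ t, Continuous (g t) := by
    intro t
    have hF : Continuous (fun z => u t z ^ 2 / 2 + g t z + φ t z) :=
      continuous_iff_continuousAt.2 fun x => (hux t x).continuousAt
    have := (hF.sub (hφc t)).sub (((huc' t).pow 2).div_const 2)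
    convert this using 1
    ext z; simp
  set m : ℝ → ℝ := fun t => ∫ x in (X - 1)..(X + 1), (1 - (x - X) ^ 2) ^ 2 * u t x with hm
  have hXX : X - 1 ≤ X + 1 := by linarith
  have hs : ∀ x ∈ Icc (X - 1) (X + 1), (x - X) ^ 2 ≤ 1 := by
    intro x hx
    exact sq_le_one_iff_abs_le_one _ |>.2 (abs_le.2 ⟨by linarith [hx.1], by linarith [hx.2]⟩)
  have hmd : ∀ t, HasDerivAt m (∫ x in (X - 1)..(X + 1), (1 - (x - X) ^ 2) ^ 2 * (-(fx t x))) t := by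
    intro t
    apply aux_param_deriv (fun t x => (1 - (x - X) ^ 2) ^ 2 * u t x)
      (fun t x => (1 - (x - X) ^ 2) ^ 2 * (-(fx t x)))
    · intro s; have := huc' s; fun_prop
    · have : Continuous fun p : ℝ × ℝ => (1 - (p.2 - X) ^ 2) ^ 2 * (-(Function.uncurry fx p)) := by
        fun_prop
      exact this
    · intro s x
      exact (hut s x).const_mul _
  have hmb : ∀ t, |m t| ≤ 2 + M := by
    intro t
    have hu := huc' t
    calc |m t| ≤ ∫ x in (X - 1)..(X + 1), |(1 - (x - X) ^ 2) ^ 2 * u t x| :=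
          intervalIntegral.abs_integral_le_integral_abs hXX
      _ ≤ ∫ x in (X - 1)..(X + 1), (1 * 1 + 1 * u t x ^ 2) := by
          apply aux_ii_le hXX (by fun_prop) (by fun_prop)
          intro x hx
          exact aux_bump_alg2 (hs x hx)
      _ = 2 + ∫ x in (X - 1)..(X + 1), u t x ^ 2 := by
          rw [aux_lin2 1 1 continuous_const (by fun_prop)]
          simp; ring
      _ ≤ 2 + M := by have := hM t _ _ hXX; linarith
  have hder : ∀ t, dist t t0 < τ →
      (2 * (2 + M) + 1) / (τ / 2) ≤ ∫ x in (X - 1)..(X + 1), (1 - (x - X) ^ 2) ^ 2 * (-(fx t x)) := by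
    intro t ht
    have hu := huc' t
    have hf := hfc' t
    have hp1 := hφ1c t
    have hgt := hgc t
    obtain ⟨ha1, ha2⟩ := hball ht
    have hdec := aux_decr (h1 t) (h2 t) (hn t) hab ha1 ha2.le hβ2
    have hF0 : ∀ x, HasDerivAt (fun z => u t z ^ 2 / 2 + g t z) (fx t x - φ1 t x) x := by
      intro x
      have := (hux t x).fun_sub (h1 t x)
      simpa using this
    have hprod : ∀ x, HasDerivAt (fun z => (1 - (z - X) ^ 2) ^ 2 * (u t z ^ 2 / 2 + g t z))
        (-4 * (x - X) * (1 - (x - X) ^ 2) * (u t x ^ 2 / 2 + g t x)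
          + (1 - (x - X) ^ 2) ^ 2 * (fx t x - φ1 t x)) x := fun x =>
      (aux_bump_deriv X x).fun_mul (hF0 x)
    have hz := aux_ftc (a := X - 1) (b := X + 1) hprod (by fun_prop)
    have hz0 : (1 - (X + 1 - X) ^ 2) ^ 2 * (u t (X + 1) ^ 2 / 2 + g t (X + 1))
        - (1 - (X - 1 - X) ^ 2) ^ 2 * (u t (X - 1) ^ 2 / 2 + g t (X - 1)) = 0 := by ring
    rw [hz0] at hz
    have hle : ∫ x in (X - 1)..(X + 1), ((-2) * u t x ^ 2 + (-4 * G) * 1 + B * (1 - (x - X) ^ 2) ^ 2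
          + (-1) * (-4 * (x - X) * (1 - (x - X) ^ 2) * (u t x ^ 2 / 2 + g t x)
          + (1 - (x - X) ^ 2) ^ 2 * (fx t x - φ1 t x)))
        ≤ ∫ x in (X - 1)..(X + 1), (1 - (x - X) ^ 2) ^ 2 * (-(fx t x)) := by
      apply aux_ii_le hXX (by fun_prop) (by fun_prop)
      intro x hx
      have h3 := hs x hx
      have hx1 := hx.1
      have hx2 := hx.2
      have hBX : B / c ≤ x - b := by rw [hX] at hx1; linarith
      have hBX' : B ≤ c * (x - b) := by rwa [div_le_iff₀' hcpos] at hBX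
      have hbx : b ≤ x := by
        have : 0 ≤ B / c := by positivity
        linarith
      have h4 := hdec x hbx
      have h5 : B * (1 - (x - X) ^ 2) ^ 2 ≤ -φ1 t x * (1 - (x - X) ^ 2) ^ 2 :=
        mul_le_mul_of_nonneg_right (by linarith) (sq_nonneg _)
      have h6 : 4 * (x - X) * (1 - (x - X) ^ 2) * (u t x ^ 2 / 2 + g t x) ≤ 2 * u t x ^ 2 + 4 * G := by
        have h7 := aux_bump_alg1 h3
        have h8 : |u t x ^ 2 / 2 + g t x| ≤ u t x ^ 2 / 2 + G := by
          refine (abs_add_le _ _).trans (add_le_add ?_ (hg t x))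
          rw [abs_of_nonneg (by positivity)]
        have h9 : (x - X) * (1 - (x - X) ^ 2) * (u t x ^ 2 / 2 + g t x)
            ≤ 1 * (u t x ^ 2 / 2 + G) := by
          refine (le_abs_self _).trans ?_
          rw [abs_mul]
          exact mul_le_mul h7 h8 (abs_nonneg _) (by norm_num)
        linarith
      linarith
    rw [aux_lin4 (-2) (-4 * G) B (-1) (by fun_prop) continuous_const (by fun_prop) (by fun_prop), hz,
      aux_bump_int] at hle
    have := hM t _ _ hXX
    simp only [intervalIntegral.integral_const, smul_eq_mul] at hle
    have : (2 * (2 + M) + 1) / (τ / 2) = B - (2 * M + 8 * G) := by rw [hB]; ring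
    linarith
  have ht : t0 < t0 + τ / 2 := by linarith
  obtain ⟨s, hs1, hs2⟩ := exists_hasDerivAt_eq_slope m _ ht
    (fun x _ => (hmd x).continuousAt.continuousWithinAt) (fun x _ => hmd x)
  have hsd : dist s t0 < τ := by
    rw [Real.dist_eq, abs_lt]; constructor <;> linarith [hs1.1, hs1.2]
  have h10 := hder s hsd
  rw [hs2, show t0 + τ / 2 - t0 = τ / 2 by ring, div_le_div_iff_of_pos_right (by positivity)] at h10
  have := abs_le.1 (hmb (t0 + τ / 2))
  have := abs_le.1 (hmb t0)
  linarith

lemma aux_lower (u g φ φ1 n fx : ℝ → ℝ → ℝ) (G δ M : ℝ)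
    (huc : Continuous (Function.uncurry u)) (hfc : Continuous (Function.uncurry fx))
    (hg : ∀ t x, |g t x| ≤ G)
    (h1 : ∀ t x, HasDerivAt (φ t) (φ1 t x) x)
    (h2 : ∀ t x, HasDerivAt (φ1 t) (qfun (φ t x) - n t x) x)
    (hn : ∀ t x, -δ ≤ n t x)
    (hφt : ∀ x, Continuous fun t => φ t x)
    (hut : ∀ t x, HasDerivAt (fun s => u s x) (-(fx t x)) t)
    (hux : ∀ t x, HasDerivAt (fun z => u t z ^ 2 / 2 + g t z + φ t z) (fx t x) x)
    (hM : ∀ t α β, α ≤ β → ∫ x in α..β, u t x ^ 2 ≤ M) (t0 x0 : ℝ) :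
    1 - δ ≤ Real.exp (φ t0 x0) := by
  by_contra hlt
  push Not at hlt
  have hnm : ¬ IsLocalMin (φ t0) x0 := by
    intro h
    have := aux_no_min (Eventually.of_forall (h1 t0)) (h2 t0 x0) h
    have := hn t0 x0
    unfold qfun at *
    linarith
  obtain ⟨b, hb⟩ : ∃ b, φ t0 b < φ t0 x0 := by
    by_contra hc
    push Not at hc
    exact hnm (Eventually.of_forall hc)
  have hbe : Real.exp (φ t0 b) < 1 - δ := (Real.exp_lt_exp.2 hb).trans hlt
  rcases lt_trichotomy x0 b with h | h | h
  · exact aux_right u g φ φ1 n fx G δ M t0 x0 b huc hfc hg h1 h2 hn hφt hut hux hM h hb hbe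
  · rw [h] at hb; exact lt_irrefl _ hb
  · have hneg : ∀ x : ℝ, HasDerivAt (fun z : ℝ => -z) (-1) x := fun x => hasDerivAt_neg x
    refine aux_right (fun t x => - u t (-x)) (fun t x => g t (-x)) (fun t x => φ t (-x))
      (fun t x => - φ1 t (-x)) (fun t x => n t (-x)) (fun t x => - fx t (-x)) G δ M t0 (-x0) (-b)
      ?_ ?_ ?_ ?_ ?_ ?_ ?_ ?_ ?_ ?_ (by linarith) (by simpa using hb) (by simpa using hbe)
    · exact (by fun_prop : Continuous fun p : ℝ × ℝ => - Function.uncurry u (p.1, -p.2))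
    · exact (by fun_prop : Continuous fun p : ℝ × ℝ => - Function.uncurry fx (p.1, -p.2))
    · intro t x; exact hg t (-x)
    · intro t x
      have := HasDerivAt.comp x (h1 t (-x)) (hneg x)
      simpa [Function.comp_def] using this
    · intro t x
      have := (HasDerivAt.comp x (h2 t (-x)) (hneg x)).fun_neg
      simpa [Function.comp_def] using this
    · intro t x; exact hn t (-x)
    · intro x; exact hφt (-x)
    · intro t x
      exact (hut t (-x)).fun_neg
    · intro t x
      have := HasDerivAt.comp x (hux t (-x)) (hneg x)
      simpa [Function.comp_def] using this
    · intro t α β hαβ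
      have h3 := hM t (-β) (-α) (by linarith)
      have : ∫ x in α..β, (- u t (-x)) ^ 2 = ∫ x in (-β)..(-α), u t x ^ 2 := by
        rw [← intervalIntegral.integral_comp_neg (fun x => u t x ^ 2)]
        simp
      linarith



lemma aux_q_err {x : ℝ} (hx : |x| ≤ 1) : |qfun x - x| ≤ x ^ 2 := by
  unfold qfun
  have := Real.abs_exp_sub_one_sub_id_le hx
  simpa using this

lemma aux_q_mul {x : ℝ} (hx : |x| ≤ 1 / 4) : 3 / 4 * x ^ 2 ≤ x * qfun x := by
  have h := aux_q_err (hx.trans (by norm_num))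
  have h1 : |x * (qfun x - x)| ≤ 1 / 4 * x ^ 2 := by
    rw [abs_mul]
    exact mul_le_mul hx h (abs_nonneg _) (by norm_num)
  have := abs_le.1 h1
  nlinarith

lemma aux_ell_alg {z z1 p s e f g n q : ℝ} (hz : 0 ≤ z) (hz1 : z ≤ 1) (hzz : |z1| ≤ z / 4)
    (hs : s ^ 2 ≤ 1) (hq : 3 / 4 * f ^ 2 ≤ f * q) :
    3 / 8 * (z * p ^ 2 * (f ^ 2 + g ^ 2)) ≤ z * p ^ 2 * n ^ 2 + 16 * e ^ 2 * f ^ 2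
      + ((z1 * p ^ 2 + z * (-4 * s * e * p)) * (f * g) + z * p ^ 2 * (g * g + f * (q - n))) := by
  have hp : 0 ≤ p ^ 2 := sq_nonneg p
  have a1 : |z1 * (f * g)| ≤ z / 4 * ((f ^ 2 + g ^ 2) / 2) := by
    rw [abs_mul]
    apply mul_le_mul hzz _ (abs_nonneg _) (by linarith)
    rw [abs_le]; constructor <;> nlinarith [sq_nonneg (f + g), sq_nonneg (f - g)]
  have a1' : -(z / 4 * ((f ^ 2 + g ^ 2) / 2)) * p ^ 2 ≤ z1 * (f * g) * p ^ 2 :=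
    mul_le_mul_of_nonneg_right (abs_le.1 a1).1 hp
  have a2 : -(1 / 4 * p ^ 2 * g ^ 2 + 16 * e ^ 2 * f ^ 2) ≤ -4 * s * e * p * (f * g) := by
    have h1 : -(1 / 4 * p ^ 2 * g ^ 2 + 16 * s ^ 2 * (e ^ 2 * f ^ 2)) ≤ -4 * s * e * p * (f * g) := by
      nlinarith [sq_nonneg (1 / 2 * (p * g) - 4 * s * e * f)]
    have h2 : s ^ 2 * (e ^ 2 * f ^ 2) ≤ 1 * (e ^ 2 * f ^ 2) :=
      mul_le_mul_of_nonneg_right hs (by positivity)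
    linarith
  have a2' : z * -(1 / 4 * p ^ 2 * g ^ 2 + 16 * e ^ 2 * f ^ 2) ≤ z * (-4 * s * e * p * (f * g)) :=
    mul_le_mul_of_nonneg_left a2 hz
  have a3 : z * (16 * e ^ 2 * f ^ 2) ≤ 1 * (16 * e ^ 2 * f ^ 2) :=
    mul_le_mul_of_nonneg_right hz1 (by positivity)
  have a4 : 3 / 4 * f ^ 2 - (1 / 4 * f ^ 2 + n ^ 2) ≤ f * (q - n) := by
    nlinarith [sq_nonneg (1 / 2 * f - n)]
  have a5 : z * p ^ 2 * (3 / 4 * f ^ 2 - (1 / 4 * f ^ 2 + n ^ 2)) ≤ z * p ^ 2 * (f * (q - n)) :=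
    mul_le_mul_of_nonneg_left a4 (by positivity)
  have a6 : 0 ≤ z * p ^ 2 * g ^ 2 := by positivity
  linarith

lemma aux_chi_deriv (L x : ℝ) : HasDerivAt (fun x : ℝ => (1 - (x / L) ^ 2) ^ 2)
    (-4 * (x / L) * (1 / L) * (1 - (x / L) ^ 2)) x := by
  refine (((((hasDerivAt_id' x).div_const L).fun_pow 2).const_sub 1).fun_pow 2).congr_deriv ?_
  norm_num
  ring

lemma aux_s_le {L x : ℝ} (hL : 0 < L) (hx : x ∈ Icc (-L) L) : (x / L) ^ 2 ≤ 1 := by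
  rw [sq_le_one_iff_abs_le_one, abs_div, abs_of_pos hL, div_le_one hL, abs_le]
  exact hx

lemma aux_ell_int {φ φ1 n ζ ζ1 : ℝ → ℝ} {L : ℝ} (hL : 0 < L)
    (h1 : ∀ x, HasDerivAt φ (φ1 x) x)
    (h2 : ∀ x, HasDerivAt φ1 (qfun (φ x) - n x) x) (hnc : Continuous n)
    (hφ : ∀ x, |φ x| ≤ 1 / 4) (hζ : ∀ x, HasDerivAt ζ (ζ1 x) x) (hζc : Continuous ζ1)
    (hζ0 : ∀ x, 0 ≤ ζ x) (hζ1 : ∀ x, ζ x ≤ 1) (hζζ : ∀ x, |ζ1 x| ≤ ζ x / 4)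
    (hIntg : Integrable (fun x => ζ x * n x ^ 2)) :
    ∫ x in (-L)..L, ζ x * (1 - (x / L) ^ 2) ^ 2 * (φ x ^ 2 + φ1 x ^ 2)
      ≤ 8 / 3 * ((∫ x, ζ x * n x ^ 2) + 2 / L) := by
  have hcφ : Continuous φ := continuous_iff_continuousAt.2 fun x => (h1 x).continuousAt
  have hcφ1 : Continuous φ1 := continuous_iff_continuousAt.2 fun x => (h2 x).continuousAt
  have hcζ : Continuous ζ := continuous_iff_continuousAt.2 fun x => (hζ x).continuousAt
  have hcq : Continuous fun x => qfun (φ x) := by unfold qfun; fun_prop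
  have hLL : -L ≤ L := by linarith
  have hd : ∀ x, HasDerivAt (fun x => ζ x * (1 - (x / L) ^ 2) ^ 2 * (φ x * φ1 x))
      ((ζ1 x * (1 - (x / L) ^ 2) ^ 2 + ζ x * (-4 * (x / L) * (1 / L) * (1 - (x / L) ^ 2)))
        * (φ x * φ1 x) + ζ x * (1 - (x / L) ^ 2) ^ 2 *
          (φ1 x * φ1 x + φ x * (qfun (φ x) - n x))) x := fun x =>
    ((hζ x).fun_mul (aux_chi_deriv L x)).fun_mul ((h1 x).fun_mul (h2 x))
  have hz := aux_ftc (a := -L) (b := L) hd (by fun_prop)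
  have hz0 : ζ L * (1 - (L / L) ^ 2) ^ 2 * (φ L * φ1 L)
      - ζ (-L) * (1 - (-L / L) ^ 2) ^ 2 * (φ (-L) * φ1 (-L)) = 0 := by
    rw [neg_div, div_self hL.ne']; ring
  rw [hz0] at hz
  have hmono : ∫ x in (-L)..L, ζ x * (1 - (x / L) ^ 2) ^ 2 * (φ x ^ 2 + φ1 x ^ 2)
      ≤ ∫ x in (-L)..L, (8 / 3 * (ζ x * n x ^ 2) + (8 / 3 * (1 / L) ^ 2) * 1
        + 8 / 3 * ((ζ1 x * (1 - (x / L) ^ 2) ^ 2 + ζ x * (-4 * (x / L) * (1 / L) * (1 - (x / L) ^ 2)))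
        * (φ x * φ1 x) + ζ x * (1 - (x / L) ^ 2) ^ 2 *
          (φ1 x * φ1 x + φ x * (qfun (φ x) - n x)))) := by
    apply aux_ii_le hLL (by fun_prop) (by fun_prop)
    intro x hx
    have hs := aux_s_le hL hx
    have h3 := aux_ell_alg (z := ζ x) (z1 := ζ1 x) (p := 1 - (x / L) ^ 2) (s := x / L) (e := 1 / L)
      (f := φ x) (g := φ1 x) (n := n x) (q := qfun (φ x)) (hζ0 x) (hζ1 x) (hζζ x) hs
      (aux_q_mul (hφ x))
    have h4 : ζ x * (1 - (x / L) ^ 2) ^ 2 * n x ^ 2 ≤ ζ x * n x ^ 2 := by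
      have : (1 - (x / L) ^ 2) ^ 2 ≤ 1 := by
        have := sq_nonneg (x / L); nlinarith
      have := mul_le_mul_of_nonneg_right this (mul_nonneg (hζ0 x) (sq_nonneg (n x)))
      linarith
    have h5 : φ x ^ 2 ≤ 1 / 16 := by
      rw [← sq_abs]; have := hφ x; have := abs_nonneg (φ x); nlinarith
    have h6 : 16 * (1 / L) ^ 2 * φ x ^ 2 ≤ 16 * (1 / L) ^ 2 * (1 / 16) :=
      mul_le_mul_of_nonneg_left h5 (by positivity)
    linarith
  rw [aux_lin3 _ _ _ (by fun_prop) continuous_const (by fun_prop), hz] at hmono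
  have h7 : ∫ x in (-L)..L, ζ x * n x ^ 2 ≤ ∫ x, ζ x * n x ^ 2 := by
    rw [intervalIntegral.integral_of_le hLL]
    exact setIntegral_le_integral hIntg (Eventually.of_forall fun x =>
      mul_nonneg (hζ0 x) (sq_nonneg _))
  simp only [intervalIntegral.integral_const, smul_eq_mul] at hmono
  have h8 : 8 / 3 * (1 / L) ^ 2 * ((L - -L) * 1) = 8 / 3 * (2 / L) := by field_simp; ring
  linarith

lemma aux_ell {φ φ1 n ζ ζ1 : ℝ → ℝ}
    (h1 : ∀ x, HasDerivAt φ (φ1 x) x)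
    (h2 : ∀ x, HasDerivAt φ1 (qfun (φ x) - n x) x) (hnc : Continuous n)
    (hφ : ∀ x, |φ x| ≤ 1 / 4) (hζ : ∀ x, HasDerivAt ζ (ζ1 x) x) (hζc : Continuous ζ1)
    (hζ0 : ∀ x, 0 ≤ ζ x) (hζ1 : ∀ x, ζ x ≤ 1) (hζζ : ∀ x, |ζ1 x| ≤ ζ x / 4)
    (hIntg : Integrable (fun x => ζ x * n x ^ 2)) :
    Integrable (fun x => ζ x * (φ x ^ 2 + φ1 x ^ 2)) ∧
    ∫ x, ζ x * (φ x ^ 2 + φ1 x ^ 2) ≤ 5 * ∫ x, ζ x * n x ^ 2 := by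
  have hcφ : Continuous φ := continuous_iff_continuousAt.2 fun x => (h1 x).continuousAt
  have hcφ1 : Continuous φ1 := continuous_iff_continuousAt.2 fun x => (h2 x).continuousAt
  have hcζ : Continuous ζ := continuous_iff_continuousAt.2 fun x => (hζ x).continuousAt
  have hI0 : 0 ≤ ∫ x, ζ x * n x ^ 2 := integral_nonneg fun x => mul_nonneg (hζ0 x) (sq_nonneg _)
  have hnn : ∀ x, 0 ≤ ζ x * (φ x ^ 2 + φ1 x ^ 2) := fun x => mul_nonneg (hζ0 x) (by positivity)
  have hb : ∀ L : ℝ, 1 ≤ L → ∫ x in (-L)..L, ζ x * (φ x ^ 2 + φ1 x ^ 2)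
      ≤ 5 * (∫ x, ζ x * n x ^ 2) + 5 / L := by
    intro L hL
    have hL0 : 0 < L := by linarith
    have h3 := aux_ell_int (L := 2 * L) (by linarith) h1 h2 hnc hφ hζ hζc hζ0 hζ1 hζζ hIntg
    have h4 : ∫ x in (-L)..L, 9 / 16 * (ζ x * (φ x ^ 2 + φ1 x ^ 2)) ≤
        ∫ x in (-L)..L, ζ x * (1 - (x / (2 * L)) ^ 2) ^ 2 * (φ x ^ 2 + φ1 x ^ 2) := by
      apply aux_ii_le (by linarith) (by fun_prop) (by fun_prop)
      intro x hx
      have hs := aux_s_le hL0 hx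
      have h5 : (x / (2 * L)) ^ 2 ≤ 1 / 4 := by
        rw [show x / (2 * L) = (x / L) / 2 by field_simp]
        rw [div_pow]; linarith
      have h6 : 9 / 16 ≤ (1 - (x / (2 * L)) ^ 2) ^ 2 := by
        nlinarith
      have := mul_le_mul_of_nonneg_right h6 (hnn x)
      linarith
    have h7 : ∫ x in (-L)..L, ζ x * (1 - (x / (2 * L)) ^ 2) ^ 2 * (φ x ^ 2 + φ1 x ^ 2)
        ≤ ∫ x in (-(2 * L))..(2 * L), ζ x * (1 - (x / (2 * L)) ^ 2) ^ 2 * (φ x ^ 2 + φ1 x ^ 2) := by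
      apply intervalIntegral.integral_mono_interval (by linarith) (by linarith) (by linarith)
      · exact Eventually.of_forall fun x => mul_nonneg (mul_nonneg (hζ0 x) (sq_nonneg _)) (by positivity)
      · exact Continuous.intervalIntegrable (by fun_prop) _ _
    rw [intervalIntegral.integral_const_mul] at h4
    have h8 : 2 / (2 * L) = 1 / L := by field_simp
    rw [h8] at h3
    have h9 : 5 / L = 5 * (1 / L) := by ring
    have h10 : 0 ≤ 1 / L := by positivity
    rw [h9]
    nlinarith
  have hI : Integrable (fun x => ζ x * (φ x ^ 2 + φ1 x ^ 2)) := by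
    refine integrable_of_intervalIntegral_norm_bounded (l := atTop)
      (a := fun L : ℝ => -L) (b := fun L : ℝ => L)
      (5 * (∫ x, ζ x * n x ^ 2) + 5) (fun L => ?_) tendsto_neg_atTop_atBot tendsto_id ?_
    · exact (Continuous.integrableOn_Icc (by fun_prop)).mono_set Ioc_subset_Icc_self
    · filter_upwards [eventually_ge_atTop 1] with L hL
      have h3 := hb L hL
      have h4 : 5 / L ≤ 5 := div_le_self (by norm_num) hL
      simp only [Real.norm_eq_abs]
      simp_rw [fun x => abs_of_nonneg (hnn x)]
      linarith
  refine ⟨hI, ?_⟩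
  have ht := intervalIntegral_tendsto_integral hI (l := atTop) tendsto_neg_atTop_atBot tendsto_id
  have ht2 : Tendsto (fun L : ℝ => 5 * (∫ x, ζ x * n x ^ 2) + 5 / L) atTop
      (𝓝 (5 * (∫ x, ζ x * n x ^ 2) + 0)) :=
    tendsto_const_nhds.add (tendsto_const_nhds.div_atTop tendsto_id)
  rw [add_zero] at ht2
  refine le_of_tendsto_of_tendsto ht ht2 ?_
  filter_upwards [eventually_ge_atTop 1] with L hL
  exact hb L hL



def chiF (R x : ℝ) : ℝ := (1 - (x / R) ^ 2) ^ 2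
def chiD (R x : ℝ) : ℝ := -4 * (x / R) * (1 / R) * (1 - (x / R) ^ 2)
def hDer (R x : ℝ) : ℝ := (1 - (x / R) ^ 2) * (1 - 5 * (x / R) ^ 2)

@[fun_prop] lemma chiF_cont (R : ℝ) : Continuous (chiF R) := by unfold chiF; fun_prop
@[fun_prop] lemma chiD_cont (R : ℝ) : Continuous (chiD R) := by unfold chiD; fun_prop
@[fun_prop] lemma hDer_cont (R : ℝ) : Continuous (hDer R) := by unfold hDer; fun_prop

lemma chiF_deriv (R x : ℝ) : HasDerivAt (chiF R) (chiD R x) x := aux_chi_deriv R x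

lemma chiF_nonneg (R x : ℝ) : 0 ≤ chiF R x := sq_nonneg _

lemma chiF_le {R x : ℝ} (hR : 0 < R) (hx : x ∈ Icc (-R) R) : chiF R x ≤ 1 := by
  have := aux_s_le hR hx
  have := sq_nonneg (x / R)
  unfold chiF; nlinarith

lemma chiF_one_sub {R x : ℝ} (hR : 0 < R) (hx : x ∈ Icc (-R) R) :
    (1 - chiF R x) ^ 2 ≤ 2 * (x / R) ^ 2 := by
  have h1 := chiF_le hR hx
  have h2 := chiF_nonneg R x
  have h3 : 1 - chiF R x ≤ 2 * (x / R) ^ 2 := by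
    unfold chiF; nlinarith [sq_nonneg ((x / R) ^ 2)]
  nlinarith

lemma chiD_abs {R x : ℝ} (hR : 0 < R) (hx : x ∈ Icc (-R) R) : |chiD R x| ≤ 4 / R := by
  have h := aux_bump_alg1 (aux_s_le hR hx)
  have e : chiD R x = (x / R * (1 - (x / R) ^ 2)) * (-(4 / R)) := by unfold chiD; ring
  rw [e, abs_mul, abs_neg, abs_of_pos (show 0 < 4 / R by positivity)]
  have : 0 < 4 / R := by positivity
  nlinarith

lemma hDer_bd {R x : ℝ} (hR : 0 < R) (hx : x ∈ Icc (-R) R) :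
    0 ≤ 1 - hDer R x ∧ 1 - hDer R x ≤ 6 * (x / R) ^ 2 := by
  have := aux_s_le hR hx
  have := sq_nonneg (x / R)
  unfold hDer
  constructor <;> nlinarith [sq_nonneg ((x / R) ^ 2)]

lemma aux_cont_of_deriv {f g : ℝ → ℝ} (h : ∀ x, HasDerivAt f (g x) x) : Continuous f :=
  continuous_iff_continuousAt.2 fun x => (h x).continuousAt

lemma aux_A_half {A f : ℝ → ℝ} {R : ℝ} (hf : Continuous f)
    (hA : ∀ x, HasDerivAt A (f x - A x) x) (hA0 : A (-R) = 0) :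
    0 ≤ ∫ x in (-R)..R, A x * (f x - A x) := by
  have hc := aux_cont_of_deriv hA
  have hd : ∀ x, HasDerivAt (fun x => A x ^ 2 / 2) (A x * (f x - A x)) x := by
    intro x
    refine (((hA x).fun_pow 2).div_const 2).congr_deriv ?_
    norm_num
    ring
  rw [aux_ftc hd (by fun_prop), hA0]
  have := sq_nonneg (A R)
  linarith

lemma aux_A_facts {A f : ℝ → ℝ} {R : ℝ} (hR : 0 < R) (hf : Continuous f)
    (hA : ∀ x, HasDerivAt A (f x - A x) x) (hA0 : A (-R) = 0) :
    (∫ x in (-R)..R, A x ^ 2 ≤ ∫ x in (-R)..R, f x * A x) ∧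
    (∫ x in (-R)..R, A x ^ 2 ≤ ∫ x in (-R)..R, f x ^ 2) ∧
    (∫ x in (-R)..R, (f x - A x) ^ 2 ≤ ∫ x in (-R)..R, f x * (f x - A x)) ∧
    (∫ x in (-R)..R, (f x - A x) ^ 2 ≤ ∫ x in (-R)..R, f x ^ 2) := by
  have hc := aux_cont_of_deriv hA
  have h0 := aux_A_half hf hA hA0
  have hRR : -R ≤ R := by linarith
  have e1 : ∫ x in (-R)..R, A x * (f x - A x)
      = 1 * (∫ x in (-R)..R, f x * A x) + (-1) * ∫ x in (-R)..R, A x ^ 2 := by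
    rw [← aux_lin2 _ _ (by fun_prop) (by fun_prop)]
    congr 1; ext x; ring
  have e2 : ∫ x in (-R)..R, (f x - A x) ^ 2 = 1 * (∫ x in (-R)..R, f x * (f x - A x))
      + (-1) * ∫ x in (-R)..R, A x * (f x - A x) := by
    rw [← aux_lin2 _ _ (by fun_prop) (by fun_prop)]
    congr 1; ext x; ring
  have e3 : ∫ x in (-R)..R, f x * (f x - A x) = 1 * (∫ x in (-R)..R, f x ^ 2)
      + (-1) * ∫ x in (-R)..R, f x * A x := by
    rw [← aux_lin2 _ _ (by fun_prop) (by fun_prop)]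
    congr 1; ext x; ring
  have h1 : 0 ≤ ∫ x in (-R)..R, A x ^ 2 := aux_ii_nonneg hRR fun x _ => sq_nonneg _
  have h2 : ∫ x in (-R)..R, f x * A x ≤ (1/2) * (∫ x in (-R)..R, f x ^ 2)
      + (1/2) * ∫ x in (-R)..R, A x ^ 2 := by
    rw [← aux_lin2 _ _ (by fun_prop) (by fun_prop)]
    apply aux_ii_le hRR (by fun_prop) (by fun_prop)
    intro x _
    nlinarith [sq_nonneg (f x - A x)]
  refine ⟨by linarith, by linarith, by linarith, by linarith⟩

lemma aux_A_le {A f : ℝ → ℝ} {R D : ℝ}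
    (hA : ∀ x, HasDerivAt A (f x - A x) x) (hA0 : A (-R) = 0) (hD : 0 ≤ D)
    (hfD : ∀ x ∈ Icc (-R) R, f x ≤ D) : ∀ x ∈ Icc (-R) R, A x ≤ D := by
  intro x hx
  have hR : -R ≤ R := hx.1.trans hx.2
  have hc := aux_cont_of_deriv hA
  have h3 : AntitoneOn (fun z => (A z - D) * Real.exp z) (Icc (-R) R) := by
    have hd : ∀ z, HasDerivAt (fun z => (A z - D) * Real.exp z)
        ((f z - A z) * Real.exp z + (A z - D) * Real.exp z) z := fun z =>
      ((hA z).sub_const D).fun_mul (Real.hasDerivAt_exp z)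
    apply antitoneOn_of_deriv_nonpos (convex_Icc _ _)
    · fun_prop
    · intro z hz; exact (hd z).differentiableAt.differentiableWithinAt
    · intro z hz
      rw [(hd z).deriv, ← add_mul]
      have := hfD z (interior_subset hz)
      exact mul_nonpos_of_nonpos_of_nonneg (by linarith) (Real.exp_pos z).le
  have h4 := h3 (show -R ∈ Icc (-R) R from ⟨le_rfl, hR⟩) hx hx.1
  simp only [hA0] at h4
  have h5 : (0 - D) * Real.exp (-R) ≤ 0 :=
    mul_nonpos_of_nonpos_of_nonneg (by linarith) (Real.exp_pos _).le
  have h6 : A x - D ≤ 0 := by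
    by_contra hh
    push Not at hh
    have := mul_pos hh (Real.exp_pos x)
    linarith
  linarith

lemma aux_A_abs {A f : ℝ → ℝ} {R D : ℝ}
    (hA : ∀ x, HasDerivAt A (f x - A x) x) (hA0 : A (-R) = 0) (hD : 0 ≤ D)
    (hfD : ∀ x ∈ Icc (-R) R, |f x| ≤ D) : ∀ x ∈ Icc (-R) R, |A x| ≤ D := by
  intro x hx
  rw [abs_le]
  constructor
  · have := aux_A_le (A := fun x => - A x) (f := fun x => - f x) (R := R) (D := D)
      (fun x => ((hA x).fun_neg).congr_deriv (by ring)) (by simp [hA0]) hD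
      (fun x hx => (neg_le_abs _).trans (hfD x hx)) x hx
    linarith
  · exact aux_A_le hA hA0 hD (fun x hx => (le_abs_self _).trans (hfD x hx)) x hx

/-! pointwise estimates -/

lemma aux_e1_alg {k γ θ c n u P Q f g s2 h : ℝ} (hk : 0 < k) (hγ0 : 0 ≤ γ) (hγ1 : γ ≤ 1)
    (hθ0 : 0 ≤ θ) (hθ1 : θ ≤ 1)
    (hc : |c * n * u| ≤ (1 - γ) * (1 / 2 * (k / (1 + k)) * u ^ 2 + 1 / 2 * k * n ^ 2))
    (hn : |n| ≤ θ) (hP : |P - k / 2 * n ^ 2| ≤ θ * n ^ 2) (hQ0 : 0 ≤ Q) (hQ1 : Q ≤ f ^ 2)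
    (h0 : 0 ≤ 1 - h) (h1 : 1 - h ≤ 6 * s2) :
    (1 / 2 - (1 - γ) * (1 / 2 * (k / (1 + k))) - θ) * u ^ 2
      + (k / 2 - (1 - γ) * (1 / 2 * k) - θ) * n ^ 2 + (-1 / 2) * g ^ 2
      + (-6 * (k + 2)) * (s2 * (u ^ 2 + n ^ 2 + f ^ 2 + g ^ 2))
    ≤ h * ((1 / 2 + n) * u ^ 2 + P + Q - 1 / 2 * g ^ 2 - c * n * u) := by
  set X := (1 / 2 + n) * u ^ 2 + P + Q - 1 / 2 * g ^ 2 - c * n * u with hX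
  have hkk : k / (1 + k) ≤ 1 := by rw [div_le_one (by linarith)]; linarith
  have hkk0 : 0 ≤ k / (1 + k) := by positivity
  have hu2 := sq_nonneg u
  have hn2 := sq_nonneg n
  have hnu : |n * u ^ 2| ≤ θ * u ^ 2 := by
    rw [abs_mul, abs_of_nonneg hu2]; exact mul_le_mul_of_nonneg_right hn hu2
  have b1 := abs_le.1 hnu
  have b2 := abs_le.1 hP
  have b3 := abs_le.1 hc
  have b4 : θ * u ^ 2 ≤ 1 * u ^ 2 := mul_le_mul_of_nonneg_right hθ1 hu2
  have b5 : θ * n ^ 2 ≤ 1 * n ^ 2 := mul_le_mul_of_nonneg_right hθ1 hn2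
  have b6 : (1 - γ) * (1 / 2 * (k / (1 + k)) * u ^ 2 + 1 / 2 * k * n ^ 2)
      ≤ 1 * (1 / 2 * (k / (1 + k)) * u ^ 2 + 1 / 2 * k * n ^ 2) :=
    mul_le_mul_of_nonneg_right (by linarith) (by positivity)
  have b7 : k / (1 + k) * u ^ 2 ≤ 1 * u ^ 2 := mul_le_mul_of_nonneg_right hkk hu2
  have hub : X ≤ (k + 2) * (u ^ 2 + n ^ 2 + f ^ 2 + g ^ 2) := by
    have c1 : 0 ≤ k * u ^ 2 := by positivity
    have c2 : 0 ≤ k * f ^ 2 := by positivity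
    have c3 : 0 ≤ k * g ^ 2 := by positivity
    have c4 := sq_nonneg f
    have c5 := sq_nonneg g
    rw [hX]; linarith
  have hlb : (1 / 2 - (1 - γ) * (1 / 2 * (k / (1 + k))) - θ) * u ^ 2
      + (k / 2 - (1 - γ) * (1 / 2 * k) - θ) * n ^ 2 + (-1 / 2) * g ^ 2 ≤ X := by
    rw [hX]; linarith
  have hpos : 0 ≤ (k + 2) * (u ^ 2 + n ^ 2 + f ^ 2 + g ^ 2) := by positivity
  have d1 : (1 - h) * X ≤ (1 - h) * ((k + 2) * (u ^ 2 + n ^ 2 + f ^ 2 + g ^ 2)) :=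
    mul_le_mul_of_nonneg_left hub h0
  have d2 : (1 - h) * ((k + 2) * (u ^ 2 + n ^ 2 + f ^ 2 + g ^ 2))
      ≤ 6 * s2 * ((k + 2) * (u ^ 2 + n ^ 2 + f ^ 2 + g ^ 2)) :=
    mul_le_mul_of_nonneg_right h1 hpos
  linarith

lemma aux_d1_alg {k θ c n u wn f A x1 R : ℝ} (hk : 0 < k) (hR : 0 < R)
    (hθ1 : θ ≤ 1) (hc : c ^ 2 ≤ k ^ 2)
    (hA : |A| ≤ 1) (hw : |wn - k * n| ≤ θ * |n|) (hx1 : |x1| ≤ 4 / R) :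
    (-(4 / R) * (1 + k ^ 2)) * u ^ 2 + (-(4 / R) * (2 * k ^ 2 + 2)) * n ^ 2 + (-(4 / R)) * f ^ 2
      + (-(4 / R)) * A ^ 2
      ≤ x1 * A * (u ^ 2 / 2 + wn + f - c * u) := by
  have hw2 : |wn| ≤ k * |n| + |n| := by
    have e : wn = (wn - k * n) + k * n := by ring
    rw [e]
    refine (abs_add_le _ _).trans ?_
    rw [abs_mul, abs_of_pos hk]
    have : θ * |n| ≤ 1 * |n| := mul_le_mul_of_nonneg_right hθ1 (abs_nonneg _)
    linarith
  have hw3 : wn ^ 2 ≤ (2 * k ^ 2 + 2) * n ^ 2 := by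
    rw [← sq_abs wn, ← sq_abs n]
    have h1 : |wn| ^ 2 ≤ (k * |n| + |n|) ^ 2 := pow_le_pow_left₀ (abs_nonneg _) hw2 2
    nlinarith [sq_nonneg (k * |n| - |n|)]
  have hcu : (c * u) ^ 2 ≤ k ^ 2 * u ^ 2 := by
    rw [mul_pow]; exact mul_le_mul_of_nonneg_right hc (sq_nonneg u)
  have key : |A * (u ^ 2 / 2 + wn + f - c * u)|
      ≤ (1 + k ^ 2) * u ^ 2 + (2 * k ^ 2 + 2) * n ^ 2 + f ^ 2 + A ^ 2 := by
    have h1 : |A * (u ^ 2 / 2)| ≤ 1 * (u ^ 2 / 2) := by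
      rw [abs_mul, abs_of_nonneg (show 0 ≤ u ^ 2 / 2 by positivity)]
      exact mul_le_mul_of_nonneg_right hA (by positivity)
    have h1' := abs_le.1 h1
    have hku : 0 ≤ k ^ 2 * u ^ 2 := by positivity
    have hn2 : 0 ≤ (2 * k ^ 2 + 2) * n ^ 2 := by positivity
    rw [abs_le]
    constructor <;>
    nlinarith [sq_nonneg (A / 2 + wn), sq_nonneg (A / 2 + f), sq_nonneg (A / 2 - c * u),
      sq_nonneg (A / 2 - wn), sq_nonneg (A / 2 - f), sq_nonneg (A / 2 + c * u), sq_nonneg A]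
  have h2 : |x1 * A * (u ^ 2 / 2 + wn + f - c * u)| ≤ 4 / R *
      ((1 + k ^ 2) * u ^ 2 + (2 * k ^ 2 + 2) * n ^ 2 + f ^ 2 + A ^ 2) := by
    rw [mul_assoc, abs_mul]
    exact mul_le_mul hx1 key (abs_nonneg _) (by positivity)
  have := (abs_le.1 h2).1
  linarith

lemma aux_d2_alg {k θ n u wn f Y χ s2 : ℝ} (hθ0 : 0 < θ)
    (hχ0 : 0 ≤ χ) (hχ1 : χ ≤ 1) (hχ2 : (1 - χ) ^ 2 ≤ 2 * s2)
    (hY : |Y| ≤ 2 * θ) (hw : |wn - k * n| ≤ θ * |n|) :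
    (-θ) * u ^ 2 + (-θ) * n ^ 2 + (k * ((χ * n) * Y) + f * Y)
      + ((-(2 * θ)) * Y ^ 2 + (-(1 / θ)) * (s2 * f ^ 2))
      ≤ χ * Y * (u ^ 2 / 2 + wn + f) := by
  have hu2 : 0 ≤ u ^ 2 / 2 := by positivity
  have h1 : |χ * Y * (u ^ 2 / 2)| ≤ 2 * θ * (u ^ 2 / 2) := by
    rw [abs_mul, abs_mul, abs_of_nonneg hu2, abs_of_nonneg hχ0]
    apply mul_le_mul_of_nonneg_right _ hu2
    have := mul_le_mul_of_nonneg_right hχ1 (abs_nonneg Y)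
    linarith
  have h2 : |χ * (Y * (wn - k * n))| ≤ θ * (Y ^ 2 + n ^ 2) := by
    rw [abs_mul, abs_mul, abs_of_nonneg hχ0]
    have a1 : |Y| * |wn - k * n| ≤ |Y| * (θ * |n|) := mul_le_mul_of_nonneg_left hw (abs_nonneg _)
    have a2 : χ * (|Y| * |wn - k * n|) ≤ 1 * (|Y| * |wn - k * n|) :=
      mul_le_mul_of_nonneg_right hχ1 (by positivity)
    have a3 : |Y| * |n| ≤ Y ^ 2 + n ^ 2 := by
      rw [← sq_abs Y, ← sq_abs n]; nlinarith [sq_nonneg (|Y| - |n|), sq_nonneg (|Y|), sq_nonneg (|n|)]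
    have a4 : θ * (|Y| * |n|) ≤ θ * (Y ^ 2 + n ^ 2) := mul_le_mul_of_nonneg_left a3 hθ0.le
    linarith
  have h3 : (1 - χ) * f * Y ≤ θ * Y ^ 2 + 1 / θ * (s2 * f ^ 2) := by
    have a1 : (1 - χ) * f * Y ≤ θ * Y ^ 2 + 1 / θ * ((1 - χ) ^ 2 * f ^ 2 / 4) := by
      have := sq_nonneg (θ * Y - (1 - χ) * f / 2)
      have e : θ * Y ^ 2 + 1 / θ * ((1 - χ) ^ 2 * f ^ 2 / 4) - (1 - χ) * f * Y
          = 1 / θ * (θ * Y - (1 - χ) * f / 2) ^ 2 := by field_simp; ring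
      have : 0 ≤ 1 / θ * (θ * Y - (1 - χ) * f / 2) ^ 2 := by positivity
      linarith
    have a2 : (1 - χ) ^ 2 * f ^ 2 / 4 ≤ s2 * f ^ 2 := by
      have := mul_le_mul_of_nonneg_right hχ2 (sq_nonneg f)
      have : 0 ≤ (1 - χ) ^ 2 * f ^ 2 := by positivity
      linarith
    have a3 := mul_le_mul_of_nonneg_left a2 (show 0 ≤ 1 / θ by positivity)
    linarith
  have := (abs_le.1 h1).1
  have := (abs_le.1 h2).1
  linarith

lemma aux_d34_alg {θ n u χ B : ℝ} (hθ0 : 0 ≤ θ) (hχ0 : 0 ≤ χ) (hχ1 : χ ≤ 1) (hn : |n| ≤ θ) :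
    (-(1 + θ) - θ / 2) * u ^ 2 + 1 * ((χ * ((1 + n) * u)) * B) + (-(θ / 2)) * B ^ 2
      ≤ -(χ * u * (χ * ((1 + n) * u))) + χ * u * B := by
  have b := abs_le.1 hn
  have hχχ : χ ^ 2 ≤ 1 := by nlinarith
  have h1 : χ * u * (χ * ((1 + n) * u)) ≤ (1 + θ) * u ^ 2 := by
    have a1 : χ ^ 2 * u ^ 2 * (1 + n) ≤ χ ^ 2 * u ^ 2 * (1 + θ) :=
      mul_le_mul_of_nonneg_left (by linarith) (by positivity)
    have a2 : χ ^ 2 * (u ^ 2 * (1 + θ)) ≤ 1 * (u ^ 2 * (1 + θ)) :=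
      mul_le_mul_of_nonneg_right hχχ (by positivity)
    linarith
  have h2 : |n * (χ * u * B)| ≤ θ * ((u ^ 2 + B ^ 2) / 2) := by
    rw [abs_mul]
    apply mul_le_mul hn _ (abs_nonneg _) hθ0
    rw [mul_assoc, abs_mul, abs_of_nonneg hχ0]
    have a1 : χ * |u * B| ≤ 1 * |u * B| := mul_le_mul_of_nonneg_right hχ1 (abs_nonneg _)
    have a2 : |u * B| ≤ (u ^ 2 + B ^ 2) / 2 := by
      rw [abs_le]; constructor <;> nlinarith [sq_nonneg (u + B), sq_nonneg (u - B)]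
    linarith
  have := (abs_le.1 h2).2
  linarith

lemma aux_d5_alg {u Z χ R : ℝ} (hR : 0 < R) (hχ0 : 0 ≤ χ) (hχ1 : χ ≤ 1) :
    (-(1 / R)) * u ^ 2 + (-R) * Z ^ 2 ≤ χ * u * Z := by
  have e : 1 / R * u ^ 2 + R * Z ^ 2 - 2 * (u * Z) = 1 / R * (u - R * Z) ^ 2 := by
    field_simp; ring
  have e' : 1 / R * u ^ 2 + R * Z ^ 2 + 2 * (u * Z) = 1 / R * (u + R * Z) ^ 2 := by
    field_simp; ring
  have p1 : 0 ≤ 1 / R * (u - R * Z) ^ 2 := by positivity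
  have p2 : 0 ≤ 1 / R * (u + R * Z) ^ 2 := by positivity
  have p3 : 0 ≤ 1 / R * u ^ 2 := by positivity
  have p4 : 0 ≤ R * Z ^ 2 := by positivity
  have h1 : |u * Z| ≤ 1 / R * u ^ 2 + R * Z ^ 2 := by
    rw [abs_le]; constructor <;> linarith
  have h2 : |χ * u * Z| ≤ 1 / R * u ^ 2 + R * Z ^ 2 := by
    rw [mul_assoc, abs_mul, abs_of_nonneg hχ0]
    have := mul_le_mul_of_nonneg_right hχ1 (abs_nonneg (u * Z))
    linarith
  have := (abs_le.1 h2).1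
  linarith

lemma aux_z_alg {k c n u x1 R : ℝ} (hR : 0 < R) (hc : c ^ 2 ≤ k ^ 2)
    (hn : |n| ≤ 1) (hx1 : |x1| ≤ 4 / R) :
    (x1 * ((1 + n) * u - c * n)) ^ 2 ≤ (128 / R ^ 2) * u ^ 2 + (32 / R ^ 2 * k ^ 2) * n ^ 2 := by
  have b := abs_le.1 hn
  have h1 : x1 ^ 2 ≤ 16 / R ^ 2 := by
    rw [← sq_abs]
    have := pow_le_pow_left₀ (abs_nonneg _) hx1 2
    rw [div_pow] at this
    linarith
  have h2 : ((1 + n) * u - c * n) ^ 2 ≤ 8 * u ^ 2 + 2 * k ^ 2 * n ^ 2 := by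
    have a1 : (1 + n) ^ 2 ≤ 4 := by nlinarith
    have a2 : (1 + n) ^ 2 * u ^ 2 ≤ 4 * u ^ 2 := mul_le_mul_of_nonneg_right a1 (sq_nonneg u)
    have a3 : c ^ 2 * n ^ 2 ≤ k ^ 2 * n ^ 2 := mul_le_mul_of_nonneg_right hc (sq_nonneg n)
    nlinarith [sq_nonneg ((1 + n) * u + c * n)]
  rw [mul_pow]
  have h3 := mul_le_mul h1 h2 (sq_nonneg _) (by positivity)
  refine h3.trans (le_of_eq ?_)
  ring



lemma qfun_cont : Continuous qfun := by unfold qfun; fun_prop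

lemma aux_m_alg {n f q χ s2 θ : ℝ} (hχ2 : (1 - χ) ^ 2 ≤ 2 * s2) (hf : |f| ≤ θ)
    (hq : |q - f| ≤ f ^ 2) :
    (χ * n - n + q - f) ^ 2 ≤ 4 * (s2 * n ^ 2) + (2 * θ ^ 2) * f ^ 2 := by
  have h1 : (q - f) ^ 2 ≤ θ ^ 2 * f ^ 2 := by
    have a := pow_le_pow_left₀ (abs_nonneg _) hq 2
    rw [sq_abs] at a
    have b := pow_le_pow_left₀ (abs_nonneg _) hf 2
    rw [sq_abs] at b
    have c := mul_le_mul_of_nonneg_right b (sq_nonneg f)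
    linarith
  have h2 := mul_le_mul_of_nonneg_right hχ2 (sq_nonneg n)
  nlinarith [sq_nonneg ((χ * n - n) - (q - f))]

lemma aux_yy_alg {g ρ θ : ℝ} (hθ : 0 < θ) :
    (1 - θ) * g ^ 2 + (-(1 / θ)) * ρ ^ 2 ≤ (g + ρ) ^ 2 := by
  have e : (g + ρ) ^ 2 - ((1 - θ) * g ^ 2 + (-(1 / θ)) * ρ ^ 2)
      = 1 / θ * (θ * g + ρ) ^ 2 + ρ ^ 2 := by field_simp; ring
  have : 0 ≤ 1 / θ * (θ * g + ρ) ^ 2 + ρ ^ 2 := by positivity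
  linarith

lemma aux_fr_alg {f ρ θ : ℝ} (hθ : 0 < θ) :
    (-θ) * f ^ 2 + (-(1 / (4 * θ))) * ρ ^ 2 ≤ f * ρ := by
  have e : f * ρ - ((-θ) * f ^ 2 + (-(1 / (4 * θ))) * ρ ^ 2)
      = 1 / (4 * θ) * (2 * θ * f + ρ) ^ 2 := by field_simp; ring
  have : 0 ≤ 1 / (4 * θ) * (2 * θ * f + ρ) ^ 2 := by positivity
  linarith

/-! bound on the commutator remainder -/
set_option maxHeartbeats 1000000 in
lemma aux_rho {R θ S τ : ℝ} {n φ φ1 A : ℝ → ℝ} (hR : 0 < R) (hθ1 : θ ≤ 1 / 4)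
    (hn : Continuous n) (hφ : ∀ x, |φ x| ≤ θ)
    (h1 : ∀ x, HasDerivAt φ (φ1 x) x) (h2 : ∀ x, HasDerivAt φ1 (qfun (φ x) - n x) x)
    (hA : ∀ x, HasDerivAt A (chiF R x * n x - A x) x) (hA0 : A (-R) = 0)
    (hf0 : ∫ x in (-R)..R, φ x ^ 2 ≤ 5 * S)
    (hτ : ∫ x in (-R)..R, (x / R) ^ 2 * n x ^ 2 ≤ τ)
    (hb : φ (-R) ^ 2 + φ1 (-R) ^ 2 ≤ τ) :
    ∫ x in (-R)..R, (chiF R x * n x - A x - φ1 x + (qfun (φ x) - n x)) ^ 2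
      ≤ 20 * τ + 40 * θ ^ 2 * S := by
  have hRR : -R ≤ R := by linarith
  have hcA := aux_cont_of_deriv hA
  have hcφ := aux_cont_of_deriv h1
  have hcφ1 := aux_cont_of_deriv h2
  have hcq : Continuous fun x => qfun (φ x) := qfun_cont.comp hcφ
  have hm : ∫ x in (-R)..R, (chiF R x * n x - n x + qfun (φ x) - φ x) ^ 2
      ≤ 4 * τ + 10 * θ ^ 2 * S := by
    have a : ∫ x in (-R)..R, (chiF R x * n x - n x + qfun (φ x) - φ x) ^ 2
        ≤ 4 * (∫ x in (-R)..R, (x / R) ^ 2 * n x ^ 2) + (2 * θ ^ 2) * ∫ x in (-R)..R, φ x ^ 2 := by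
      rw [← aux_lin2 _ _ (by fun_prop) (by fun_prop)]
      apply aux_ii_le hRR (by fun_prop) (by fun_prop)
      intro x hx
      exact aux_m_alg (chiF_one_sub hR hx) (hφ x)
        (aux_q_err ((hφ x).trans (by linarith)))
    have b := mul_le_mul_of_nonneg_left hf0 (show 0 ≤ 2 * θ ^ 2 by positivity)
    linarith
  set r : ℝ → ℝ := fun x => A x - φ x + φ1 x with hr
  have hrd : ∀ x, HasDerivAt (fun x => r x ^ 2 / 2)
      (r x * (chiF R x * n x - n x + qfun (φ x) - φ x) - r x ^ 2) x := by
    intro x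
    have : HasDerivAt r ((chiF R x * n x - A x) - φ1 x + (qfun (φ x) - n x)) x :=
      ((hA x).fun_sub (h1 x)).fun_add (h2 x)
    refine ((this.fun_pow 2).div_const 2).congr_deriv ?_
    simp only [hr]; norm_num; ring
  have hcr : Continuous r := by rw [hr]; fun_prop
  have hi := aux_ftc (a := -R) (b := R) hrd (by fun_prop)
  have hrr : r (-R) ^ 2 ≤ 2 * τ := by
    simp only [hr, hA0]
    nlinarith [sq_nonneg (φ (-R) + φ1 (-R))]
  have hr1 : (1/2) * (∫ x in (-R)..R, r x ^ 2)
      + (-1/2) * (∫ x in (-R)..R, (chiF R x * n x - n x + qfun (φ x) - φ x) ^ 2)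
      ≤ - ∫ x in (-R)..R, (r x * (chiF R x * n x - n x + qfun (φ x) - φ x) - r x ^ 2) := by
    rw [← aux_lin2 _ _ (by fun_prop) (by fun_prop), ← intervalIntegral.integral_neg]
    apply aux_ii_le hRR (by fun_prop) (by fun_prop)
    intro x hx
    nlinarith [sq_nonneg (r x - (chiF R x * n x - n x + qfun (φ x) - φ x))]
  have hr2 := sq_nonneg (r R)
  have hρ : ∫ x in (-R)..R, (chiF R x * n x - A x - φ1 x + (qfun (φ x) - n x)) ^ 2
      ≤ 2 * (∫ x in (-R)..R, (chiF R x * n x - n x + qfun (φ x) - φ x) ^ 2)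
        + 2 * ∫ x in (-R)..R, r x ^ 2 := by
    rw [← aux_lin2 _ _ (by fun_prop) (by fun_prop)]
    apply aux_ii_le hRR (by fun_prop) (by fun_prop)
    intro x hx
    have e : chiF R x * n x - A x - φ1 x + (qfun (φ x) - n x)
      = (chiF R x * n x - n x + qfun (φ x) - φ x) - r x := by simp only [hr]; ring
    rw [e]
    nlinarith [sq_nonneg ((chiF R x * n x - n x + qfun (φ x) - φ x) + r x)]
  linarith

set_option maxHeartbeats 1000000 in
lemma aux_E3 {R θ S τ : ℝ} {n φ φ1 A : ℝ → ℝ} (hR : 0 < R) (hθ0 : 0 < θ) (hθ1 : θ ≤ 1 / 4)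
    (hn : Continuous n) (hφ : ∀ x, |φ x| ≤ θ)
    (h1 : ∀ x, HasDerivAt φ (φ1 x) x) (h2 : ∀ x, HasDerivAt φ1 (qfun (φ x) - n x) x)
    (hA : ∀ x, HasDerivAt A (chiF R x * n x - A x) x) (hA0 : A (-R) = 0)
    (hf0 : ∫ x in (-R)..R, φ x ^ 2 ≤ 5 * S) (hf1 : ∫ x in (-R)..R, φ1 x ^ 2 ≤ 5 * S)
    (hτ : ∫ x in (-R)..R, (x / R) ^ 2 * n x ^ 2 ≤ τ)
    (hb : φ (-R) ^ 2 + φ1 (-R) ^ 2 ≤ τ) (hb' : φ R ^ 2 + φ1 R ^ 2 ≤ τ) :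
    (∫ x in (-R)..R, φ1 x ^ 2) - (45 * (θ * S) + 22 * (τ / θ))
      ≤ (∫ x in (-R)..R, (chiF R x * n x - A x) ^ 2) ∧
    (∫ x in (-R)..R, φ1 x ^ 2) - (45 * (θ * S) + 22 * (τ / θ))
      ≤ (∫ x in (-R)..R, φ x * (chiF R x * n x - A x)) := by
  have hρ := aux_rho hR hθ1 hn hφ h1 h2 hA hA0 hf0 hτ hb
  have hRR : -R ≤ R := by linarith
  have hcA := aux_cont_of_deriv hA
  have hcφ := aux_cont_of_deriv h1
  have hcφ1 := aux_cont_of_deriv h2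
  have hcq : Continuous fun x => qfun (φ x) := qfun_cont.comp hcφ
  have hτ0 : 0 ≤ τ := le_trans (by positivity) hb
  have hτθ : τ ≤ τ / θ := by rw [le_div_iff₀ hθ0]; nlinarith
  have hS0 : 0 ≤ S := by
    have : 0 ≤ ∫ x in (-R)..R, φ x ^ 2 := aux_ii_nonneg hRR fun x _ => sq_nonneg _
    linarith
  have hρ' : 1 / θ * (∫ x in (-R)..R, (chiF R x * n x - A x - φ1 x + (qfun (φ x) - n x)) ^ 2)
      ≤ 20 * (τ / θ) + 40 * (θ * S) := by
    have := mul_le_mul_of_nonneg_left hρ (show 0 ≤ 1 / θ by positivity)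
    refine this.trans (le_of_eq ?_)
    field_simp
  have hθS : 0 ≤ θ * S := by positivity
  constructor
  · have a1 : (1 - θ) * (∫ x in (-R)..R, (φ1 x - (qfun (φ x) - n x)) ^ 2) + (-(1 / θ)) *
        (∫ x in (-R)..R, (chiF R x * n x - A x - φ1 x + (qfun (φ x) - n x)) ^ 2)
        ≤ ∫ x in (-R)..R, (chiF R x * n x - A x) ^ 2 := by
      rw [← aux_lin2 _ _ (by fun_prop) (by fun_prop)]
      apply aux_ii_le hRR (by fun_prop) (by fun_prop)
      intro x hx
      refine (aux_yy_alg hθ0).trans (le_of_eq ?_)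
      ring
    have hd : ∀ x, HasDerivAt (fun x => φ1 x ^ 2) (2 * φ1 x * (qfun (φ x) - n x)) x := by
      intro x
      refine ((h2 x).fun_pow 2).congr_deriv ?_
      norm_num
    have hi := aux_ftc (a := -R) (b := R) hd (by fun_prop)
    have a2 : 1 * (∫ x in (-R)..R, φ1 x ^ 2)
        + (-1) * (∫ x in (-R)..R, 2 * φ1 x * (qfun (φ x) - n x))
        ≤ ∫ x in (-R)..R, (φ1 x - (qfun (φ x) - n x)) ^ 2 := by
      rw [← aux_lin2 _ _ (by fun_prop) (by fun_prop)]
      apply aux_ii_le hRR (by fun_prop) (by fun_prop)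
      intro x hx
      nlinarith [sq_nonneg (qfun (φ x) - n x)]
    have p1 := sq_nonneg (φ1 (-R))
    have p2 := sq_nonneg (φ R)
    have a3 : (∫ x in (-R)..R, φ1 x ^ 2) - τ
        ≤ ∫ x in (-R)..R, (φ1 x - (qfun (φ x) - n x)) ^ 2 := by linarith
    have a4 := mul_le_mul_of_nonneg_left a3 (show 0 ≤ 1 - θ by linarith)
    have a5 := mul_le_mul_of_nonneg_left hf1 hθ0.le
    have a6 : 0 ≤ θ * τ := by positivity
    linarith
  · have hd : ∀ x, HasDerivAt (fun x => φ x ^ 2 / 2 - φ x * φ1 x)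
        (φ x * φ1 x - (φ1 x * φ1 x + φ x * (qfun (φ x) - n x))) x := by
      intro x
      refine ((((h1 x).fun_pow 2).div_const 2).fun_sub ((h1 x).fun_mul (h2 x))).congr_deriv ?_
      norm_num; ring
    have hi := aux_ftc (a := -R) (b := R) hd (by fun_prop)
    have a1 : 1 * (∫ x in (-R)..R, (φ x * φ1 x - (φ1 x * φ1 x + φ x * (qfun (φ x) - n x))))
        + 1 * (∫ x in (-R)..R, φ1 x ^ 2) + (-θ) * (∫ x in (-R)..R, φ x ^ 2)
        + (-(1 / (4 * θ))) *
          (∫ x in (-R)..R, (chiF R x * n x - A x - φ1 x + (qfun (φ x) - n x)) ^ 2)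
        ≤ ∫ x in (-R)..R, φ x * (chiF R x * n x - A x) := by
      rw [← aux_lin4 _ _ _ _ (by fun_prop) (by fun_prop) (by fun_prop) (by fun_prop)]
      apply aux_ii_le hRR (by fun_prop) (by fun_prop)
      intro x hx
      have := aux_fr_alg (f := φ x)
        (ρ := chiF R x * n x - A x - φ1 x + (qfun (φ x) - n x)) hθ0
      linarith
    have e : 1 / (4 * θ) = (1 / θ) / 4 := by field_simp
    rw [e] at a1
    have a5 := mul_le_mul_of_nonneg_left hf0 hθ0.le
    have p1 : -(φ R ^ 2 + φ1 R ^ 2) ≤ φ R ^ 2 / 2 - φ R * φ1 R := by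
      nlinarith [sq_nonneg (φ R - φ1 R), sq_nonneg (φ R), sq_nonneg (φ1 R)]
    have p2 : φ (-R) ^ 2 / 2 - φ (-R) * φ1 (-R) ≤ φ (-R) ^ 2 + φ1 (-R) ^ 2 := by
      nlinarith [sq_nonneg (φ (-R) + φ1 (-R)), sq_nonneg (φ1 (-R))]
    linarith



def exprF (R κ c : ℝ) (n u φ φ1 wn Pn Qf A B Z : ℝ → ℝ) : ℝ :=
  (∫ x in (-R)..R, hDer R x * ((1 / 2 + n x) * u x ^ 2 + Pn x + Qf x - 1 / 2 * φ1 x ^ 2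
      - c * n x * u x))
  + κ * ((∫ x in (-R)..R, chiD R x * A x * (u x ^ 2 / 2 + wn x + φ x - c * u x))
    + (∫ x in (-R)..R, chiF R x * (chiF R x * n x - A x) * (u x ^ 2 / 2 + wn x + φ x))
    + (∫ x in (-R)..R, (-(chiF R x * u x * (chiF R x * ((1 + n x) * u x)))
        + chiF R x * u x * B x))
    + (∫ x in (-R)..R, chiF R x * u x * Z x))

lemma static_d1 {R k θ c S : ℝ} {n u φ wn A : ℝ → ℝ} (hk : 0 < k) (hR : 0 < R)
    (hθ1 : θ ≤ 1 / 4) (hc : c ^ 2 ≤ k ^ 2)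
    (hn : Continuous n) (hu : Continuous u) (hφ : Continuous φ) (hwn : Continuous wn)
    (hnθ : ∀ x, |n x| ≤ θ) (hw : ∀ x, |wn x - k * n x| ≤ θ * |n x|)
    (hA : ∀ x, HasDerivAt A (chiF R x * n x - A x) x) (hA0 : A (-R) = 0)
    (hS : (∫ x in (-R)..R, u x ^ 2) + (∫ x in (-R)..R, n x ^ 2) ≤ S)
    (hf0 : ∫ x in (-R)..R, φ x ^ 2 ≤ 5 * S) :
    -((4 * (2 * k ^ 2 + 8)) * (S / R))
      ≤ ∫ x in (-R)..R, chiD R x * A x * (u x ^ 2 / 2 + wn x + φ x - c * u x) := by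
  have hRR : -R ≤ R := by linarith
  have hcA := aux_cont_of_deriv hA
  have hθ0 : 0 ≤ θ := (abs_nonneg _).trans (hnθ 0)
  have hNθ : ∀ x ∈ Icc (-R) R, |chiF R x * n x| ≤ θ := by
    intro x hx
    rw [abs_mul, abs_of_nonneg (chiF_nonneg R x)]
    have := mul_le_mul_of_nonneg_right (chiF_le hR hx) (abs_nonneg (n x))
    linarith [hnθ x]
  have hAθ := aux_A_abs hA hA0 hθ0 hNθ
  have a1 : (-(4 / R) * (1 + k ^ 2)) * (∫ x in (-R)..R, u x ^ 2)
      + (-(4 / R) * (2 * k ^ 2 + 2)) * (∫ x in (-R)..R, n x ^ 2)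
      + (-(4 / R)) * (∫ x in (-R)..R, φ x ^ 2) + (-(4 / R)) * (∫ x in (-R)..R, A x ^ 2)
      ≤ ∫ x in (-R)..R, chiD R x * A x * (u x ^ 2 / 2 + wn x + φ x - c * u x) := by
    rw [← aux_lin4 _ _ _ _ (by fun_prop) (by fun_prop) (by fun_prop) (by fun_prop)]
    apply aux_ii_le hRR (by fun_prop) (by fun_prop)
    intro x hx
    exact aux_d1_alg hk hR (by linarith) hc ((hAθ x hx).trans (by linarith)) (hw x)
      (chiD_abs hR hx)
  have a2 := (aux_A_facts hR (by fun_prop) hA hA0).2.1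
  have a3 : ∫ x in (-R)..R, (chiF R x * n x) ^ 2 ≤ ∫ x in (-R)..R, n x ^ 2 := by
    apply aux_ii_le hRR (by fun_prop) (by fun_prop)
    intro x hx
    rw [mul_pow]
    have := chiF_le hR hx
    have := chiF_nonneg R x
    have : chiF R x ^ 2 ≤ 1 := by nlinarith
    nlinarith [sq_nonneg (n x)]
  have p1 : 0 ≤ ∫ x in (-R)..R, u x ^ 2 := aux_ii_nonneg hRR fun x _ => sq_nonneg _
  have p2 : 0 ≤ ∫ x in (-R)..R, n x ^ 2 := aux_ii_nonneg hRR fun x _ => sq_nonneg _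
  generalize (∫ x in (-R)..R, u x ^ 2) = a at *
  generalize (∫ x in (-R)..R, n x ^ 2) = b at *
  generalize (∫ x in (-R)..R, φ x ^ 2) = f0 at *
  generalize (∫ x in (-R)..R, A x ^ 2) = a' at *
  refine le_trans ?_ a1
  have e : (-(4 / R) * (1 + k ^ 2)) * a + (-(4 / R) * (2 * k ^ 2 + 2)) * b + (-(4 / R)) * f0
     + (-(4 / R)) * a' = -((4 * ((1 + k ^ 2) * a + (2 * k ^ 2 + 2) * b + f0 + a')) / R) := by
    field_simp; ring
  have e' : -((4 * (2 * k ^ 2 + 8)) * (S / R)) = -((4 * ((2 * k ^ 2 + 8) * S)) / R) := by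
    field_simp
  rw [e, e']
  apply neg_le_neg
  apply div_le_div_of_nonneg_right _ hR.le
  have : 0 ≤ k ^ 2 * a := by positivity
  have : k ^ 2 * (a + b) ≤ k ^ 2 * S := mul_le_mul_of_nonneg_left hS (by positivity)
  nlinarith

lemma static_d2 {R k θ S τ : ℝ} {n u φ φ1 wn A : ℝ → ℝ} (hk : 0 < k) (hR : 0 < R)
    (hθ0 : 0 < θ) (hθ1 : θ ≤ 1 / 4)
    (hn : Continuous n) (hu : Continuous u) (hwn : Continuous wn)
    (hnθ : ∀ x, |n x| ≤ θ) (hφ : ∀ x, |φ x| ≤ θ) (hw : ∀ x, |wn x - k * n x| ≤ θ * |n x|)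
    (h1 : ∀ x, HasDerivAt φ (φ1 x) x) (h2 : ∀ x, HasDerivAt φ1 (qfun (φ x) - n x) x)
    (hA : ∀ x, HasDerivAt A (chiF R x * n x - A x) x) (hA0 : A (-R) = 0)
    (hS : (∫ x in (-R)..R, u x ^ 2) + (∫ x in (-R)..R, n x ^ 2) ≤ S)
    (hf0 : ∫ x in (-R)..R, φ x ^ 2 ≤ 5 * S) (hf1 : ∫ x in (-R)..R, φ1 x ^ 2 ≤ 5 * S)
    (hτ : ∫ x in (-R)..R, (x / R) ^ 2 * n x ^ 2 ≤ τ)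
    (hτ' : ∫ x in (-R)..R, (x / R) ^ 2 * φ x ^ 2 ≤ τ)
    (hb : φ (-R) ^ 2 + φ1 (-R) ^ 2 ≤ τ) (hb' : φ R ^ 2 + φ1 R ^ 2 ≤ τ) :
    (k + 1) * ((∫ x in (-R)..R, φ1 x ^ 2) - (45 * (θ * S) + 22 * (τ / θ)))
      - 3 * (θ * S) - τ / θ
      ≤ ∫ x in (-R)..R, chiF R x * (chiF R x * n x - A x) * (u x ^ 2 / 2 + wn x + φ x) := by
  have hRR : -R ≤ R := by linarith
  have hcA := aux_cont_of_deriv hA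
  have hcφ := aux_cont_of_deriv h1
  have hNθ : ∀ x ∈ Icc (-R) R, |chiF R x * n x| ≤ θ := by
    intro x hx
    rw [abs_mul, abs_of_nonneg (chiF_nonneg R x)]
    have := mul_le_mul_of_nonneg_right (chiF_le hR hx) (abs_nonneg (n x))
    linarith [hnθ x]
  have hAθ := aux_A_abs hA hA0 hθ0.le hNθ
  have a1 : (-θ) * (∫ x in (-R)..R, u x ^ 2) + (-θ) * (∫ x in (-R)..R, n x ^ 2)
      + 1 * (k * (∫ x in (-R)..R, (chiF R x * n x) * (chiF R x * n x - A x))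
        + 1 * ∫ x in (-R)..R, φ x * (chiF R x * n x - A x))
      + 1 * ((-(2 * θ)) * (∫ x in (-R)..R, (chiF R x * n x - A x) ^ 2)
        + (-(1 / θ)) * (∫ x in (-R)..R, (x / R) ^ 2 * φ x ^ 2))
      ≤ ∫ x in (-R)..R, chiF R x * (chiF R x * n x - A x) * (u x ^ 2 / 2 + wn x + φ x) := by
    rw [← aux_lin2 k 1 (by fun_prop) (by fun_prop),
      ← aux_lin2 (-(2 * θ)) (-(1 / θ)) (by fun_prop) (by fun_prop),
      ← aux_lin4 _ _ _ _ (by fun_prop) (by fun_prop) (by fun_prop) (by fun_prop)]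
    apply aux_ii_le hRR (by fun_prop) (by fun_prop)
    intro x hx
    have hY : |chiF R x * n x - A x| ≤ 2 * θ := by
      refine (abs_sub _ _).trans ?_
      linarith [hNθ x hx, hAθ x hx]
    have := aux_d2_alg (k := k) (u := u x) (f := φ x) hθ0 (chiF_nonneg R x) (chiF_le hR hx) (chiF_one_sub hR hx) hY (hw x)
    linarith
  obtain ⟨-, -, a2, a2'⟩ := aux_A_facts hR (by fun_prop) hA hA0
  have a3 : ∫ x in (-R)..R, (chiF R x * n x) ^ 2 ≤ ∫ x in (-R)..R, n x ^ 2 := by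
    apply aux_ii_le hRR (by fun_prop) (by fun_prop)
    intro x hx
    rw [mul_pow]
    have := chiF_le hR hx
    have := chiF_nonneg R x
    have : chiF R x ^ 2 ≤ 1 := by nlinarith
    nlinarith [sq_nonneg (n x)]
  obtain ⟨e1, e2⟩ := aux_E3 hR hθ0 hθ1 hn hφ h1 h2 hA hA0 hf0 hf1 hτ hb hb'
  have p1 : 0 ≤ ∫ x in (-R)..R, u x ^ 2 := aux_ii_nonneg hRR fun x _ => sq_nonneg _
  have q1 : θ * ((∫ x in (-R)..R, u x ^ 2) + (∫ x in (-R)..R, n x ^ 2)) ≤ θ * S :=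
    mul_le_mul_of_nonneg_left hS hθ0.le
  have q2 : θ * (∫ x in (-R)..R, (chiF R x * n x - A x) ^ 2) ≤ θ * S :=
    mul_le_mul_of_nonneg_left (by linarith) hθ0.le
  have q3 : (1 / θ) * (∫ x in (-R)..R, (x / R) ^ 2 * φ x ^ 2) ≤ τ / θ := by
    rw [div_mul_eq_mul_div, one_mul]
    exact div_le_div_of_nonneg_right hτ' hθ0.le
  have q4 := mul_le_mul_of_nonneg_left (e1.trans a2) hk.le
  linarith

lemma static_d34 {R θ : ℝ} {n u B : ℝ → ℝ} (hR : 0 < R) (hθ0 : 0 < θ) (hθ1 : θ ≤ 1 / 4)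
    (hn : Continuous n) (hu : Continuous u) (hnθ : ∀ x, |n x| ≤ θ)
    (hB : ∀ x, HasDerivAt B (chiF R x * ((1 + n x) * u x) - B x) x) (hB0 : B (-R) = 0) :
    -((1 + 3 / 2 * θ) * ∫ x in (-R)..R, u x ^ 2)
      ≤ ∫ x in (-R)..R, (-(chiF R x * u x * (chiF R x * ((1 + n x) * u x)))
        + chiF R x * u x * B x) := by
  have hRR : -R ≤ R := by linarith
  have hcB := aux_cont_of_deriv hB
  have a1 : (-(1 + θ) - θ / 2) * (∫ x in (-R)..R, u x ^ 2)
      + 1 * (∫ x in (-R)..R, (chiF R x * ((1 + n x) * u x)) * B x)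
      + (-(θ / 2)) * (∫ x in (-R)..R, B x ^ 2)
      ≤ ∫ x in (-R)..R, (-(chiF R x * u x * (chiF R x * ((1 + n x) * u x)))
        + chiF R x * u x * B x) := by
    rw [← aux_lin3 _ _ _ (by fun_prop) (by fun_prop) (by fun_prop)]
    apply aux_ii_le hRR (by fun_prop) (by fun_prop)
    intro x hx
    exact aux_d34_alg hθ0.le (chiF_nonneg R x) (chiF_le hR hx) (hnθ x)
  have a2 := (aux_A_facts hR (by fun_prop) hB hB0).1
  have p : 0 ≤ ∫ x in (-R)..R, B x ^ 2 := aux_ii_nonneg hRR fun x _ => sq_nonneg _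
  have q : θ / 2 * (∫ x in (-R)..R, B x ^ 2) ≤ 1 * (∫ x in (-R)..R, B x ^ 2) :=
    mul_le_mul_of_nonneg_right (by linarith) p
  linarith

lemma static_d5 {R k θ c S : ℝ} {n u Z : ℝ → ℝ} (hR : 0 < R) (hθ1 : θ ≤ 1 / 4)
    (hc : c ^ 2 ≤ k ^ 2)
    (hn : Continuous n) (hu : Continuous u) (hnθ : ∀ x, |n x| ≤ θ)
    (hZ : ∀ x, HasDerivAt Z (chiD R x * ((1 + n x) * u x - c * n x) - Z x) x) (hZ0 : Z (-R) = 0)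
    (hS : (∫ x in (-R)..R, u x ^ 2) + (∫ x in (-R)..R, n x ^ 2) ≤ S) :
    -((129 + 32 * k ^ 2) * (S / R)) ≤ ∫ x in (-R)..R, chiF R x * u x * Z x := by
  have hRR : -R ≤ R := by linarith
  have hcZ := aux_cont_of_deriv hZ
  have a1 : (-(1 / R)) * (∫ x in (-R)..R, u x ^ 2) + (-R) * (∫ x in (-R)..R, Z x ^ 2)
      ≤ ∫ x in (-R)..R, chiF R x * u x * Z x := by
    rw [← aux_lin2 _ _ (by fun_prop) (by fun_prop)]
    apply aux_ii_le hRR (by fun_prop) (by fun_prop)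
    intro x hx
    exact aux_d5_alg hR (chiF_nonneg R x) (chiF_le hR hx)
  have a2 := (aux_A_facts hR (by fun_prop) hZ hZ0).2.1
  have a3 : ∫ x in (-R)..R, (chiD R x * ((1 + n x) * u x - c * n x)) ^ 2
      ≤ (128 / R ^ 2) * (∫ x in (-R)..R, u x ^ 2)
        + (32 / R ^ 2 * k ^ 2) * (∫ x in (-R)..R, n x ^ 2) := by
    rw [← aux_lin2 _ _ (by fun_prop) (by fun_prop)]
    apply aux_ii_le hRR (by fun_prop) (by fun_prop)
    intro x hx
    exact aux_z_alg hR hc ((hnθ x).trans (by linarith)) (chiD_abs hR hx)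
  have p1 : 0 ≤ ∫ x in (-R)..R, u x ^ 2 := aux_ii_nonneg hRR fun x _ => sq_nonneg _
  have p2 : 0 ≤ ∫ x in (-R)..R, n x ^ 2 := aux_ii_nonneg hRR fun x _ => sq_nonneg _
  have a4 := mul_le_mul_of_nonneg_left (a2.trans a3) hR.le
  generalize (∫ x in (-R)..R, u x ^ 2) = a at *
  generalize (∫ x in (-R)..R, n x ^ 2) = b at *
  refine le_trans ?_ a1
  have e : R * (128 / R ^ 2 * a + 32 / R ^ 2 * k ^ 2 * b) + 1 / R * a
    = (129 * a + 32 * k ^ 2 * b) / R := by field_simp; ring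
  have e' : (129 * a + 32 * k ^ 2 * b) / R ≤ ((129 + 32 * k ^ 2) * S) / R := by
    apply div_le_div_of_nonneg_right _ hR.le
    have : 0 ≤ k ^ 2 * a := by positivity
    have : k ^ 2 * (a + b) ≤ k ^ 2 * S := mul_le_mul_of_nonneg_left hS (by positivity)
    nlinarith
  rw [mul_div_assoc] at e'
  linarith

lemma static_e1 {R k γ θ c τ : ℝ} {n u φ φ1 Pn Qf : ℝ → ℝ} (hk : 0 < k) (hR : 0 < R)
    (hγ0 : 0 ≤ γ) (hγ1 : γ ≤ 1) (hθ1 : θ ≤ 1 / 4)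
    (hc : ∀ x, |c * n x * u x|
      ≤ (1 - γ) * (1 / 2 * (k / (1 + k)) * u x ^ 2 + 1 / 2 * k * n x ^ 2))
    (hn : Continuous n) (hu : Continuous u) (hφ : Continuous φ) (hφ1 : Continuous φ1)
    (hP : Continuous Pn) (hQ : Continuous Qf)
    (hnθ : ∀ x, |n x| ≤ θ) (hPn : ∀ x, |Pn x - k / 2 * n x ^ 2| ≤ θ * n x ^ 2)
    (hQ0 : ∀ x, 0 ≤ Qf x) (hQ1 : ∀ x, Qf x ≤ φ x ^ 2)
    (hτ : ∫ x in (-R)..R, (x / R) ^ 2 * (u x ^ 2 + n x ^ 2 + φ x ^ 2 + φ1 x ^ 2) ≤ τ) :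
    (1 / 2 - (1 - γ) * (1 / 2 * (k / (1 + k))) - θ) * (∫ x in (-R)..R, u x ^ 2)
      + (k / 2 - (1 - γ) * (1 / 2 * k) - θ) * (∫ x in (-R)..R, n x ^ 2)
      + (-1 / 2) * (∫ x in (-R)..R, φ1 x ^ 2) + (-6 * (k + 2)) * τ
    ≤ ∫ x in (-R)..R, hDer R x * ((1 / 2 + n x) * u x ^ 2 + Pn x + Qf x - 1 / 2 * φ1 x ^ 2
      - c * n x * u x) := by
  have hRR : -R ≤ R := by linarith
  have hθ0 : 0 ≤ θ := (abs_nonneg _).trans (hnθ 0)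
  have a1 : (1 / 2 - (1 - γ) * (1 / 2 * (k / (1 + k))) - θ) * (∫ x in (-R)..R, u x ^ 2)
      + (k / 2 - (1 - γ) * (1 / 2 * k) - θ) * (∫ x in (-R)..R, n x ^ 2)
      + (-1 / 2) * (∫ x in (-R)..R, φ1 x ^ 2) + (-6 * (k + 2)) *
        (∫ x in (-R)..R, (x / R) ^ 2 * (u x ^ 2 + n x ^ 2 + φ x ^ 2 + φ1 x ^ 2))
    ≤ ∫ x in (-R)..R, hDer R x * ((1 / 2 + n x) * u x ^ 2 + Pn x + Qf x - 1 / 2 * φ1 x ^ 2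
      - c * n x * u x) := by
    rw [← aux_lin4 _ _ _ _ (by fun_prop) (by fun_prop) (by fun_prop) (by fun_prop)]
    apply aux_ii_le hRR (by fun_prop) (by fun_prop)
    intro x hx
    exact aux_e1_alg hk hγ0 hγ1 hθ0 (by linarith) (hc x) (hnθ x) (hPn x) (hQ0 x) (hQ1 x)
      (hDer_bd hR hx).1 (hDer_bd hR hx).2
  have := mul_le_mul_of_nonneg_left hτ (show 0 ≤ 6 * (k + 2) by linarith)
  linarith

lemma static_sum_alg {k γ θ a b S f1 τ v E d1 d2 d34 d5 σ : ℝ} (hk : 0 < k) (hγ0 : 0 ≤ γ)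
    (hθ0 : 0 < θ) (hθ1 : θ ≤ 1 / 4) (ha : 0 ≤ a) (hb : 0 ≤ b) (hS : a + b ≤ S)
    (hτ : 0 ≤ τ) (hv : v = τ / θ) (hσ : 0 ≤ σ)
    (hE : (1 / 2 - (1 - γ) * (1 / 2 * (k / (1 + k))) - θ) * a
      + (k / 2 - (1 - γ) * (1 / 2 * k) - θ) * b
      + (-1 / 2) * f1 + (-6 * (k + 2)) * τ ≤ E)
    (h1 : -((4 * (2 * k ^ 2 + 8)) * σ) ≤ d1)
    (h2 : (k + 1) * (f1 - (45 * (θ * S) + 22 * v)) - 3 * (θ * S) - v ≤ d2)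
    (h34 : -((1 + 3 / 2 * θ) * a) ≤ d34) (h5 : -((129 + 32 * k ^ 2) * σ) ≤ d5) :
    γ * (1 / 2 * (k / (1 + k))) * (a + b)
      - (100 + 6 * k + 20 * k ^ 2) * (θ * S + v + σ)
      ≤ E + 1 / (2 * (1 + k)) * (d1 + d2 + d34 + d5) := by
  set κ := 1 / (2 * (1 + k)) with hκ
  have hκ0 : 0 < κ := by positivity
  have hκ1 : κ ≤ 1 / 2 := by
    rw [hκ]; apply one_div_le_one_div_of_le <;> linarith
  have e1 : κ * (k + 1) = 1 / 2 := by rw [hκ]; field_simp; ring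
  have e2 : 1 / 2 * (k / (1 + k)) = 1 / 2 - κ := by rw [hκ]; field_simp; ring
  rw [e2] at hE ⊢
  have hτv : τ ≤ v := by rw [hv, le_div_iff₀ hθ0]; nlinarith
  have hv0 : 0 ≤ v := hτ.trans hτv
  have hθS : 0 ≤ θ * S := mul_nonneg hθ0.le (by linarith)
  have m : κ * (-((4 * (2 * k ^ 2 + 8)) * σ)
    + ((k + 1) * (f1 - (45 * (θ * S) + 22 * v)) - 3 * (θ * S) - v)
    + -((1 + 3 / 2 * θ) * a) + -((129 + 32 * k ^ 2) * σ)) ≤ κ * (d1 + d2 + d34 + d5) :=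
    mul_le_mul_of_nonneg_left (by linarith) hκ0.le
  have m2 : κ * ((k + 1) * (f1 - (45 * (θ * S) + 22 * v)))
      = 1 / 2 * (f1 - (45 * (θ * S) + 22 * v)) := by rw [← mul_assoc, e1]
  have hθa : θ * a ≤ θ * S := mul_le_mul_of_nonneg_left (by linarith) hθ0.le
  have hθb : θ * (a + b) ≤ θ * S := mul_le_mul_of_nonneg_left hS hθ0.le
  have m3 : κ * ((161 + 40 * k ^ 2) * σ + 3 * (θ * S) + v + 3 / 2 * (θ * a))
      ≤ 1 / 2 * ((161 + 40 * k ^ 2) * σ + 3 * (θ * S) + v + 3 / 2 * (θ * a)) :=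
    mul_le_mul_of_nonneg_right hκ1 (by positivity)
  have m4 : 6 * (k + 2) * τ ≤ 6 * (k + 2) * v := mul_le_mul_of_nonneg_left hτv (by linarith)
  have m5 : 0 ≤ γ * (b * (k / 2 - (1 / 2 - κ))) := by
    have : 1 / 2 - κ ≤ k / 2 := by
      rw [← e2]
      have : k / (1 + k) ≤ k := by rw [div_le_iff₀ (by linarith)]; nlinarith
      linarith
    exact mul_nonneg hγ0 (mul_nonneg hb (by linarith))
  have p1 : 0 ≤ k * σ := by positivity
  have p2 : 0 ≤ k ^ 2 * v := by positivity
  have p3 : 0 ≤ k * (θ * S) := by positivity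
  have p4 : 0 ≤ k ^ 2 * (θ * S) := by positivity
  linarith

set_option maxHeartbeats 1000000 in
lemma static_main {R k γ θ c S τ : ℝ} {n u φ φ1 wn Pn Qf A B Z : ℝ → ℝ} (hk : 0 < k) (hR : 0 < R)
    (hγ0 : 0 ≤ γ) (hγ1 : γ ≤ 1) (hθ0 : 0 < θ) (hθ1 : θ ≤ 1 / 4) (hck : c ^ 2 ≤ k ^ 2)
    (hc : ∀ x, |c * n x * u x|
      ≤ (1 - γ) * (1 / 2 * (k / (1 + k)) * u x ^ 2 + 1 / 2 * k * n x ^ 2))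
    (hn : Continuous n) (hu : Continuous u) (hwn : Continuous wn)
    (hP : Continuous Pn) (hQ : Continuous Qf)
    (hnθ : ∀ x, |n x| ≤ θ) (hφ : ∀ x, |φ x| ≤ θ) (hw : ∀ x, |wn x - k * n x| ≤ θ * |n x|)
    (hPn : ∀ x, |Pn x - k / 2 * n x ^ 2| ≤ θ * n x ^ 2)
    (hQ0 : ∀ x, 0 ≤ Qf x) (hQ1 : ∀ x, Qf x ≤ φ x ^ 2)
    (h1 : ∀ x, HasDerivAt φ (φ1 x) x) (h2 : ∀ x, HasDerivAt φ1 (qfun (φ x) - n x) x)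
    (hA : ∀ x, HasDerivAt A (chiF R x * n x - A x) x) (hA0 : A (-R) = 0)
    (hB : ∀ x, HasDerivAt B (chiF R x * ((1 + n x) * u x) - B x) x) (hB0 : B (-R) = 0)
    (hZ : ∀ x, HasDerivAt Z (chiD R x * ((1 + n x) * u x - c * n x) - Z x) x) (hZ0 : Z (-R) = 0)
    (hS : (∫ x in (-R)..R, u x ^ 2) + (∫ x in (-R)..R, n x ^ 2) ≤ S)
    (hf0 : ∫ x in (-R)..R, φ x ^ 2 ≤ 5 * S) (hf1 : ∫ x in (-R)..R, φ1 x ^ 2 ≤ 5 * S)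
    (hτ : ∫ x in (-R)..R, (x / R) ^ 2 * (u x ^ 2 + n x ^ 2 + φ x ^ 2 + φ1 x ^ 2) ≤ τ)
    (hb : φ (-R) ^ 2 + φ1 (-R) ^ 2 ≤ τ) (hb' : φ R ^ 2 + φ1 R ^ 2 ≤ τ) :
    γ * (1 / 2 * (k / (1 + k))) * ((∫ x in (-R)..R, u x ^ 2) + (∫ x in (-R)..R, n x ^ 2))
      - (100 + 6 * k + 20 * k ^ 2) * (θ * S + τ / θ + S / R)
      ≤ exprF R (1 / (2 * (1 + k))) c n u φ φ1 wn Pn Qf A B Z := by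
  have hRR : -R ≤ R := by linarith
  have hcφ := aux_cont_of_deriv h1
  have hcφ1 := aux_cont_of_deriv h2
  have p1 : 0 ≤ ∫ x in (-R)..R, u x ^ 2 := aux_ii_nonneg hRR fun x _ => sq_nonneg _
  have p2 : 0 ≤ ∫ x in (-R)..R, n x ^ 2 := aux_ii_nonneg hRR fun x _ => sq_nonneg _
  have t1 : ∫ x in (-R)..R, (x / R) ^ 2 * n x ^ 2 ≤ τ := by
    refine le_trans (aux_ii_le hRR (by fun_prop) (by fun_prop) ?_) hτ
    intro x _
    apply mul_le_mul_of_nonneg_left _ (sq_nonneg _)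
    linarith [sq_nonneg (u x), sq_nonneg (φ x), sq_nonneg (φ1 x)]
  have t2 : ∫ x in (-R)..R, (x / R) ^ 2 * φ x ^ 2 ≤ τ := by
    refine le_trans (aux_ii_le hRR (by fun_prop) (by fun_prop) ?_) hτ
    intro x _
    apply mul_le_mul_of_nonneg_left _ (sq_nonneg _)
    linarith [sq_nonneg (u x), sq_nonneg (n x), sq_nonneg (φ1 x)]
  exact static_sum_alg hk hγ0 hθ0 hθ1 p1 p2 hS (le_trans (by positivity) hb) rfl
    (div_nonneg (by linarith) hR.le)
    (static_e1 hk hR hγ0 hγ1 hθ1 hc hn hu hcφ hcφ1 hP hQ hnθ hPn hQ0 hQ1 hτ)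
    (static_d1 hk hR hθ1 hck hn hu hcφ hwn hnθ hw hA hA0 hS hf0)
    (static_d2 hk hR hθ0 hθ1 hn hu hwn hnθ hφ hw h1 h2 hA hA0 hS hf0 hf1 t1 t2 hb hb')
    (static_d34 hR hθ0 hθ1 hn hu hnθ hB hB0)
    (static_d5 hR hθ1 hck hn hu hnθ hZ hZ0 hS)



def AF (R : ℝ) (f : ℝ → ℝ) (x : ℝ) : ℝ := Real.exp (-x) * ∫ z in (-R)..x, Real.exp z * f z

lemma AF_deriv (R : ℝ) {f : ℝ → ℝ} (hf : Continuous f) (x : ℝ) :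
    HasDerivAt (AF R f) (f x - AF R f x) x := by
  have hc : Continuous fun z => Real.exp z * f z := by fun_prop
  have h1 := intervalIntegral.integral_hasDerivAt_right (a := -R) (b := x)
    (hc.intervalIntegrable _ _) (hc.stronglyMeasurableAtFilter _ _) hc.continuousAt
  have h2 : HasDerivAt (fun x : ℝ => Real.exp (-x)) (-Real.exp (-x)) x := by
    refine ((hasDerivAt_id' x).fun_neg.exp).congr_deriv ?_
    ring
  refine (h2.fun_mul h1).congr_deriv ?_
  unfold AF
  have e : Real.exp (-x) * Real.exp x = 1 := by rw [← Real.exp_add]; simp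
  linear_combination f x * e

lemma AF_zero (R : ℝ) (f : ℝ → ℝ) : AF R f (-R) = 0 := by simp [AF]

lemma AF_cont (R : ℝ) {f : ℝ → ℝ} (hf : Continuous f) : Continuous (AF R f) :=
  aux_cont_of_deriv (AF_deriv R hf)

lemma AF_lin (R α β : ℝ) {f g : ℝ → ℝ} (hf : Continuous f) (hg : Continuous g) (x : ℝ) :
    AF R (fun x => α * f x + β * g x) x = α * AF R f x + β * AF R g x := by
  unfold AF
  have : ∀ z, Real.exp z * (α * f z + β * g z) = α * (Real.exp z * f z) + β * (Real.exp z * g z) :=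
    fun z => by ring
  simp only [this]
  rw [aux_lin2 _ _ (by fun_prop) (by fun_prop)]
  ring

lemma chiF_end (R : ℝ) (hR : 0 < R) : chiF R (-R) = 0 ∧ chiF R R = 0 := by
  constructor <;> simp [chiF, neg_div, div_self hR.ne']

lemma hF_deriv (R x : ℝ) (hR : 0 < R) :
    HasDerivAt (fun x => x * chiF R x) (hDer R x) x := by
  refine ((hasDerivAt_id' x).fun_mul (chiF_deriv R x)).congr_deriv ?_
  unfold chiF chiD hDer
  field_simp; ring

lemma dyn_mom {R c : ℝ} (hR : 0 < R) {n u φ φ1 Pn nx ux wx nt ut : ℝ → ℝ}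
    (hn : ∀ x, HasDerivAt n (nx x) x) (hu : ∀ x, HasDerivAt u (ux x) x)
    (hP : ∀ x, HasDerivAt Pn (n x * wx x) x)
    (h1 : ∀ x, HasDerivAt φ (φ1 x) x) (h2 : ∀ x, HasDerivAt φ1 (qfun (φ x) - n x) x)
    (hntc : Continuous nt) (hutc : Continuous ut)
    (hnt : ∀ x, nt x = -(nx x * u x + (1 + n x) * ux x) + c * nx x)
    (hut : ∀ x, ut x = -(u x * ux x + wx x + φ1 x) + c * ux x) :
    ∫ x in (-R)..R, x * chiF R x * (nt x * u x + n x * ut x)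
      = ∫ x in (-R)..R, hDer R x * ((1 / 2 + n x) * u x ^ 2 + Pn x
        + (Real.exp (φ x) - 1 - φ x) - 1 / 2 * φ1 x ^ 2 - c * n x * u x) := by
  have cn := aux_cont_of_deriv hn
  have cu := aux_cont_of_deriv hu
  have cP := aux_cont_of_deriv hP
  have cφ := aux_cont_of_deriv h1
  have cφ1 := aux_cont_of_deriv h2
  have hT : ∀ x, HasDerivAt (fun x => (1 / 2 + n x) * u x ^ 2 + Pn x
        + (Real.exp (φ x) - 1 - φ x) - 1 / 2 * φ1 x ^ 2 - c * n x * u x)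
        (-(nt x * u x + n x * ut x)) x := by
    intro x
    refine ((((((hn x).const_add (1/2)).fun_mul ((hu x).fun_pow 2)).fun_add (hP x)).fun_add
      ((((h1 x).exp).sub_const 1).fun_sub (h1 x))).fun_sub
      (((h2 x).fun_pow 2).const_mul (1/2))).fun_sub
      (((hn x).const_mul c).fun_mul (hu x)) |>.congr_deriv ?_
    rw [hnt, hut]
    unfold qfun
    norm_num
    ring
  have hd := fun x => (hF_deriv R x hR).fun_mul (hT x)
  have hi := aux_ftc (a := -R) (b := R) hd (by fun_prop)
  rw [(chiF_end R hR).1, (chiF_end R hR).2] at hi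
  have e : ∀ x, hDer R x * ((1 / 2 + n x) * u x ^ 2 + Pn x
        + (Real.exp (φ x) - 1 - φ x) - 1 / 2 * φ1 x ^ 2 - c * n x * u x)
        + x * chiF R x * (-(nt x * u x + n x * ut x))
      = 1 * (hDer R x * ((1 / 2 + n x) * u x ^ 2 + Pn x
        + (Real.exp (φ x) - 1 - φ x) - 1 / 2 * φ1 x ^ 2 - c * n x * u x))
        + (-1) * (x * chiF R x * ((nt x * u x + n x * ut x))) := fun x => by ring
  simp only [e] at hi
  rw [aux_lin2 _ _ (by fun_prop) (by fun_prop)] at hi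
  linarith

lemma dyn_At {R c : ℝ} (hR : 0 < R) {n u nx ux nt : ℝ → ℝ}
    (hn : ∀ x, HasDerivAt n (nx x) x) (hu : ∀ x, HasDerivAt u (ux x) x)
    (hntc : Continuous nt)
    (hnt : ∀ x, nt x = -(nx x * u x + (1 + n x) * ux x) + c * nx x) (x : ℝ) :
    AF R (fun z => chiF R z * nt z) x
      = -(chiF R x * ((1 + n x) * u x)) + c * (chiF R x * n x)
        + AF R (fun z => chiF R z * ((1 + n z) * u z)) x
        - c * AF R (fun z => chiF R z * n z) x
        + AF R (fun z => chiD R z * ((1 + n z) * u z - c * n z)) x := by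
  have cn := aux_cont_of_deriv hn
  have cu := aux_cont_of_deriv hu
  have hG : ∀ x, HasDerivAt (fun x => (1 + n x) * u x - c * n x) (-(nt x)) x := by
    intro x
    refine ((((hn x).const_add 1).fun_mul (hu x)).fun_sub ((hn x).const_mul c)).congr_deriv ?_
    rw [hnt]; ring
  have hd := fun x => ((Real.hasDerivAt_exp x).fun_mul (chiF_deriv R x)).fun_mul (hG x)
  have hi := aux_ftc (a := -R) (b := x) hd (by fun_prop)
  rw [(chiF_end R hR).1] at hi
  have e : ∀ x, (Real.exp x * chiF R x + Real.exp x * chiD R x) * ((1 + n x) * u x - c * n x)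
      + Real.exp x * chiF R x * -nt x
      = 1 * (Real.exp x * (chiF R x * ((1 + n x) * u x)))
        + (-c) * (Real.exp x * (chiF R x * n x))
        + 1 * (Real.exp x * (chiD R x * ((1 + n x) * u x - c * n x)))
        + (-1) * (Real.exp x * (chiF R x * nt x)) := fun x => by ring
  simp only [e] at hi
  rw [aux_lin4 _ _ _ _ (by fun_prop) (by fun_prop) (by fun_prop) (by fun_prop)] at hi
  unfold AF
  have e2 : Real.exp (-x) * Real.exp x = 1 := by rw [← Real.exp_add]; simp
  linear_combination (-Real.exp (-x)) * hi - (chiF R x * ((1 + n x) * u x - c * n x)) * e2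

lemma dyn_J {R c : ℝ} (hR : 0 < R) {n u φ φ1 wn ux wx ut A B Z At : ℝ → ℝ}
    (hn : Continuous n) (hu : ∀ x, HasDerivAt u (ux x) x)
    (hwn : ∀ x, HasDerivAt wn (wx x) x)
    (h1 : ∀ x, HasDerivAt φ (φ1 x) x)
    (hutc : Continuous ut)
    (hut : ∀ x, ut x = -(u x * ux x + wx x + φ1 x) + c * ux x)
    (hA : ∀ x, HasDerivAt A (chiF R x * n x - A x) x) (hB : Continuous B) (hZ : Continuous Z)
    (hAt : ∀ x, At x = -(chiF R x * ((1 + n x) * u x)) + c * (chiF R x * n x)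
        + B x - c * A x + Z x) :
    ∫ x in (-R)..R, chiF R x * (ut x * A x + u x * At x)
      = (∫ x in (-R)..R, chiD R x * A x * (u x ^ 2 / 2 + wn x + φ x - c * u x))
    + (∫ x in (-R)..R, chiF R x * (chiF R x * n x - A x) * (u x ^ 2 / 2 + wn x + φ x))
    + (∫ x in (-R)..R, (-(chiF R x * u x * (chiF R x * ((1 + n x) * u x)))
        + chiF R x * u x * B x))
    + (∫ x in (-R)..R, chiF R x * u x * Z x) := by
  have cu := aux_cont_of_deriv hu
  have cw := aux_cont_of_deriv hwn
  have cφ := aux_cont_of_deriv h1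
  have cA := aux_cont_of_deriv hA
  have hF : ∀ x, HasDerivAt (fun x => u x ^ 2 / 2 + wn x + φ x - c * u x) (-(ut x)) x := by
    intro x
    refine ((((((hu x).fun_pow 2).div_const 2).fun_add (hwn x)).fun_add (h1 x)).fun_sub
      ((hu x).const_mul c)).congr_deriv ?_
    rw [hut]; norm_num; ring
  have hd := fun x => ((chiF_deriv R x).fun_mul (hA x)).fun_mul (hF x)
  have hi := aux_ftc (a := -R) (b := R) hd (by fun_prop)
  rw [(chiF_end R hR).1, (chiF_end R hR).2] at hi
  have e : ∀ x, chiF R x * (ut x * A x + u x * At x) =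
    (-1) * ((chiD R x * A x + chiF R x * (chiF R x * n x - A x))
      * (u x ^ 2 / 2 + wn x + φ x - c * u x) + chiF R x * A x * -ut x)
    + 1 * (1 * (chiD R x * A x * (u x ^ 2 / 2 + wn x + φ x - c * u x)) +
     1 * (chiF R x * (chiF R x * n x - A x) * (u x ^ 2 / 2 + wn x + φ x)) +
     1 * (-(chiF R x * u x * (chiF R x * ((1 + n x) * u x)))
        + chiF R x * u x * B x) +
     1 * (chiF R x * u x * Z x)) := by
    intro x
    rw [hAt]; ring
  simp only [e]
  rw [aux_lin2 _ _ (by fun_prop) (by fun_prop),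
    aux_lin4 _ _ _ _ (by fun_prop) (by fun_prop) (by fun_prop) (by fun_prop), hi]
  ring

lemma AF_joint (R : ℝ) {f : ℝ → ℝ → ℝ} (hf : Continuous (Function.uncurry f)) :
    Continuous (Function.uncurry fun t x => AF R (f t) x) := by
  have h : Continuous (fun q : ℝ × ℝ => Real.exp (-q.2) * ∫ z in (-R)..q.2, Real.exp z * f q.1 z) := by
    have h1 := intervalIntegral.continuous_parametric_intervalIntegral_of_continuous
      (μ := volume) (a₀ := -R)
      (f := fun (q : ℝ × ℝ) z => Real.exp z * f q.1 z) (s := fun q => q.2)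
      (by
        have : Continuous fun r : (ℝ × ℝ) × ℝ => Function.uncurry f (r.1.1, r.2) :=
          hf.comp (by fun_prop)
        exact (by fun_prop : Continuous fun r : (ℝ × ℝ) × ℝ => Real.exp r.2).mul this)
      continuous_snd
    exact (by fun_prop : Continuous fun q : ℝ × ℝ => Real.exp (-q.2)).mul h1
  exact h

lemma AF_time (R t x : ℝ) {f g : ℝ → ℝ → ℝ} (hf : ∀ s, Continuous (f s))
    (hg : Continuous (Function.uncurry g))
    (hd : ∀ s x, HasDerivAt (fun r => f r x) (g s x) s) :
    HasDerivAt (fun s => AF R (f s) x) (AF R (g t) x) t := by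
  unfold AF
  apply HasDerivAt.const_mul
  apply aux_param_deriv (fun s z => Real.exp z * f s z) (fun s z => Real.exp z * g s z)
  · intro s; have := hf s; fun_prop
  · exact (by fun_prop : Continuous fun q : ℝ × ℝ => Real.exp q.2).mul hg
  · intro s x; exact (hd s x).const_mul _

def IF (R κ : ℝ) (n u : ℝ → ℝ) : ℝ :=
  (∫ x in (-R)..R, x * chiF R x * (n x * u x))
   + κ * ∫ x in (-R)..R, chiF R x * (u x * AF R (fun z => chiF R z * n z) x)

set_option maxHeartbeats 1000000 in
lemma dyn_main {R κ : ℝ} (hR : 0 < R) {c : ℝ → ℝ} {n u φ φ1 wn Pn nx ux wx nt ut : ℝ → ℝ → ℝ}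
    (hn : ∀ t x, HasDerivAt (n t) (nx t x) x) (hu : ∀ t x, HasDerivAt (u t) (ux t x) x)
    (hnc : Continuous (Function.uncurry n)) (huc : Continuous (Function.uncurry u))
    (hntd : ∀ t x, HasDerivAt (fun s => n s x) (nt t x) t)
    (hutd : ∀ t x, HasDerivAt (fun s => u s x) (ut t x) t)
    (hntc : Continuous (Function.uncurry nt)) (hutc : Continuous (Function.uncurry ut))
    (hP : ∀ t x, HasDerivAt (Pn t) (n t x * wx t x) x)
    (hwn : ∀ t x, HasDerivAt (wn t) (wx t x) x)
    (h1 : ∀ t x, HasDerivAt (φ t) (φ1 t x) x)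
    (h2 : ∀ t x, HasDerivAt (φ1 t) (qfun (φ t x) - n t x) x)
    (hnt : ∀ t x, nt t x = -(nx t x * u t x + (1 + n t x) * ux t x) + c t * nx t x)
    (hut : ∀ t x, ut t x = -(u t x * ux t x + wx t x + φ1 t x) + c t * ux t x) (t : ℝ) :
    HasDerivAt (fun s => IF R κ (n s) (u s))
      (exprF R κ (c t) (n t) (u t) (φ t) (φ1 t) (wn t) (Pn t)
        (fun x => Real.exp (φ t x) - 1 - φ t x)
        (AF R (fun z => chiF R z * n t z))
        (AF R (fun z => chiF R z * ((1 + n t z) * u t z)))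
        (AF R (fun z => chiD R z * ((1 + n t z) * u t z - c t * n t z)))) t := by
  have sl : ∀ {f : ℝ → ℝ → ℝ}, Continuous (Function.uncurry f) → ∀ s, Continuous (f s) := by
    intro f hf s
    have : f s = Function.uncurry f ∘ fun x => (s, x) := rfl
    rw [this]; fun_prop
  have cn : ∀ s, Continuous (n s) := sl hnc
  have cu : ∀ s, Continuous (u s) := sl huc
  have cnt : ∀ s, Continuous (nt s) := sl hntc
  have cut : ∀ s, Continuous (ut s) := sl hutc
  have jχ : Continuous fun q : ℝ × ℝ => chiF R q.2 := (chiF_cont R).comp continuous_snd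
  have hAc : Continuous (Function.uncurry fun t x => AF R (fun z => chiF R z * n t z) x) :=
    AF_joint R (jχ.mul hnc)
  have hAtc : Continuous (Function.uncurry fun t x => AF R (fun z => chiF R z * nt t z) x) :=
    AF_joint R (jχ.mul hntc)
  have hAd : ∀ s x, HasDerivAt (fun r => AF R (fun z => chiF R z * n r z) x)
      (AF R (fun z => chiF R z * nt s z) x) s := by
    intro s x
    apply AF_time (f := fun r z => chiF R z * n r z) (g := fun r z => chiF R z * nt r z)
    · intro s; have := cn s; fun_prop
    · exact jχ.mul hntc
    · intro s x; exact (hntd s x).const_mul _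
  have d1 := aux_param_deriv (fun s x => x * chiF R x * (n s x * u s x))
    (fun s x => x * chiF R x * (nt s x * u s x + n s x * ut s x)) (-R) R t
    (fun s => by have := cn s; have := cu s; fun_prop)
    ((continuous_snd.mul jχ).mul ((hntc.mul huc).add (hnc.mul hutc)))
    (fun s x => ((hntd s x).fun_mul (hutd s x)).const_mul _)
  have d2 := aux_param_deriv (fun s x => chiF R x * (u s x * AF R (fun z => chiF R z * n s z) x))
    (fun s x => chiF R x * (ut s x * AF R (fun z => chiF R z * n s z) x
      + u s x * AF R (fun z => chiF R z * nt s z) x)) (-R) R t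
    (fun s => by have := cu s; have := sl hAc s; fun_prop)
    (jχ.mul ((hutc.mul hAc).add (huc.mul hAtc)))
    (fun s x => ((hutd s x).fun_mul (hAd s x)).const_mul _)
  have hcn := cn t
  have hcu := cu t
  rw [dyn_mom hR (hn t) (hu t) (hP t) (h1 t) (h2 t) (cnt t) (cut t)
    (hnt t) (hut t)] at d1
  rw [dyn_J hR (cn t) (hu t) (hwn t) (h1 t) (cut t) (hut t) (AF_deriv R (by fun_prop))
    (AF_cont R (by fun_prop)) (AF_cont R (by fun_prop))
    (dyn_At hR (hn t) (hu t) (cnt t) (hnt t))] at d2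
  exact d1.fun_add (d2.const_mul κ)



def zF (R x : ℝ) : ℝ := (16 + x ^ 2) / (R ^ 2 + x ^ 2)
def zD (R x : ℝ) : ℝ := 2 * x * (R ^ 2 - 16) / (R ^ 2 + x ^ 2) ^ 2

lemma zden {R : ℝ} (hR : 4 ≤ R) (x : ℝ) : 0 < R ^ 2 + x ^ 2 := by
  have := sq_nonneg x
  have : 0 < R ^ 2 := by positivity
  linarith

lemma zF_deriv {R : ℝ} (hR : 4 ≤ R) (x : ℝ) : HasDerivAt (zF R) (zD R x) x := by
  have h := (zden hR x).ne'
  have a : HasDerivAt (fun x : ℝ => 16 + x ^ 2) (2 * x) x := by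
    refine (((hasDerivAt_id' x).fun_pow 2).const_add 16).congr_deriv ?_
    norm_num
  have b : HasDerivAt (fun x : ℝ => R ^ 2 + x ^ 2) (2 * x) x := by
    refine (((hasDerivAt_id' x).fun_pow 2).const_add (R ^ 2)).congr_deriv ?_
    norm_num
  refine (a.fun_div b h).congr_deriv ?_
  unfold zD
  congr 1; ring

lemma zD_cont {R : ℝ} (hR : 4 ≤ R) : Continuous (zD R) := by
  unfold zD
  exact Continuous.div (by fun_prop) (by fun_prop) fun x => (pow_pos (zden hR x) 2).ne'

lemma zF_cont {R : ℝ} (hR : 4 ≤ R) : Continuous (zF R) := aux_cont_of_deriv (zF_deriv hR)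

lemma zF_nonneg {R : ℝ} (hR : 4 ≤ R) (x : ℝ) : 0 ≤ zF R x :=
  div_nonneg (by positivity) (zden hR x).le

lemma zF_le {R : ℝ} (hR : 4 ≤ R) (x : ℝ) : zF R x ≤ 1 := by
  unfold zF
  rw [div_le_one (zden hR x)]
  nlinarith

lemma zD_le {R : ℝ} (hR : 4 ≤ R) (x : ℝ) : |zD R x| ≤ zF R x / 4 := by
  have h := zden hR x
  unfold zF zD
  rw [abs_div, abs_of_pos (pow_pos h 2), abs_mul, abs_mul, div_div,
    div_le_div_iff₀ (pow_pos h 2) (by positivity), abs_of_nonneg (by nlinarith : 0 ≤ R ^ 2 - 16),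
    abs_of_pos (by norm_num : (0:ℝ) < 2)]
  have h1 : 8 * |x| ≤ 16 + x ^ 2 := by rw [← sq_abs x]; nlinarith [sq_nonneg (|x| - 4)]
  have h2 : R ^ 2 - 16 ≤ R ^ 2 + x ^ 2 := by nlinarith [sq_nonneg x]
  have h3 : 8 * |x| * (R ^ 2 - 16) ≤ (16 + x ^ 2) * (R ^ 2 + x ^ 2) :=
    mul_le_mul h1 h2 (by nlinarith) (by positivity)
  have h4 := mul_le_mul_of_nonneg_right h3 h.le
  linarith

lemma zF_in {R x : ℝ} (hR : 4 ≤ R) (hx : x ∈ Icc (-R) R) : (x / R) ^ 2 ≤ 2 * zF R x := by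
  have h := zden hR x
  have hR2 : 0 < R ^ 2 := by positivity
  have hx2 : x ^ 2 ≤ R ^ 2 := by
    nlinarith [mul_nonneg (sub_nonneg.2 hx.2) (by linarith [hx.1] : 0 ≤ x + R)]
  unfold zF
  rw [div_pow, ← mul_div_assoc, div_le_div_iff₀ hR2 h]
  nlinarith [sq_nonneg x]

lemma zF_out {R x : ℝ} (hR : 4 ≤ R) (hx : R ≤ |x|) : 1 ≤ 2 * zF R x := by
  have h := zden hR x
  have hx2 : R ^ 2 ≤ x ^ 2 := by
    rw [← sq_abs x]; exact pow_le_pow_left₀ (by linarith) hx 2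
  unfold zF
  rw [← mul_div_assoc, one_le_div h]
  linarith

lemma zF_near {R R0 x : ℝ} (hR : 4 ≤ R) (hx : |x| ≤ R0) : zF R x ≤ (16 + R0 ^ 2) / R ^ 2 := by
  have hx2 : x ^ 2 ≤ R0 ^ 2 := by
    rw [← sq_abs x]; exact pow_le_pow_left₀ (abs_nonneg _) hx 2
  unfold zF
  apply div_le_div₀ (by positivity) (by linarith) (by positivity)
  nlinarith [sq_nonneg x]

lemma aux_ii_int {a b : ℝ} (hab : a ≤ b) {f g : ℝ → ℝ} (hf : Continuous f) (hg : Integrable g)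
    (hg0 : ∀ x, 0 ≤ g x) (h : ∀ x ∈ Icc a b, f x ≤ g x) :
    ∫ x in a..b, f x ≤ ∫ x, g x := by
  have h1 : ∫ x in a..b, f x ≤ ∫ x in a..b, g x :=
    intervalIntegral.integral_mono_on hab (hf.intervalIntegrable _ _) hg.intervalIntegrable h
  refine h1.trans ?_
  rw [intervalIntegral.integral_of_le hab]
  exact setIntegral_le_integral hg (Eventually.of_forall hg0)

/-! boundary values -/
lemma aux_bv_left {f f' : ℝ → ℝ} {a : ℝ} (h : ∀ x, HasDerivAt f (f' x) x) (hc : Continuous f') :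
    f a ^ 2 ≤ ∫ x in (a - 1)..a, (2 * f x ^ 2 + f' x ^ 2) := by
  have cf := aux_cont_of_deriv h
  have hd : ∀ x, HasDerivAt (fun x => (x - (a - 1)) * f x ^ 2)
      (f x ^ 2 + (x - (a - 1)) * (2 * f x * f' x)) x := by
    intro x
    refine (((hasDerivAt_id' x).sub_const (a - 1)).fun_mul ((h x).fun_pow 2)).congr_deriv ?_
    norm_num
  have hi := aux_ftc (a := a - 1) (b := a) hd (by fun_prop)
  have h2 : ∫ x in (a - 1)..a, (f x ^ 2 + (x - (a - 1)) * (2 * f x * f' x))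
      ≤ ∫ x in (a - 1)..a, (2 * f x ^ 2 + f' x ^ 2) := by
    apply aux_ii_le (by linarith) (by fun_prop) (by fun_prop)
    intro x hx
    have h0 : 0 ≤ x - (a - 1) := by linarith [hx.1]
    have h1 : x - (a - 1) ≤ 1 := by linarith [hx.2]
    have h3 : 2 * f x * f' x ≤ f x ^ 2 + f' x ^ 2 := by nlinarith [sq_nonneg (f x - f' x)]
    have h4 := mul_le_mul_of_nonneg_left h3 h0
    have h5 : (x - (a - 1)) * (f x ^ 2 + f' x ^ 2) ≤ 1 * (f x ^ 2 + f' x ^ 2) :=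
      mul_le_mul_of_nonneg_right h1 (by positivity)
    linarith
  rw [hi] at h2
  linarith

lemma aux_bv_right {f f' : ℝ → ℝ} {a : ℝ} (h : ∀ x, HasDerivAt f (f' x) x) (hc : Continuous f') :
    f a ^ 2 ≤ ∫ x in a..(a + 1), (2 * f x ^ 2 + f' x ^ 2) := by
  have cf := aux_cont_of_deriv h
  have hd : ∀ x, HasDerivAt (fun x => (x - (a + 1)) * f x ^ 2)
      (f x ^ 2 + (x - (a + 1)) * (2 * f x * f' x)) x := by
    intro x
    refine (((hasDerivAt_id' x).sub_const (a + 1)).fun_mul ((h x).fun_pow 2)).congr_deriv ?_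
    norm_num
  have hi := aux_ftc (a := a) (b := a + 1) hd (by fun_prop)
  have h2 : ∫ x in a..(a + 1), (f x ^ 2 + (x - (a + 1)) * (2 * f x * f' x))
      ≤ ∫ x in a..(a + 1), (2 * f x ^ 2 + f' x ^ 2) := by
    apply aux_ii_le (by linarith) (by fun_prop) (by fun_prop)
    intro x hx
    have h0 : 0 ≤ (a + 1) - x := by linarith [hx.2]
    have h1 : (a + 1) - x ≤ 1 := by linarith [hx.1]
    have h3 : -(2 * f x * f' x) ≤ f x ^ 2 + f' x ^ 2 := by nlinarith [sq_nonneg (f x + f' x)]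
    have h4 := mul_le_mul_of_nonneg_left h3 h0
    have h5 : ((a + 1) - x) * (f x ^ 2 + f' x ^ 2) ≤ 1 * (f x ^ 2 + f' x ^ 2) :=
      mul_le_mul_of_nonneg_right h1 (by positivity)
    linarith
  rw [hi] at h2
  linarith

lemma aux_f2_alg {f q n : ℝ} (hf : |f| ≤ 1 / 4) (hq : |q - f| ≤ f ^ 2) :
    (q - n) ^ 2 ≤ 4 * f ^ 2 + 2 * n ^ 2 := by
  have h1 : (q - f) ^ 2 ≤ (1/4) ^ 2 * f ^ 2 := by
    have a := pow_le_pow_left₀ (abs_nonneg _) hq 2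
    rw [sq_abs] at a
    have b := pow_le_pow_left₀ (abs_nonneg _) hf 2
    rw [sq_abs] at b
    have c := mul_le_mul_of_nonneg_right b (sq_nonneg f)
    linarith
  have h2 : q ^ 2 ≤ 2 * f ^ 2 := by
    nlinarith [sq_nonneg (4 * (q - f) - f)]
  nlinarith [sq_nonneg (q + n)]

lemma slice_bv {R η : ℝ} (hR : 4 ≤ R) {n u φ φ1 : ℝ → ℝ} (hn : Continuous n)
    (hφ : ∀ x, |φ x| ≤ 1 / 4)
    (h1 : ∀ x, HasDerivAt φ (φ1 x) x) (h2 : ∀ x, HasDerivAt φ1 (qfun (φ x) - n x) x)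
    (hi : Integrable fun x => zF R x * (n x ^ 2 + u x ^ 2 + (φ x ^ 2 + φ1 x ^ 2)))
    (hη : ∫ x, zF R x * (n x ^ 2 + u x ^ 2 + (φ x ^ 2 + φ1 x ^ 2)) ≤ 6 * η) :
    φ (-R) ^ 2 + φ1 (-R) ^ 2 ≤ 72 * η ∧ φ R ^ 2 + φ1 R ^ 2 ≤ 72 * η := by
  have cφ := aux_cont_of_deriv h1
  have cφ1 := aux_cont_of_deriv h2
  have cq : Continuous fun x => qfun (φ x) := qfun_cont.comp cφ
  have hi' := hi.const_mul 12
  have hp : ∀ x, 0 ≤ 12 * (zF R x * (n x ^ 2 + u x ^ 2 + (φ x ^ 2 + φ1 x ^ 2))) := fun x =>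
    mul_nonneg (by norm_num) (mul_nonneg (zF_nonneg hR x) (by positivity))
  have hpt : ∀ x, R ≤ |x| → 1 * (2 * φ x ^ 2 + φ1 x ^ 2)
      + 1 * (2 * φ1 x ^ 2 + (qfun (φ x) - n x) ^ 2)
      ≤ 12 * (zF R x * (n x ^ 2 + u x ^ 2 + (φ x ^ 2 + φ1 x ^ 2))) := by
    intro x hx
    have a1 := aux_f2_alg (n := n x) (hφ x) (aux_q_err ((hφ x).trans (by norm_num)))
    have a2 : 1 * (n x ^ 2 + u x ^ 2 + (φ x ^ 2 + φ1 x ^ 2))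
      ≤ 2 * zF R x * (n x ^ 2 + u x ^ 2 + (φ x ^ 2 + φ1 x ^ 2)) :=
      mul_le_mul_of_nonneg_right (zF_out hR hx) (by positivity)
    linarith [sq_nonneg (u x), sq_nonneg (n x), sq_nonneg (φ1 x), sq_nonneg (φ x)]
  have e : ∫ x, 12 * (zF R x * (n x ^ 2 + u x ^ 2 + (φ x ^ 2 + φ1 x ^ 2))) ≤ 72 * η := by
    rw [MeasureTheory.integral_const_mul]; linarith
  constructor
  · have b1 := aux_bv_left (a := -R) h1 cφ1
    have b2 := aux_bv_left (a := -R) h2 (by fun_prop)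
    have b3 := aux_lin2 (a := -R - 1) (b := -R) 1 1
      (f := fun x => 2 * φ x ^ 2 + φ1 x ^ 2)
      (g := fun x => 2 * φ1 x ^ 2 + (qfun (φ x) - n x) ^ 2) (by fun_prop) (by fun_prop)
    have b4 := aux_ii_int (a := -R - 1) (b := -R) (by linarith)
      (f := fun x => 1 * (2 * φ x ^ 2 + φ1 x ^ 2) + 1 * (2 * φ1 x ^ 2 + (qfun (φ x) - n x) ^ 2))
      (by fun_prop) hi' hp
      (fun x hx => hpt x (by rw [abs_of_nonpos] <;> linarith [hx.2]))
    linarith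
  · have b1 := aux_bv_right (a := R) h1 cφ1
    have b2 := aux_bv_right (a := R) h2 (by fun_prop)
    have b3 := aux_lin2 (a := R) (b := R + 1) 1 1
      (f := fun x => 2 * φ x ^ 2 + φ1 x ^ 2)
      (g := fun x => 2 * φ1 x ^ 2 + (qfun (φ x) - n x) ^ 2) (by fun_prop) (by fun_prop)
    have b4 := aux_ii_int (a := R) (b := R + 1) (by linarith)
      (f := fun x => 1 * (2 * φ x ^ 2 + φ1 x ^ 2) + 1 * (2 * φ1 x ^ 2 + (qfun (φ x) - n x) ^ 2))
      (by fun_prop) hi' hp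
      (fun x hx => hpt x (by rw [abs_of_nonneg] <;> linarith [hx.1]))
    linarith

lemma slice_in {R : ℝ} (hR : 4 ≤ R) {f : ℝ → ℝ} (hf : Continuous f) (hf0 : ∀ x, 0 ≤ f x)
    (hi : Integrable f) :
    ∫ x, f x ≤ (∫ x in (-R)..R, f x) + 2 * ∫ x, zF R x * f x := by
  have hz : Integrable fun x => zF R x * f x := by
    refine hi.mono' ((zF_cont hR).mul hf).aestronglyMeasurable (Eventually.of_forall fun x => ?_)
    rw [Real.norm_of_nonneg (mul_nonneg (zF_nonneg hR x) (hf0 x))]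
    have := mul_le_mul_of_nonneg_right (zF_le hR x) (hf0 x)
    linarith
  rw [intervalIntegral.integral_of_le (by linarith), ← MeasureTheory.integral_indicator measurableSet_Ioc,
    ← MeasureTheory.integral_const_mul, ← MeasureTheory.integral_add (hi.indicator measurableSet_Ioc) (hz.const_mul 2)]
  apply integral_mono hi ((hi.indicator measurableSet_Ioc).add (hz.const_mul 2))
  intro x
  have p : 0 ≤ 2 * (zF R x * f x) := mul_nonneg (by norm_num) (mul_nonneg (zF_nonneg hR x) (hf0 x))
  by_cases hx : x ∈ Ioc (-R) R
  · simp only [Pi.add_apply, indicator_of_mem hx]; linarith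
  · simp only [Pi.add_apply, indicator_of_notMem hx]
    have hx' : R ≤ |x| := by
      by_contra hh
      push Not at hh
      have := abs_lt.1 hh
      exact hx ⟨this.1, this.2.le⟩
    have := mul_le_mul_of_nonneg_right (zF_out hR hx') (hf0 x)
    linarith

set_option maxHeartbeats 1000000 in
lemma slice_main {R k γ θ c η : ℝ} {n u φ φ1 wn Pn : ℝ → ℝ} (hk : 0 < k) (hR : 4 ≤ R)
    (hγ0 : 0 ≤ γ) (hγ1 : γ ≤ 1) (hθ0 : 0 < θ) (hθ1 : θ ≤ 1 / 4) (hck : c ^ 2 ≤ k ^ 2)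
    (hc : ∀ x, |c * n x * u x|
      ≤ (1 - γ) * (1 / 2 * (k / (1 + k)) * u x ^ 2 + 1 / 2 * k * n x ^ 2))
    (hn : Continuous n) (hu : Continuous u) (hwn : Continuous wn)
    (hP : Continuous Pn)
    (hnθ : ∀ x, |n x| ≤ θ) (hφ : ∀ x, |φ x| ≤ θ) (hw : ∀ x, |wn x - k * n x| ≤ θ * |n x|)
    (hPn : ∀ x, |Pn x - k / 2 * n x ^ 2| ≤ θ * n x ^ 2)
    (h1 : ∀ x, HasDerivAt φ (φ1 x) x) (h2 : ∀ x, HasDerivAt φ1 (qfun (φ x) - n x) x)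
    (hi : Integrable fun x => n x ^ 2 + u x ^ 2)
    (hη : ∫ x, zF R x * (n x ^ 2 + u x ^ 2) ≤ η) :
    γ * (1 / 2 * (k / (1 + k))) * ((∫ x, (n x ^ 2 + u x ^ 2)) - 2 * η)
      - (100 + 6 * k + 20 * k ^ 2) * (θ * (∫ x, (n x ^ 2 + u x ^ 2))
        + 72 * η / θ + (∫ x, (n x ^ 2 + u x ^ 2)) / R)
      ≤ exprF R (1 / (2 * (1 + k))) c n u φ φ1 wn Pn (fun x => Real.exp (φ x) - 1 - φ x)
        (AF R (fun z => chiF R z * n z))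
        (AF R (fun z => chiF R z * ((1 + n z) * u z)))
        (AF R (fun z => chiD R z * ((1 + n z) * u z - c * n z))) := by
  have hR0 : 0 < R := by linarith
  have hRR : -R ≤ R := by linarith
  have cφ := aux_cont_of_deriv h1
  have cφ1 := aux_cont_of_deriv h2
  have cz := zF_cont hR
  have hφ4 : ∀ x, |φ x| ≤ 1 / 4 := fun x => (hφ x).trans hθ1
  have hin : Integrable fun x => n x ^ 2 := by
    refine hi.mono' (by fun_prop) (Eventually.of_forall fun x => ?_)
    rw [Real.norm_of_nonneg (sq_nonneg _)]; linarith [sq_nonneg (u x)]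
  have dom : ∀ {f : ℝ → ℝ}, Continuous f → (∀ x, 0 ≤ f x) → Integrable f →
      Integrable fun x => zF R x * f x := by
    intro f hf hf0 hi
    refine hi.mono' ((zF_cont hR).mul hf).aestronglyMeasurable (Eventually.of_forall fun x => ?_)
    rw [Real.norm_of_nonneg (mul_nonneg (zF_nonneg hR x) (hf0 x))]
    have := mul_le_mul_of_nonneg_right (zF_le hR x) (hf0 x)
    linarith
  have hzn := dom (by fun_prop) (fun x => sq_nonneg (n x)) hin
  have hznu := dom (f := fun x => n x ^ 2 + u x ^ 2) (by fun_prop) (fun x => by positivity) hi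
  obtain ⟨i1, l1⟩ := aux_ell h1 h2 hn hφ4 (ζ := fun _ => 1) (ζ1 := fun _ => 0)
    (fun x => hasDerivAt_const x 1) continuous_const (fun _ => by norm_num) (fun _ => le_rfl)
    (fun _ => by norm_num) (by simpa using hin)
  obtain ⟨i2, l2⟩ := aux_ell h1 h2 hn hφ4 (zF_deriv hR) (zD_cont hR) (zF_nonneg hR)
    (zF_le hR) (zD_le hR) hzn
  simp only [one_mul] at i1 l1
  set S := ∫ x, (n x ^ 2 + u x ^ 2) with hS
  have lS : ∫ x, n x ^ 2 ≤ S := by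
    apply integral_mono hin hi
    intro x
    have := sq_nonneg (u x)
    simp only; linarith
  have lη : ∫ x, zF R x * n x ^ 2 ≤ η := by
    refine le_trans (integral_mono hzn hznu fun x => ?_) hη
    exact mul_le_mul_of_nonneg_left (by linarith [sq_nonneg (u x)]) (zF_nonneg hR x)
  have hsum : (fun x => zF R x * (n x ^ 2 + u x ^ 2 + (φ x ^ 2 + φ1 x ^ 2)))
      = fun x => zF R x * (n x ^ 2 + u x ^ 2) + zF R x * (φ x ^ 2 + φ1 x ^ 2) := by
    ext x; ring
  have i3 : Integrable fun x => zF R x * (n x ^ 2 + u x ^ 2 + (φ x ^ 2 + φ1 x ^ 2)) := by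
    rw [hsum]; exact hznu.add i2
  have l3 : ∫ x, zF R x * (n x ^ 2 + u x ^ 2 + (φ x ^ 2 + φ1 x ^ 2)) ≤ 6 * η := by
    rw [hsum, MeasureTheory.integral_add hznu i2]; linarith
  have hη0 : 0 ≤ η := le_trans (integral_nonneg fun x =>
    mul_nonneg (zF_nonneg hR x) (by positivity)) hη
  obtain ⟨bl, br⟩ := slice_bv hR hn hφ4 h1 h2 i3 l3
  have eab : (∫ x in (-R)..R, u x ^ 2) + (∫ x in (-R)..R, n x ^ 2)
      = ∫ x in (-R)..R, (n x ^ 2 + u x ^ 2) := by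
    have := aux_lin2 (a := -R) (b := R) 1 1 (f := fun x => n x ^ 2) (g := fun x => u x ^ 2)
      (by fun_prop) (by fun_prop)
    simp only [one_mul] at this
    linarith
  have habS : (∫ x in (-R)..R, u x ^ 2) + (∫ x in (-R)..R, n x ^ 2) ≤ S := by
    rw [eab]
    exact aux_ii_int hRR (by fun_prop) hi (fun x => by positivity) fun x _ => le_rfl
  have hf0 : ∫ x in (-R)..R, φ x ^ 2 ≤ 5 * S := by
    have := aux_ii_int hRR (f := fun x => φ x ^ 2) (by fun_prop) i1 (fun x => by positivity)
      fun x _ => by linarith [sq_nonneg (φ1 x)]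
    linarith
  have hf1 : ∫ x in (-R)..R, φ1 x ^ 2 ≤ 5 * S := by
    have := aux_ii_int hRR (f := fun x => φ1 x ^ 2) (by fun_prop) i1 (fun x => by positivity)
      fun x _ => by linarith [sq_nonneg (φ x)]
    linarith
  have hτ : ∫ x in (-R)..R, (x / R) ^ 2 * (u x ^ 2 + n x ^ 2 + φ x ^ 2 + φ1 x ^ 2) ≤ 72 * η := by
    have a := aux_ii_int hRR
      (f := fun x => (x / R) ^ 2 * (u x ^ 2 + n x ^ 2 + φ x ^ 2 + φ1 x ^ 2))
      (by fun_prop) (i3.const_mul 2)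
      (fun x => mul_nonneg (by norm_num) (mul_nonneg (zF_nonneg hR x) (by positivity)))
      (fun x hx => by
        have := mul_le_mul_of_nonneg_right (zF_in hR hx)
          (show 0 ≤ u x ^ 2 + n x ^ 2 + φ x ^ 2 + φ1 x ^ 2 by positivity)
        linarith)
    rw [MeasureTheory.integral_const_mul] at a
    linarith
  have hQ : ∀ x, 0 ≤ Real.exp (φ x) - 1 - φ x ∧ Real.exp (φ x) - 1 - φ x ≤ φ x ^ 2 := by
    intro x
    constructor
    · linarith [Real.add_one_le_exp (φ x)]
    · exact (abs_le.1 (aux_q_err ((hφ4 x).trans (by norm_num)))).2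
  have key := static_main (R := R) (S := S) (τ := 72 * η) hk hR0 hγ0 hγ1 hθ0 hθ1 hck hc hn hu hwn hP
    (Qf := fun x => Real.exp (φ x) - 1 - φ x) (by fun_prop) hnθ hφ hw hPn (fun x => (hQ x).1)
    (fun x => (hQ x).2) h1 h2 (AF_deriv R (by fun_prop)) (AF_zero _ _)
    (AF_deriv R (by fun_prop)) (AF_zero _ _) (AF_deriv R (by fun_prop)) (AF_zero _ _)
    habS hf0 hf1 hτ bl br
  refine le_trans ?_ key
  have hlow : S - 2 * η ≤ (∫ x in (-R)..R, u x ^ 2) + (∫ x in (-R)..R, n x ^ 2) := by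
    rw [eab]
    have := slice_in hR (f := fun x => n x ^ 2 + u x ^ 2) (by fun_prop) (fun x => by positivity) hi
    linarith
  have := mul_le_mul_of_nonneg_left hlow
    (show 0 ≤ γ * (1 / 2 * (k / (1 + k))) by positivity)
  linarith



lemma IF_bound {R κ D : ℝ} (hR : 4 ≤ R) (hκ0 : 0 ≤ κ) (hκ : κ ≤ 1) {n u : ℝ → ℝ} (hn : Continuous n)
    (hu : Continuous u) (hi : Integrable fun x => n x ^ 2 + u x ^ 2)
    (hD : ∫ x, (n x ^ 2 + u x ^ 2) ≤ D) : |IF R κ n u| ≤ (R + 1) * D := by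
  have hR0 : 0 < R := by linarith
  have hRR : -R ≤ R := by linarith
  have hab : ∫ x in (-R)..R, (n x ^ 2 + u x ^ 2) ≤ D :=
    (aux_ii_int hRR (by fun_prop) hi (fun x => by positivity) fun x _ => le_rfl).trans hD
  have hD0 : 0 ≤ D := le_trans (integral_nonneg fun x => by positivity) hD
  have cA : Continuous (AF R (fun z => chiF R z * n z)) := AF_cont R (by fun_prop)
  have e1 : |∫ x in (-R)..R, x * chiF R x * (n x * u x)| ≤ R * D := by
    have : |∫ x in (-R)..R, x * chiF R x * (n x * u x)|
        ≤ ∫ x in (-R)..R, R * (n x ^ 2 + u x ^ 2) := by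
      refine (intervalIntegral.abs_integral_le_integral_abs hRR).trans ?_
      apply aux_ii_le hRR (by fun_prop) (by fun_prop)
      intro x hx
      rw [abs_mul, abs_mul, abs_of_nonneg (chiF_nonneg R x)]
      have h1 : |x| * chiF R x ≤ R * 1 :=
        mul_le_mul (abs_le.2 hx) (chiF_le hR0 hx) (chiF_nonneg R x) hR0.le
      have h2 : |n x * u x| ≤ n x ^ 2 + u x ^ 2 := by
        rw [abs_le]; constructor <;> nlinarith [sq_nonneg (n x + u x), sq_nonneg (n x - u x)]
      rw [mul_one] at h1
      exact mul_le_mul h1 h2 (abs_nonneg _) hR0.le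
    rw [intervalIntegral.integral_const_mul] at this
    have := mul_le_mul_of_nonneg_left hab hR0.le
    linarith
  have a2 := (aux_A_facts hR0 (by fun_prop) (AF_deriv R (f := fun z => chiF R z * n z)
    (by fun_prop)) (AF_zero R _)).2.1
  have a3 : ∫ x in (-R)..R, (chiF R x * n x) ^ 2 ≤ ∫ x in (-R)..R, n x ^ 2 := by
    apply aux_ii_le hRR (by fun_prop) (by fun_prop)
    intro x hx
    rw [mul_pow]
    have := chiF_le hR0 hx
    have := chiF_nonneg R x
    have : chiF R x ^ 2 ≤ 1 := by nlinarith
    nlinarith [sq_nonneg (n x)]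
  have e2 : |∫ x in (-R)..R, chiF R x * (u x * AF R (fun z => chiF R z * n z) x)| ≤ D := by
    have : |∫ x in (-R)..R, chiF R x * (u x * AF R (fun z => chiF R z * n z) x)|
        ≤ ∫ x in (-R)..R, (1 * u x ^ 2 + 1 * AF R (fun z => chiF R z * n z) x ^ 2) := by
      refine (intervalIntegral.abs_integral_le_integral_abs hRR).trans ?_
      apply aux_ii_le hRR (by fun_prop) (by fun_prop)
      intro x hx
      rw [abs_mul, abs_of_nonneg (chiF_nonneg R x)]
      set A := AF R (fun z => chiF R z * n z) x
      have h2 : |u x * A| ≤ u x ^ 2 + A ^ 2 := by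
        rw [abs_le]; constructor <;> nlinarith [sq_nonneg (u x + A), sq_nonneg (u x - A)]
      have := mul_le_mul (chiF_le hR0 hx) h2 (abs_nonneg _) zero_le_one
      linarith
    rw [aux_lin2 _ _ (by fun_prop) (by fun_prop)] at this
    have e := aux_lin2 (a := -R) (b := R) 1 1 (f := fun x => n x ^ 2) (g := fun x => u x ^ 2)
      (by fun_prop) (by fun_prop)
    simp only [one_mul] at e this
    linarith
  unfold IF
  refine (abs_add_le _ _).trans ?_
  rw [abs_mul, abs_of_nonneg hκ0]
  have := mul_le_mul hκ e2 (abs_nonneg _) zero_le_one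
  linarith

lemma aux_growth {I I' : ℝ → ℝ} {m D : ℝ} (hm : 0 < m) (hd : ∀ t, HasDerivAt I (I' t) t)
    (h : ∀ t, m ≤ I' t) (hD : ∀ t, |I t| ≤ D) : False := by
  have h1 := mul_sub_le_image_sub_of_le_deriv (f := I) (C := m)
    (fun t => (hd t).differentiableAt) (fun t => by rw [(hd t).deriv]; exact h t)
  have hD0 : 0 ≤ D := (abs_nonneg _).trans (hD 0)
  have h2 := h1 (x := 0) (y := (2 * D + 1) / m) (by positivity)
  rw [sub_zero, mul_div_cancel₀ _ hm.ne'] at h2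
  have h3 := abs_le.1 (hD 0)
  have h4 := abs_le.1 (hD ((2 * D + 1) / m))
  linarith [h3.1, h3.2, h4.1, h4.2]

lemma Rfun_eq (x : ℝ) : Rfun x = x * (Real.exp x - 1) - (Real.exp x - 1 - x) := by
  have h : ∀ s, HasDerivAt (fun s => Real.exp s - s) (qfun s) s := fun s =>
    (Real.hasDerivAt_exp s).fun_sub (hasDerivAt_id' s)
  unfold Rfun
  rw [aux_ftc h qfun_cont]
  unfold qfun
  simp
  ring

lemma Rfun_bd {x : ℝ} (hx : |x| ≤ 1 / 4) : 0 ≤ Rfun x ∧ Rfun x ≤ 2 * x ^ 2 := by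
  rw [Rfun_eq]
  have h := abs_le.1 (aux_q_err (hx.trans (by norm_num)))
  have hb := abs_le.1 hx
  unfold qfun at h
  constructor
  · have h1 := Real.add_one_le_exp (-x)
    have h2 : Real.exp (-x) * Real.exp x = 1 := by rw [← Real.exp_add]; simp
    have h3 := mul_le_mul_of_nonneg_right h1 (Real.exp_pos x).le
    nlinarith
  · have h1 := Real.add_one_le_exp x
    have h3 : |x * (Real.exp x - 1 - x)| ≤ 1 / 4 * x ^ 2 := by
      rw [abs_mul]
      exact mul_le_mul hx (aux_q_err (hx.trans (by norm_num))) (abs_nonneg _) (by norm_num)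
    have := (abs_le.1 h3).2
    nlinarith [sq_nonneg x]

lemma Rfun_cont : Continuous Rfun := by
  have : Rfun = fun x => x * (Real.exp x - 1) - (Real.exp x - 1 - x) := funext Rfun_eq
  rw [this]; fun_prop

lemma energy_alg {k n u W f R' : ℝ} (hk : 0 < k) (hn : |n| ≤ 1 / 4)
    (hW : |W - k / 2 * n ^ 2| ≤ k / 4 * n ^ 2) {g : ℝ} (hR0 : 0 ≤ R') (hR1 : R' ≤ 2 * f ^ 2) :
    min (1 / 4) (k / 4) * (n ^ 2 + u ^ 2) ≤ (1/2) * (1 + n) * u ^ 2 + W + (1/2) * g ^ 2 + R' ∧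
    (1/2) * (1 + n) * u ^ 2 + W + (1/2) * g ^ 2 + R'
      ≤ (1 + k) * (n ^ 2 + u ^ 2) + 2 * (f ^ 2 + g ^ 2) := by
  have b := abs_le.1 hn
  have bw := abs_le.1 hW
  have h1 : (3/4) * u ^ 2 ≤ (1 + n) * u ^ 2 := mul_le_mul_of_nonneg_right (by linarith) (sq_nonneg u)
  have h2 : (1 + n) * u ^ 2 ≤ 2 * u ^ 2 := mul_le_mul_of_nonneg_right (by linarith) (sq_nonneg u)
  have m1 : min (1 / 4) (k / 4) * u ^ 2 ≤ 1 / 4 * u ^ 2 :=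
    mul_le_mul_of_nonneg_right (min_le_left _ _) (sq_nonneg u)
  have m2 : min (1 / 4) (k / 4) * n ^ 2 ≤ k / 4 * n ^ 2 :=
    mul_le_mul_of_nonneg_right (min_le_right _ _) (sq_nonneg n)
  have p := sq_nonneg g
  have p2 := sq_nonneg u
  have p3 := sq_nonneg n
  have p4 : 0 ≤ k * n ^ 2 := by positivity
  have p5 : 0 ≤ k * u ^ 2 := by positivity
  constructor <;> linarith

lemma energy_bounds {w n u φ φ1 : ℝ → ℝ} {k : ℝ} (hk : 0 < k) (hn : Continuous n)
    (hu : Continuous u) (hWc : Continuous fun x => Wfun w (n x)) (hn4 : ∀ x, |n x| ≤ 1 / 4)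
    (hφ4 : ∀ x, |φ x| ≤ 1 / 4)
    (hW : ∀ x, |Wfun w (n x) - k / 2 * n x ^ 2| ≤ k / 4 * n x ^ 2)
    (h1 : ∀ x, HasDerivAt φ (φ1 x) x) (h2 : ∀ x, HasDerivAt φ1 (qfun (φ x) - n x) x)
    (hi : Integrable fun x => n x ^ 2 + u x ^ 2) :
    min (1 / 4) (k / 4) * (∫ x, (n x ^ 2 + u x ^ 2)) ≤ energy w n u φ ∧
    energy w n u φ ≤ (11 + k) * ∫ x, (n x ^ 2 + u x ^ 2) := by
  have cφ := aux_cont_of_deriv h1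
  have cφ1 := aux_cont_of_deriv h2
  have hin : Integrable fun x => n x ^ 2 := by
    refine hi.mono' (by fun_prop) (Eventually.of_forall fun x => ?_)
    rw [Real.norm_of_nonneg (sq_nonneg _)]; linarith [sq_nonneg (u x)]
  obtain ⟨i1, l1⟩ := aux_ell h1 h2 hn hφ4 (ζ := fun _ => 1) (ζ1 := fun _ => 0)
    (fun x => hasDerivAt_const x 1) continuous_const (fun _ => by norm_num) (fun _ => le_rfl)
    (fun _ => by norm_num) (by simpa using hin)
  simp only [one_mul] at i1 l1
  have lS : ∫ x, n x ^ 2 ≤ ∫ x, (n x ^ 2 + u x ^ 2) := by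
    apply integral_mono hin hi
    intro x
    have := sq_nonneg (u x)
    simp only; linarith
  have ee : energyDensity w n u φ
      = fun x => (1/2) * (1 + n x) * u x ^ 2 + Wfun w (n x) + (1/2) * φ1 x ^ 2 + Rfun (φ x) := by
    ext x; unfold energyDensity; rw [(h1 x).deriv]
  have hb := fun x => energy_alg (u := u x) (g := φ1 x) hk (hn4 x) (hW x) (Rfun_bd (hφ4 x)).1 (Rfun_bd (hφ4 x)).2
  have hm : 0 ≤ min (1 / 4) (k / 4) := le_min (by norm_num) (by positivity)
  have cR : Continuous fun x => Rfun (φ x) := Rfun_cont.comp cφ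
  have iu := (hi.const_mul (1 + k)).add (i1.const_mul 2)
  have ie : Integrable (energyDensity w n u φ) := by
    rw [ee]
    refine iu.mono' (by fun_prop) (Eventually.of_forall fun x => ?_)
    rw [Real.norm_of_nonneg (le_trans (by positivity) (hb x).1)]
    exact (hb x).2
  unfold energy
  constructor
  · rw [← MeasureTheory.integral_const_mul]
    apply integral_mono (hi.const_mul _) ie
    intro x
    rw [ee]; exact (hb x).1
  · have : ∫ x, energyDensity w n u φ x
        ≤ ∫ x, ((1 + k) * (n x ^ 2 + u x ^ 2) + 2 * (φ x ^ 2 + φ1 x ^ 2)) := by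
      apply integral_mono ie iu
      intro x
      rw [ee]; exact (hb x).2
    rw [MeasureTheory.integral_add (hi.const_mul _) (i1.const_mul _),
      MeasureTheory.integral_const_mul, MeasureTheory.integral_const_mul] at this
    linarith

lemma W_deriv {p w : ℝ → ℝ} (hw : IsWFor p w) {s : ℝ} (hs : -1 < s) :
    HasDerivAt (Wfun w) (w s) s := by
  have hc : ContinuousOn w (Ioi (-1)) := fun z hz => (hw.2 z hz).continuousAt.continuousWithinAt
  have hsub : uIcc 0 s ⊆ Ioi (-1 : ℝ) := by
    intro z hz
    rcases le_total 0 s with h | h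
    · rw [uIcc_of_le h] at hz; exact lt_of_lt_of_le (by norm_num) hz.1
    · rw [uIcc_of_ge h] at hz; exact lt_of_lt_of_le hs hz.1
  exact intervalIntegral.integral_hasDerivAt_right ((hc.mono hsub).intervalIntegrable)
    (hc.stronglyMeasurableAtFilter isOpen_Ioi s hs) (hw.2 s hs).continuousAt

lemma w_small {p w : ℝ → ℝ} (hw : IsWFor p w) {k θ : ℝ} (hk : k = deriv p 1) (hθ : 0 < θ) :
    ∃ δ : ℝ, 0 < δ ∧ δ ≤ 1 / 2 ∧ ∀ s, |s| ≤ δ → |w s - k * s| ≤ θ * |s| ∧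
      |Wfun w s - k / 2 * s ^ 2| ≤ θ * s ^ 2 ∧
      |(s * w s - Wfun w s) - k / 2 * s ^ 2| ≤ θ * s ^ 2 := by
  have h0 : HasDerivAt w k 0 := by
    have := hw.2 0 (by norm_num)
    simpa [hk] using this
  have h1 := (hasDerivAt_iff_isLittleO_nhds_zero.1 h0).bound (show 0 < θ / 2 by positivity)
  rw [Metric.eventually_nhds_iff] at h1
  obtain ⟨d, hd, h1⟩ := h1
  refine ⟨min (d / 2) (1 / 2), by positivity, min_le_right _ _, ?_⟩
  have hws : ∀ s, |s| ≤ min (d / 2) (1 / 2) → |w s - k * s| ≤ θ / 2 * |s| := by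
    intro s hs
    have hs1 : |s| < d := lt_of_le_of_lt (hs.trans (min_le_left _ _)) (by linarith)
    have := h1 (y := s) (by rwa [Real.dist_eq, sub_zero])
    simpa [hw.1, mul_comm] using this
  intro s hs
  have a1 := hws s hs
  have hs2 : |s| ≤ 1 / 2 := hs.trans (min_le_right _ _)
  have hsub : uIcc 0 s ⊆ Ioi (-1 : ℝ) := by
    intro z hz
    rcases le_total 0 s with h | h
    · rw [uIcc_of_le h] at hz; exact lt_of_lt_of_le (by norm_num) hz.1
    · rw [uIcc_of_ge h] at hz
      have := (abs_le.1 hs2).1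
      exact lt_of_lt_of_le (by linarith) hz.1
  have hc : ContinuousOn w (uIcc 0 s) := fun z hz =>
    (hw.2 z (hsub hz)).continuousAt.continuousWithinAt
  have a2 : |Wfun w s - k / 2 * s ^ 2| ≤ θ / 2 * s ^ 2 := by
    have e : Wfun w s - k / 2 * s ^ 2 = ∫ z in (0:ℝ)..s, (w z - k * z) := by
      rw [intervalIntegral.integral_sub hc.intervalIntegrable
        (Continuous.intervalIntegrable (by fun_prop) _ _), intervalIntegral.integral_const_mul,
        integral_id]
      unfold Wfun; ring
    rw [e]
    have := intervalIntegral.norm_integral_le_of_norm_le_const (a := 0) (b := s)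
      (f := fun z => w z - k * z) (C := θ / 2 * |s|) (by
        intro z hz
        have hz' : |z| ≤ |s| := by
          rcases le_total 0 s with h | h
          · rw [uIoc_of_le h] at hz
            rw [abs_of_pos hz.1, abs_of_nonneg h]; exact hz.2
          · rw [uIoc_of_ge h] at hz
            rw [abs_of_nonpos hz.2, abs_of_nonpos h]; linarith [hz.1]
        refine (hws z (hz'.trans hs)).trans ?_
        exact mul_le_mul_of_nonneg_left hz' (by positivity))
    rw [Real.norm_eq_abs, sub_zero, mul_assoc, abs_mul_abs_self] at this
    rw [pow_two]; exact this
  have p : 0 ≤ θ * |s| := by positivity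
  have p2 : 0 ≤ θ * s ^ 2 := by positivity
  refine ⟨by linarith, by linarith, ?_⟩
  have a3 : |s * (w s - k * s)| ≤ θ / 2 * s ^ 2 := by
    rw [abs_mul, ← sq_abs s]
    have := mul_le_mul_of_nonneg_left a1 (abs_nonneg s)
    linarith
  have b1 := abs_le.1 a2
  have b2 := abs_le.1 a3
  rw [abs_le]; constructor <;> nlinarith

lemma L2_fact {f : ℝ → ℝ} (hf : Continuous f) {C : ℝ≥0∞} (hC : C ≠ ⊤)
    (h : eLpNorm f 2 volume ≤ C) :
    Integrable (fun x => f x ^ 2) ∧ ∫ x, f x ^ 2 ≤ C.toReal ^ 2 := by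
  have hm : MemLp f 2 volume := ⟨hf.aestronglyMeasurable, lt_of_le_of_lt h hC.lt_top⟩
  refine ⟨hm.integrable_sq, ?_⟩
  have h1 := hm.eLpNorm_eq_integral_rpow_norm (by norm_num) (by norm_num)
  have h2 : (eLpNorm f 2 volume).toReal ≤ C.toReal := ENNReal.toReal_mono hC h
  have h3 : 0 ≤ ∫ x, f x ^ 2 := integral_nonneg fun x => sq_nonneg _
  have e : (∫ x, ‖f x‖ ^ (2:ℝ≥0∞).toReal) = ∫ x, f x ^ 2 := by
    congr 1; ext x; simp
  rw [e] at h1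
  rw [h1, ENNReal.toReal_ofReal (by positivity)] at h2
  have h4 := pow_le_pow_left₀ (by positivity) h2 2
  have e2 : ((∫ x, f x ^ 2) ^ ((2:ℝ≥0∞).toReal)⁻¹) ^ 2 = ∫ x, f x ^ 2 := by
    rw [← Real.rpow_natCast, ← Real.rpow_mul h3]; simp
  rwa [e2] at h4

lemma Linf_fact {f : ℝ → ℝ} (hf : Continuous f) {δ : ℝ} (hδ : 0 ≤ δ)
    (h : eLpNorm f ⊤ volume ≤ ENNReal.ofReal δ) (x : ℝ) : |f x| ≤ δ := by
  rw [eLpNorm_exponent_top] at h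
  have h1 : ∀ᵐ y, ‖f y‖ₑ ≤ ENNReal.ofReal δ :=
    (ae_le_eLpNormEssSup (f := f) (μ := volume)).mono fun y hy => hy.trans h
  have h2 : volume {y | δ < |f y|} = 0 := by
    rw [ae_iff] at h1
    refine measure_mono_null ?_ h1
    intro y hy
    simp only [Set.mem_ofPred_eq] at hy ⊢
    rw [Real.enorm_eq_ofReal_abs, ENNReal.ofReal_le_ofReal_iff hδ]
    exact not_le.2 hy
  have h3 : IsOpen {y | δ < |f y|} := isOpen_lt continuous_const (by fun_prop)
  have h4 := h3.eq_empty_of_measure_zero h2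
  by_contra hh
  push Not at hh
  have : x ∈ {y | δ < |f y|} := hh
  rw [h4] at this
  exact this

lemma tail_fact {R R0 y ε : ℝ} (hR : 4 ≤ R) {f : ℝ → ℝ} (hf : Continuous f) (hf0 : ∀ x, 0 ≤ f x)
    (hi : Integrable f) (h : ∫ x in {x : ℝ | R0 < |x - y|}, f x < ε) :
    ∫ x, zF R x * f (x + y) ≤ ε + (16 + R0 ^ 2) / R ^ 2 * ∫ x, f x := by
  have e : ∫ x, zF R x * f (x + y) = ∫ x, zF R (x - y) * f x := by
    rw [← MeasureTheory.integral_add_right_eq_self (fun x => zF R (x - y) * f x) y]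
    simp
  have cz := zF_cont hR
  have hms : MeasurableSet {x : ℝ | R0 < |x - y|} :=
    (isOpen_lt continuous_const (by fun_prop)).measurableSet
  have hz : Integrable fun x => zF R (x - y) * f x := by
    refine hi.mono' (by fun_prop) (Eventually.of_forall fun x => ?_)
    rw [Real.norm_of_nonneg (mul_nonneg (zF_nonneg hR _) (hf0 x))]
    have := mul_le_mul_of_nonneg_right (zF_le hR (x - y)) (hf0 x)
    linarith
  rw [← MeasureTheory.integral_indicator hms] at h
  have ii := hi.indicator hms
  have : ∫ x, zF R (x - y) * f x
      ≤ ∫ x, ({x : ℝ | R0 < |x - y|}.indicator f x + (16 + R0 ^ 2) / R ^ 2 * f x) := by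
    apply integral_mono hz (ii.add (hi.const_mul _))
    intro x
    have p : 0 ≤ (16 + R0 ^ 2) / R ^ 2 * f x := mul_nonneg (by positivity) (hf0 x)
    show zF R (x - y) * f x ≤ {x : ℝ | R0 < |x - y|}.indicator f x + (16 + R0 ^ 2) / R ^ 2 * f x
    by_cases hx : x ∈ {x : ℝ | R0 < |x - y|}
    · rw [indicator_of_mem hx]
      have := mul_le_mul_of_nonneg_right (zF_le hR (x - y)) (hf0 x)
      linarith
    · rw [indicator_of_notMem hx]
      have hx' : |x - y| ≤ R0 := not_lt.1 hx
      have := mul_le_mul_of_nonneg_right (zF_near hR hx') (hf0 x)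
      linarith
  rw [MeasureTheory.integral_add ii (hi.const_mul _), MeasureTheory.integral_const_mul] at this
  rw [e]
  linarith

lemma cbar_fact {k ε c n u : ℝ} (hk : 0 < k) (hε : 0 < ε) (hc : |c| ≤ k / Real.sqrt (1 + k) - ε) :
    c ^ 2 ≤ k ^ 2 ∧ |c * n * u| ≤ (1 - min 1 (ε / (k / Real.sqrt (1 + k)))) *
      (1 / 2 * (k / (1 + k)) * u ^ 2 + 1 / 2 * k * n ^ 2) := by
  set s := Real.sqrt (1 + k) with hs
  have hs2 : s ^ 2 = 1 + k := Real.sq_sqrt (by linarith)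
  have hs0 : 0 < s := Real.sqrt_pos.2 (by linarith)
  have hs1 : 1 ≤ s := by nlinarith
  have hcb : 0 < k / s := by positivity
  have hεc : ε ≤ k / s := by linarith [abs_nonneg c]
  have hg : min 1 (ε / (k / s)) = ε / (k / s) := min_eq_right ((div_le_one hcb).2 hεc)
  rw [hg]
  have hck : |c| ≤ (1 - ε / (k / s)) * (k / s) := by
    rw [sub_mul, div_mul_cancel₀ _ hcb.ne']; linarith
  have hk' : k / s ≤ k := div_le_self hk.le hs1
  have hγ : 0 ≤ 1 - ε / (k / s) := by linarith [(div_le_one hcb).2 hεc]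
  constructor
  · rw [← sq_abs c]
    exact pow_le_pow_left₀ (abs_nonneg _) (by linarith) 2
  · have h1 : k / s * |n * u| ≤ 1 / 2 * (k / (1 + k)) * u ^ 2 + 1 / 2 * k * n ^ 2 := by
      rw [abs_mul, ← sq_abs u, ← sq_abs n, ← hs2]
      have e : 1 / 2 * (k / s ^ 2) * |u| ^ 2 + 1 / 2 * k * |n| ^ 2 - k / s * (|n| * |u|)
        = k / 2 * (|u| / s - |n|) ^ 2 := by field_simp; ring
      have : 0 ≤ k / 2 * (|u| / s - |n|) ^ 2 := by positivity
      linarith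
    rw [mul_assoc, abs_mul]
    calc |c| * |n * u| ≤ (1 - ε / (k / s)) * (k / s) * |n * u| :=
          mul_le_mul_of_nonneg_right hck (abs_nonneg _)
      _ = (1 - ε / (k / s)) * (k / s * |n * u|) := by ring
      _ ≤ _ := mul_le_mul_of_nonneg_left h1 hγ

lemma phi_small {δ f : ℝ} (hδ0 : 0 < δ) (hδ : δ ≤ 1 / 2) (h1 : f ≤ Real.log (1 + δ))
    (h2 : 1 - δ ≤ Real.exp f) : |f| ≤ 2 * δ := by
  rw [abs_le]
  constructor
  · have h3 : Real.exp (-(2 * δ)) ≤ 1 - δ := by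
      have a := Real.add_one_le_exp (2 * δ)
      have b : Real.exp (-(2 * δ)) * Real.exp (2 * δ) = 1 := by rw [← Real.exp_add]; simp
      have c := mul_le_mul_of_nonneg_left a (Real.exp_pos (-(2 * δ))).le
      have d : 1 ≤ (1 - δ) * (2 * δ + 1) := by nlinarith
      by_contra hh
      push Not at hh
      nlinarith
    exact Real.exp_le_exp.1 (h3.trans h2)
  · have := Real.log_le_sub_one_of_pos (show 0 < 1 + δ by linarith)
    linarith



lemma D_x {f : ℝ → ℝ → ℝ} (hf : ContDiff ℝ 1 (Function.uncurry f)) (t x : ℝ) :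
    HasDerivAt (f t) (fderiv ℝ (Function.uncurry f) (t, x) (0, 1)) x := by
  have h := ((hf.differentiable one_ne_zero) (t, x)).hasFDerivAt
  exact h.comp_hasDerivAt x ((hasDerivAt_const x t).prodMk (hasDerivAt_id x))

lemma D_t {f : ℝ → ℝ → ℝ} (hf : ContDiff ℝ 1 (Function.uncurry f)) (t x : ℝ) :
    HasDerivAt (fun s => f s x) (fderiv ℝ (Function.uncurry f) (t, x) (1, 0)) t := by
  have h := ((hf.differentiable one_ne_zero) (t, x)).hasFDerivAt
  exact h.comp_hasDerivAt t ((hasDerivAt_id t).prodMk (hasDerivAt_const t x))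

lemma D_m {f : ℝ → ℝ → ℝ} (hf : ContDiff ℝ 1 (Function.uncurry f)) {y : ℝ → ℝ}
    (hy : ContDiff ℝ 1 y) (t x : ℝ) :
    HasDerivAt (fun s => f s (x + y s))
      (fderiv ℝ (Function.uncurry f) (t, x + y t) (1, deriv y t)) t := by
  have h := ((hf.differentiable one_ne_zero) (t, x + y t)).hasFDerivAt
  have hyd := ((hy.differentiable one_ne_zero) t).hasDerivAt
  exact h.comp_hasDerivAt t ((hasDerivAt_id t).prodMk (hyd.const_add x))

lemma D_lin (L : ℝ × ℝ →L[ℝ] ℝ) (c : ℝ) : L (1, c) = L (1, 0) + c * L (0, 1) := by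
  have : ((1 : ℝ), c) = (1, 0) + c • ((0 : ℝ), (1 : ℝ)) := by simp
  rw [this, map_add, map_smul, smul_eq_mul]

lemma D_cont {f : ℝ → ℝ → ℝ} (hf : ContDiff ℝ 1 (Function.uncurry f)) {y : ℝ → ℝ}
    (hy : ContDiff ℝ 1 y) :
    Continuous (Function.uncurry fun t x =>
      fderiv ℝ (Function.uncurry f) (t, x + y t) (1, deriv y t)) := by
  have h1 := hf.continuous_fderiv one_ne_zero
  have h2 : Continuous (deriv y) := hy.continuous_deriv le_rfl
  have h3 := hy.continuous
  have : (Function.uncurry fun t x =>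
      fderiv ℝ (Function.uncurry f) (t, x + y t) (1, deriv y t)) = fun q : ℝ × ℝ =>
      fderiv ℝ (Function.uncurry f) (q.1, q.2 + y q.1) (1, deriv y q.1) := rfl
  rw [this]
  exact (h1.comp (by fun_prop)).clm_apply (by fun_prop)

lemma D_cont0 {f : ℝ → ℝ → ℝ} (hf : ContDiff ℝ 1 (Function.uncurry f)) :
    Continuous (Function.uncurry fun t x =>
      -fderiv ℝ (Function.uncurry f) (t, x) (1, 0)) := by
  have h1 := hf.continuous_fderiv one_ne_zero
  have : (Function.uncurry fun t x =>
      -fderiv ℝ (Function.uncurry f) (t, x) (1, 0)) = fun q : ℝ × ℝ =>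
      -fderiv ℝ (Function.uncurry f) q (1, 0) := rfl
  rw [this]
  exact ((h1.clm_apply continuous_const)).neg

lemma sl_cont {f : ℝ → ℝ → ℝ} (hf : ContDiff ℝ 1 (Function.uncurry f)) (t : ℝ) :
    Continuous (f t) := by
  have : f t = Function.uncurry f ∘ fun x => (t, x) := rfl
  rw [this]
  have := hf.continuous
  fun_prop

lemma sol_phi {w : ℝ → ℝ} {n u φ : ℝ → ℝ → ℝ} (S : IsEPwSolution w n u φ) :
    (∀ t x, HasDerivAt (φ t) (deriv (φ t) x) x) ∧
    (∀ t x, HasDerivAt (deriv (φ t)) (qfun (φ t x) - n t x) x) := by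
  have h2 : ∀ t, ContDiff ℝ 1 (deriv (φ t)) := fun t => by
    have : ContDiff ℝ (1 + 1) (φ t) := by
      have := S.reg_phi_space t
      norm_num
      exact this
    exact (contDiff_succ_iff_deriv.1 this).2.2
  refine ⟨fun t x => ((S.reg_phi_space t).differentiable two_ne_zero x).hasDerivAt, fun t x => ?_⟩
  have := ((h2 t).differentiable one_ne_zero x).hasDerivAt
  refine this.congr_deriv ?_
  linarith [S.eq_phi t x]

lemma sol_flux {p w : ℝ → ℝ} (hw : IsWFor p w) {n u φ : ℝ → ℝ → ℝ} (S : IsEPwSolution w n u φ)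
    (t x : ℝ) :
    HasDerivAt (fun z => w (n t z)) (deriv p (1 + n t x) / (1 + n t x) *
      fderiv ℝ (Function.uncurry n) (t, x) (0, 1)) x ∧
    HasDerivAt (fun z => u t z ^ 2 / 2 + w (n t z) + φ t z)
      (u t x * fderiv ℝ (Function.uncurry u) (t, x) (0, 1)
       + deriv p (1 + n t x) / (1 + n t x) * fderiv ℝ (Function.uncurry n) (t, x) (0, 1)
       + deriv (φ t) x) x := by
  have hn := D_x S.reg_n t x
  have hu := D_x S.reg_u t x
  have hwn := (hw.2 (n t x) (by linarith [S.dens_pos t x])).comp x hn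
  have h1 := (sol_phi S).1 t x
  refine ⟨hwn, ?_⟩
  have := (((hu.fun_pow 2).div_const 2).fun_add hwn).fun_add h1
  refine this.congr_deriv ?_
  push_cast; ring

lemma sol_eqs {p w : ℝ → ℝ} (hw : IsWFor p w) {n u φ : ℝ → ℝ → ℝ} (S : IsEPwSolution w n u φ)
    (t x : ℝ) :
    fderiv ℝ (Function.uncurry n) (t, x) (1, 0)
      = -(fderiv ℝ (Function.uncurry n) (t, x) (0, 1) * u t x
        + (1 + n t x) * fderiv ℝ (Function.uncurry u) (t, x) (0, 1)) ∧
    fderiv ℝ (Function.uncurry u) (t, x) (1, 0)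
      = -(u t x * fderiv ℝ (Function.uncurry u) (t, x) (0, 1)
       + deriv p (1 + n t x) / (1 + n t x) * fderiv ℝ (Function.uncurry n) (t, x) (0, 1)
       + deriv (φ t) x) := by
  have hn := D_x S.reg_n t x
  have hu := D_x S.reg_u t x
  constructor
  · have h := S.eq_n t x
    rw [(D_t S.reg_n t x).deriv, ((hn.const_add 1).fun_mul hu).deriv] at h
    exact h
  · have h := S.eq_u t x
    rw [(D_t S.reg_u t x).deriv, (sol_flux hw S t x).2.deriv] at h
    exact h

lemma sol_phi_small {p w : ℝ → ℝ} (hw : IsWFor p w) {n u φ : ℝ → ℝ → ℝ}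
    (S : IsEPwSolution w n u φ) {δ G M : ℝ} (hδ0 : 0 < δ) (hδ : δ ≤ 1 / 2)
    (hn : ∀ t x, |n t x| ≤ δ) (hG : ∀ t x, |w (n t x)| ≤ G)
    (hi : ∀ t, Integrable fun x => u t x ^ 2) (hM : ∀ t, ∫ x, u t x ^ 2 ≤ M) (t x : ℝ) :
    |φ t x| ≤ 2 * δ := by
  obtain ⟨h1, h2⟩ := sol_phi S
  refine phi_small hδ0 hδ (aux_upper hδ0.le (h1 t) (h2 t) (fun x => (abs_le.1 (hn t x)).2) x) ?_
  refine aux_lower u (fun t x => w (n t x)) φ (fun t => deriv (φ t)) n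
    (fun t x => -fderiv ℝ (Function.uncurry u) (t, x) (1, 0)) G δ M
    S.reg_u.continuous (D_cont0 S.reg_u) hG h1 h2 (fun t x => (abs_le.1 (hn t x)).1)
    (fun x => (S.reg_phi_time x).continuous) ?_ ?_ ?_ t x
  · intro t x
    rw [neg_neg]; exact D_t S.reg_u t x
  · intro t x
    refine (sol_flux hw S t x).2.congr_deriv ?_
    rw [(sol_eqs hw S t x).2, neg_neg]
  · intro t α β hab
    have := sl_cont S.reg_u t
    exact (aux_ii_int hab (by fun_prop) (hi t) (fun x => sq_nonneg _) fun x _ => le_rfl).trans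
      (hM t)



lemma big_R (A B : ℝ) {a b : ℝ} (ha : 0 < a) (hb : 0 < b) (hA : 0 ≤ A) :
    ∃ R : ℝ, 4 ≤ R ∧ A / R ^ 2 ≤ a ∧ B / R ≤ b := by
  refine ⟨max 4 (max (A / a) (B / b)), le_max_left _ _, ?_, ?_⟩
  · set R := max 4 (max (A / a) (B / b))
    have h4 : 4 ≤ R := le_max_left _ _
    have h : A / a ≤ R := (le_max_left _ _).trans (le_max_right _ _)
    rw [div_le_iff₀ (by positivity)]
    rw [div_le_iff₀ ha] at h
    nlinarith
  · set R := max 4 (max (A / a) (B / b))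
    have h4 : 4 ≤ R := le_max_left _ _
    have h : B / b ≤ R := (le_max_right _ _).trans (le_max_right _ _)
    rw [div_le_iff₀ (by positivity)]
    rw [div_le_iff₀ hb] at h
    linarith

set_option maxHeartbeats 1000000 in
lemma core {p w : ℝ → ℝ} (hw : IsWFor p w) {k ε θ D e0 : ℝ} (hk : 0 < k) (hε : 0 < ε)
    {n u φ : ℝ → ℝ → ℝ} {y : ℝ → ℝ} (S : IsEPwSolution w n u φ) (hy : ContDiff ℝ 1 y)
    (hcomp : L2CompactWith n u y)
    (hc : ∀ t, |deriv y t| ≤ k / Real.sqrt (1 + k) - ε)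
    (hθ0 : 0 < θ) (hθ1 : θ ≤ 1 / 4)
    (hθ2 : (100 + 6 * k + 20 * k ^ 2) * θ
      ≤ min 1 (ε / (k / Real.sqrt (1 + k))) * (1 / 2 * (k / (1 + k))) / 4)
    (hnθ : ∀ t x, |n t x| ≤ θ) (hφ : ∀ t x, |φ t x| ≤ θ)
    (hws : ∀ t x, |w (n t x) - k * n t x| ≤ θ * |n t x|)
    (hPs : ∀ t x, |(n t x * w (n t x) - Wfun w (n t x)) - k / 2 * n t x ^ 2| ≤ θ * n t x ^ 2)
    (hi : ∀ t, Integrable fun x => n t x ^ 2 + u t x ^ 2)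
    (hD : ∀ t, ∫ x, (n t x ^ 2 + u t x ^ 2) ≤ D)
    (he : 0 < e0) (heS : ∀ t, e0 ≤ ∫ x, (n t x ^ 2 + u t x ^ 2)) : False := by
  have hs0 : 0 < Real.sqrt (1 + k) := Real.sqrt_pos.2 (by linarith)
  set γ := min 1 (ε / (k / Real.sqrt (1 + k))) with hγ
  have hγ0 : 0 < γ := lt_min one_pos (by positivity)
  have hγ1 : γ ≤ 1 := min_le_left _ _
  set m := 1 / 2 * (k / (1 + k)) with hm
  have hm0 : 0 < m := by positivity
  set C := 100 + 6 * k + 20 * k ^ 2 with hC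
  have hC0 : 0 < C := by positivity
  have hD0 : 0 ≤ D := (he.le.trans (heS 0)).trans (hD 0)
  -- choice of η
  set B := 2 * (γ * m) + C * 72 / θ with hB
  have hB0 : 0 < B := by positivity
  set η := γ * m * e0 / (4 * B) with hη
  have hη0 : 0 < η := by positivity
  have hBη : B * η = γ * m * e0 / 4 := by rw [hη]; field_simp
  obtain ⟨R0, hR0, hR0'⟩ := hcomp (η / 2) (by positivity)
  obtain ⟨R, hR4, hRa, hRb⟩ := big_R ((16 + R0 ^ 2) * D) C (a := η / 2) (b := γ * m / 4)
    (by positivity) (by positivity) (by positivity)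
  have hRpos : 0 < R := by linarith
  obtain ⟨h1, h2⟩ := sol_phi S
  have cn := sl_cont S.reg_n
  have cu := sl_cont S.reg_u
  have cy := hy.continuous
  have hfl := sol_flux hw S
  have cw : ∀ t, Continuous fun x => w (n t x) := fun t => aux_cont_of_deriv fun x => (hfl t x).1
  have hWd : ∀ t x, HasDerivAt (fun z => Wfun w (n t z))
      (w (n t x) * fderiv ℝ (Function.uncurry n) (t, x) (0, 1)) x := fun t x =>
    (W_deriv hw (by linarith [S.dens_pos t x])).comp x (D_x S.reg_n t x)
  have hPd : ∀ t x, HasDerivAt (fun z => n t z * w (n t z) - Wfun w (n t z))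
      (n t x * (deriv p (1 + n t x) / (1 + n t x)
        * fderiv ℝ (Function.uncurry n) (t, x) (0, 1))) x := fun t x => by
    refine (((D_x S.reg_n t x).fun_mul (hfl t x).1).fun_sub (hWd t x)).congr_deriv ?_
    ring
  have cP : ∀ t, Continuous fun z => n t z * w (n t z) - Wfun w (n t z) := fun t =>
    aux_cont_of_deriv fun x => hPd t x
  have hIntg : ∀ t, ∫ x, (n t (x + y t) ^ 2 + u t (x + y t) ^ 2)
      = ∫ x, (n t x ^ 2 + u t x ^ 2) := fun t =>
    MeasureTheory.integral_add_right_eq_self (fun x => n t x ^ 2 + u t x ^ 2) (y t)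
  have hiN : ∀ t, Integrable fun x => n t (x + y t) ^ 2 + u t (x + y t) ^ 2 := fun t =>
    (hi t).comp_add_right (y t)
  have hκ : (1 : ℝ) / (2 * (1 + k)) ≤ 1 := by
    rw [div_le_one (by positivity)]; linarith
  have hnc : Continuous (Function.uncurry fun t x => n t (x + y t)) := by
    have := S.reg_n.continuous
    exact this.comp (g := Function.uncurry n) (f := fun q : ℝ × ℝ => (q.1, q.2 + y q.1))
      (by fun_prop)
  have huc : Continuous (Function.uncurry fun t x => u t (x + y t)) := by
    have := S.reg_u.continuous
    exact this.comp (g := Function.uncurry u) (f := fun q : ℝ × ℝ => (q.1, q.2 + y q.1))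
      (by fun_prop)
  have hd := dyn_main (R := R) (κ := 1 / (2 * (1 + k))) hRpos (c := fun t => deriv y t)
    (n := fun t x => n t (x + y t)) (u := fun t x => u t (x + y t))
    (φ := fun t x => φ t (x + y t)) (φ1 := fun t x => deriv (φ t) (x + y t))
    (wn := fun t x => w (n t (x + y t)))
    (Pn := fun t x => n t (x + y t) * w (n t (x + y t)) - Wfun w (n t (x + y t)))
    (nx := fun t x => fderiv ℝ (Function.uncurry n) (t, x + y t) (0, 1))
    (ux := fun t x => fderiv ℝ (Function.uncurry u) (t, x + y t) (0, 1))
    (wx := fun t x => deriv p (1 + n t (x + y t)) / (1 + n t (x + y t))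
        * fderiv ℝ (Function.uncurry n) (t, x + y t) (0, 1))
    (nt := fun t x => fderiv ℝ (Function.uncurry n) (t, x + y t) (1, deriv y t))
    (ut := fun t x => fderiv ℝ (Function.uncurry u) (t, x + y t) (1, deriv y t))
    (fun t x => (D_x S.reg_n t (x + y t)).comp_add_const x (y t))
    (fun t x => (D_x S.reg_u t (x + y t)).comp_add_const x (y t))
    hnc huc
    (fun t x => D_m S.reg_n hy t x) (fun t x => D_m S.reg_u hy t x)
    (D_cont S.reg_n hy) (D_cont S.reg_u hy)
    (fun t x => (hPd t (x + y t)).comp_add_const x (y t))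
    (fun t x => (hfl t (x + y t)).1.comp_add_const x (y t))
    (fun t x => (h1 t (x + y t)).comp_add_const x (y t))
    (fun t x => (h2 t (x + y t)).comp_add_const x (y t))
    (fun t x => by rw [D_lin, (sol_eqs hw S t (x + y t)).1])
    (fun t x => by rw [D_lin, (sol_eqs hw S t (x + y t)).2])
  refine aux_growth (m := γ * m * e0 / 4) (D := (R + 1) * D) (by positivity) hd ?_ ?_
  · intro t
    have htail := tail_fact (y := y t) (ε := η / 2) (R0 := R0) hR4
      (f := fun x => n t x ^ 2 + u t x ^ 2) (by have := cn t; have := cu t; fun_prop)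
      (fun x => by positivity) (hi t) (hR0' t)
    have hη' : ∫ x, zF R x * (n t (x + y t) ^ 2 + u t (x + y t) ^ 2) ≤ η := by
      refine htail.trans ?_
      have a1 : (16 + R0 ^ 2) / R ^ 2 * ∫ x, (n t x ^ 2 + u t x ^ 2)
          ≤ (16 + R0 ^ 2) / R ^ 2 * D := mul_le_mul_of_nonneg_left (hD t) (by positivity)
      have a2 : (16 + R0 ^ 2) / R ^ 2 * D = (16 + R0 ^ 2) * D / R ^ 2 := by ring
      linarith
    have hcb := fun x => cbar_fact (n := n t (x + y t)) (u := u t (x + y t)) hk hε (hc t)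
    have key := slice_main (R := R) (k := k) (γ := γ) (θ := θ) (c := deriv y t) (η := η)
      (n := fun x => n t (x + y t)) (u := fun x => u t (x + y t))
      (φ := fun x => φ t (x + y t)) (φ1 := fun x => deriv (φ t) (x + y t))
      (wn := fun x => w (n t (x + y t)))
      (Pn := fun x => n t (x + y t) * w (n t (x + y t)) - Wfun w (n t (x + y t)))
      hk hR4 hγ0.le hγ1 hθ0 hθ1 (hcb 0).1 (fun x => (hcb x).2)
      ((cn t).comp (by fun_prop)) ((cu t).comp (by fun_prop)) ((cw t).comp (by fun_prop))
      ((cP t).comp (f := fun x => x + y t) (by fun_prop))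
      (fun x => hnθ t _) (fun x => hφ t _) (fun x => hws t _) (fun x => hPs t _)
      (fun x => (h1 t (x + y t)).comp_add_const x (y t))
      (fun x => (h2 t (x + y t)).comp_add_const x (y t))
      (hiN t) hη'
    refine le_trans ?_ key
    rw [hIntg t]
    set T := ∫ x, (n t x ^ 2 + u t x ^ 2) with hT
    have hT0 : e0 ≤ T := heS t
    have hT1 : 0 < T := lt_of_lt_of_le he hT0
    have b1 : C * θ * T ≤ γ * m / 4 * T := mul_le_mul_of_nonneg_right hθ2 hT1.le
    have b2 : C / R * T ≤ γ * m / 4 * T := mul_le_mul_of_nonneg_right hRb hT1.le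
    have b3 : γ * m * e0 ≤ γ * m * T := mul_le_mul_of_nonneg_left hT0 (by positivity)
    have e1 : γ * m * (T - 2 * η) - C * (θ * T + 72 * η / θ + T / R)
        = γ * m * T - B * η - C * θ * T - C / R * T := by rw [hB]; ring
    show γ * m * e0 / 4 ≤ γ * m * (T - 2 * η) - C * (θ * T + 72 * η / θ + T / R)
    rw [e1, hBη]
    linarith
  · intro t
    exact IF_bound hR4 (by positivity) hκ ((cn t).comp (by fun_prop)) ((cu t).comp (by fun_prop))
      (hiN t) (by rw [hIntg t]; exact hD t)

lemma int_zero {f : ℝ → ℝ} (hf : Continuous f) (hf0 : ∀ x, 0 ≤ f x) (hi : Integrable f)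
    (h : ∫ x, f x ≤ 0) (x : ℝ) : f x = 0 := by
  have h0 : ∫ x, f x = 0 := le_antisymm h (integral_nonneg hf0)
  have h1 := (integral_eq_zero_iff_of_nonneg hf0 hi).1 h0
  have h2 := (Continuous.ae_eq_iff_eq volume hf continuous_const).1 h1
  exact congrFun h2 x

set_option maxHeartbeats 1000000 in
lemma test_main
    (p w : ℝ → ℝ) (hp : IsPressure p) (hw : IsWFor p w)
    (k : ℝ) (hk : k = deriv p 1)
    (ε : ℝ) (hε : 0 < ε) :
    ∃ δ : ℝ, 0 < δ ∧
      ∀ (n u φ : ℝ → ℝ → ℝ) (y : ℝ → ℝ),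
        IsEPwSolution w n u φ →
        ContDiff ℝ 1 y →
        L2CompactWith n u y →
        ConservesEnergy w n u φ →
        (⨆ t : ℝ, eLpNorm (u t) 2 volume) < ⊤ →
        (⨆ t : ℝ, (eLpNorm (n t) 2 volume + eLpNorm (n t) ⊤ volume)) < ENNReal.ofReal δ →
        (∃ c : ℝ, c < k / Real.sqrt (1 + k) - ε ∧ ∀ t : ℝ, |deriv y t| ≤ c) →
        ∀ t x : ℝ, n t x = 0 ∧ u t x = 0 ∧ φ t x = 0 := by
  have hk0 : 0 < k := by rw [hk]; exact hp.deriv_pos 1 one_pos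
  have hs0 : 0 < Real.sqrt (1 + k) := Real.sqrt_pos.2 (by linarith)
  set γ := min 1 (ε / (k / Real.sqrt (1 + k))) with hγ
  have hγ0 : 0 < γ := lt_min one_pos (by positivity)
  set m := 1 / 2 * (k / (1 + k)) with hm
  have hm0 : 0 < m := by positivity
  set C := 100 + 6 * k + 20 * k ^ 2 with hC
  have hC0 : 0 < C := by positivity
  obtain ⟨θ, hθ0, hθ1, hθk, hθ2⟩ : ∃ θ : ℝ, 0 < θ ∧ θ ≤ 1 / 4 ∧ θ ≤ k / 4 ∧ C * θ ≤ γ * m / 4 := by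
    refine ⟨min (1 / 4) (min (k / 4) (γ * m / 4 / C)), by positivity, min_le_left _ _,
      (min_le_right _ _).trans (min_le_left _ _), ?_⟩
    have : min (1 / 4) (min (k / 4) (γ * m / 4 / C)) ≤ γ * m / 4 / C :=
      (min_le_right _ _).trans (min_le_right _ _)
    rw [le_div_iff₀ hC0] at this
    linarith
  obtain ⟨δ0, hδ0, hδ0', hsm⟩ := w_small hw hk hθ0
  obtain ⟨δ, hδ, hδa, hδb⟩ : ∃ δ : ℝ, 0 < δ ∧ δ ≤ δ0 ∧ δ ≤ θ / 4 :=
    ⟨min δ0 (θ / 4), by positivity, min_le_left _ _, min_le_right _ _⟩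
  refine ⟨δ, hδ, ?_⟩
  intro n u φ y S hy hcomp hcons hu2 hn2 ⟨c, hc, hyc⟩
  have cn := sl_cont S.reg_n
  have cu := sl_cont S.reg_u
  obtain ⟨h1, h2⟩ := sol_phi S
  have hnS : ∀ t, eLpNorm (n t) 2 volume + eLpNorm (n t) ⊤ volume ≤ ENNReal.ofReal δ := fun t =>
    (le_iSup (fun t => eLpNorm (n t) 2 volume + eLpNorm (n t) ⊤ volume) t).trans hn2.le
  have hnL2 := fun t => L2_fact (cn t) ENNReal.ofReal_ne_top (le_self_add.trans (hnS t))
  have hnδ : ∀ t x, |n t x| ≤ δ := fun t x =>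
    Linf_fact (cn t) hδ.le (le_add_self.trans (hnS t)) x
  have huL2 := fun t => L2_fact (cu t) hu2.ne (le_iSup (fun t => eLpNorm (u t) 2 volume) t)
  have hsmn := fun t x => hsm (n t x) ((hnδ t x).trans hδa)
  have hφ : ∀ t x, |φ t x| ≤ θ := fun t x => by
    have := sol_phi_small hw S (G := (k + θ) * δ) hδ (hδa.trans hδ0') hnδ (fun t x => by
      have a := (hsmn t x).1
      have b := hnδ t x
      have e : w (n t x) = (w (n t x) - k * n t x) + k * n t x := by ring
      rw [e]
      refine (abs_add_le _ _).trans ?_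
      rw [abs_mul k, abs_of_pos hk0]
      have : (k + θ) * |n t x| ≤ (k + θ) * δ := mul_le_mul_of_nonneg_left b (by positivity)
      linarith) (fun t => (huL2 t).1) (fun t => (huL2 t).2) t x
    linarith
  have hi : ∀ t, Integrable fun x => n t x ^ 2 + u t x ^ 2 := fun t =>
    (hnL2 t).1.add (huL2 t).1
  have hD : ∀ t, ∫ x, (n t x ^ 2 + u t x ^ 2)
      ≤ (ENNReal.ofReal δ).toReal ^ 2 + (⨆ t : ℝ, eLpNorm (u t) 2 volume).toReal ^ 2 := fun t => by
    rw [MeasureTheory.integral_add (hnL2 t).1 (huL2 t).1]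
    exact add_le_add (hnL2 t).2 (huL2 t).2
  have hEn := fun t => energy_bounds (w := w) (φ := φ t) (φ1 := deriv (φ t)) hk0 (cn t) (cu t)
    (aux_cont_of_deriv fun x =>
      (W_deriv hw (by linarith [S.dens_pos t x])).comp x (D_x S.reg_n t x))
    (fun x => (hnδ t x).trans (by linarith)) (fun x => (hφ t x).trans hθ1)
    (fun x => (hsmn t x).2.1.trans (mul_le_mul_of_nonneg_right hθk (sq_nonneg _)))
    (h1 t) (h2 t) (hi t)
  have hS0 : ∀ t, ∫ x, (n t x ^ 2 + u t x ^ 2) ≤ 0 := by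
    by_contra hcon
    push Not at hcon
    obtain ⟨t0, ht0⟩ := hcon
    set T0 := ∫ x, (n t0 x ^ 2 + u t0 x ^ 2) with hT0
    have hmin : 0 < min (1 / 4) (k / 4) := by positivity
    refine core hw (θ := θ) (e0 := min (1 / 4) (k / 4) * T0 / (11 + k)) hk0 hε S hy hcomp
      (fun t => (hyc t).trans hc.le) hθ0 hθ1 hθ2
      (fun t x => (hnδ t x).trans (by linarith)) hφ (fun t x => (hsmn t x).1)
      (fun t x => (hsmn t x).2.2) hi hD (by positivity) ?_
    intro t
    rw [div_le_iff₀ (by positivity)]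
    have a := (hEn t0).1
    have b := (hEn t).2
    rw [hcons t0 t] at a
    linarith
  intro t x
  have hz : ∀ x, n t x ^ 2 + u t x ^ 2 = 0 := int_zero
    (f := fun x => n t x ^ 2 + u t x ^ 2) (by have := cn t; have := cu t; fun_prop)
    (fun x => by positivity) (hi t) (hS0 t)
  have hn0 : ∀ x, n t x = 0 := fun x => by
    have := hz x
    have := sq_nonneg (u t x)
    have := sq_nonneg (n t x)
    exact pow_eq_zero_iff two_ne_zero |>.1 (by linarith)
  have hu0 : u t x = 0 := by
    have := hz x
    have := sq_nonneg (n t x)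
    have := sq_nonneg (u t x)
    exact pow_eq_zero_iff two_ne_zero |>.1 (by linarith)
  refine ⟨hn0 x, hu0, ?_⟩
  have hel := aux_ell (ζ := fun _ => 1) (ζ1 := fun _ => 0) (h1 t) (h2 t) (cn t)
    (fun x => (hφ t x).trans hθ1) (fun x => hasDerivAt_const x 1) continuous_const
    (fun _ => zero_le_one) (fun _ => le_rfl) (fun _ => by norm_num) (by simpa using (hnL2 t).1)
  have cφ := aux_cont_of_deriv (h1 t)
  have cφ1 := aux_cont_of_deriv (h2 t)
  have hr : (5 : ℝ) * ∫ x, 1 * n t x ^ 2 = 0 := by simp [hn0]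
  have := int_zero (f := fun x => 1 * (φ t x ^ 2 + deriv (φ t) x ^ 2)) (by fun_prop)
    (fun x => by positivity) hel.1 (hel.2.trans hr.le) x
  have h3 := sq_nonneg (deriv (φ t) x)
  have h4 := sq_nonneg (φ t x)
  exact pow_eq_zero_iff two_ne_zero |>.1 (by simp only [one_mul] at this; linarith)

end

theorem test
    (p w : ℝ → ℝ) (hp : IsPressure p) (hw : IsWFor p w)
    (k : ℝ) (hk : k = deriv p 1)
    (ε : ℝ) (hε : 0 < ε) :
    ∃ δ : ℝ, 0 < δ ∧
      ∀ (n u φ : ℝ → ℝ → ℝ) (y : ℝ → ℝ),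
        IsEPwSolution w n u φ →
        ContDiff ℝ 1 y →
        L2CompactWith n u y →
        ConservesEnergy w n u φ →
        (⨆ t : ℝ, eLpNorm (u t) 2 volume) < ⊤ →
        (⨆ t : ℝ, (eLpNorm (n t) 2 volume + eLpNorm (n t) ⊤ volume)) < ENNReal.ofReal δ →
        (∃ c : ℝ, c < k / Real.sqrt (1 + k) - ε ∧ ∀ t : ℝ, |deriv y t| ≤ c) →
        ∀ t x : ℝ, n t x = 0 ∧ u t x = 0 ∧ φ t x = 0 := by
  exact test_main p w hp hw k hk ε hε
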